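/- arXiv:math/0304049 — 11 statements merged into one kernel-verified Lean document; each statement's English description precedes it below -/
import Mathlib

section
/- Let X₁ and X₂ be Polish spaces with their Borel σ-algebras, let ν₁ and ν₂ be probability measures on X₁ and X₂ respectively, and let μ be a probability measure on X₁ × X₂ with first marginal μ₁ and second marginal μ₂. Then 𝓗(μ, ν₁ ⊗ ν₂) ≥ 𝓗(μ₁ ⊗ μ₂, ν₁ ⊗ ν₂) = 𝓗(μ₁, ν₁) + 𝓗(μ₂, ν₂). If moreover 𝓗(μ₁, ν₁) < ∞ and 𝓗(μ₂, ν₂) < ∞, then 𝓗(μ, ν₁ ⊗ ν₂) = 𝓗(μ₁, ν₁) + 𝓗(μ₂, ν₂) holds if and only if μ = μ₁ ⊗ μ₂. -/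
/-!
Everything reduces to the Pythagorean identity
`KL(μ, ν₁ ⊗ ν₂) = KL(μ₁, ν₁) + KL(μ₂, ν₂) + KL(μ, μ₁ ⊗ μ₂)`, valid in `[0, ∞]` without any absolute
continuity or integrability assumption (`klDiv_prod_eq_add`). It comes from two applications of
the chain rule for the Kullback–Leibler divergence: disintegrating `μ` along the first coordinate
gives `KL(μ, ν₁ ⊗ ν₂) = KL(μ₁, ν₁) + KL(μ, μ₁ ⊗ ν₂)`, and disintegrating it along the second
coordinate gives `KL(μ, μ₁ ⊗ ν₂) = KL(μ₂, ν₂) + KL(μ, μ₁ ⊗ μ₂)`. For `μ = μ₁ ⊗ μ₂` the last term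
vanishes, which is additivity; the inequality is nonnegativity of that term, and the equality case
is `KL(μ, μ₁ ⊗ μ₂) = 0 ↔ μ = μ₁ ⊗ μ₂`.
-/

open MeasureTheory

noncomputable section

open Classical in
/-- Relative entropy `𝓗(μ, ν) = ∫ log (dμ/dν) dμ` if `μ ≪ ν` (and `+∞` if the
integral diverges), and `𝓗(μ, ν) = ∞` otherwise. -/
def relEnt {X : Type*} [MeasurableSpace X] (μ ν : Measure X) : EReal :=
  if μ ≪ ν ∧ Integrable (fun x => Real.log (μ.rnDeriv ν x).toReal) μ
  then ((∫ x, Real.log (μ.rnDeriv ν x).toReal ∂μ : ℝ) : EReal)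
  else ⊤

open InformationTheory ProbabilityTheory in
/-- Between probability measures, `relEnt` is Mathlib's `klDiv`: the mass correction
`ν univ - μ univ` in `klDiv` vanishes, and the truncation to `[0, ∞]` is harmless by Gibbs'
inequality. -/
lemma relEnt_eq_klDiv {X : Type*} [MeasurableSpace X] (μ ν : Measure X)
    [IsProbabilityMeasure μ] [IsProbabilityMeasure ν] :
    relEnt μ ν = (klDiv μ ν : EReal) := by
  unfold relEnt
  split_ifs with h
  · have hne : klDiv μ ν ≠ ⊤ := klDiv_ne_top h.1 h.2
    rw [← EReal.coe_toReal (x := (klDiv μ ν : EReal)) (by simpa using hne) (by simp),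
      EReal.toReal_coe_ennreal, toReal_klDiv_of_measure_eq h.1 (by simp)]
    rfl
  · have htop : klDiv μ ν = ⊤ := klDiv_eq_top_iff.2 fun h1 h2 => h ⟨h1, h2⟩
    simp [htop]

open InformationTheory in
/-- Data processing in both directions, `Prod.swap` being an involution. -/
lemma klDiv_map_swap {X Y : Type*} [MeasurableSpace X] [MeasurableSpace Y]
    (μ ν : Measure (X × Y)) [IsFiniteMeasure μ] [IsFiniteMeasure ν] :
    klDiv (μ.map Prod.swap) (ν.map Prod.swap) = klDiv μ ν := by
  refine le_antisymm (klDiv_map_le _ _ measurable_swap) ?_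
  have h := klDiv_map_le (μ.map Prod.swap) (ν.map Prod.swap)
    (g := Prod.swap) measurable_swap
  simpa [Measure.map_map measurable_swap measurable_swap] using h

open InformationTheory ProbabilityTheory in
/-- Chain rule against a product measure: disintegrating `μ` along the first coordinate. -/
lemma klDiv_prod_eq_add_fst {X Y : Type*} [MeasurableSpace X] [MeasurableSpace Y]
    [StandardBorelSpace Y] [Nonempty Y] (μ : Measure (X × Y)) [IsProbabilityMeasure μ]
    (ν₁ : Measure X) (ν₂ : Measure Y) [IsProbabilityMeasure ν₁] [IsProbabilityMeasure ν₂] :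
    klDiv μ (ν₁.prod ν₂) = klDiv μ.fst ν₁ + klDiv μ (μ.fst.prod ν₂) := by
  have h := klDiv_compProd_eq_add μ.fst ν₁ μ.condKernel (Kernel.const X ν₂)
  simpa only [Measure.disintegrate, Measure.compProd_const] using h

open InformationTheory in
/-- Pythagorean identity for the Kullback–Leibler divergence from a product measure. -/
lemma klDiv_prod_eq_add {X Y : Type*} [MeasurableSpace X] [MeasurableSpace Y]
    [StandardBorelSpace X] [Nonempty X] [StandardBorelSpace Y] [Nonempty Y]
    (μ : Measure (X × Y)) [IsProbabilityMeasure μ]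
    (ν₁ : Measure X) (ν₂ : Measure Y) [IsProbabilityMeasure ν₁] [IsProbabilityMeasure ν₂] :
    klDiv μ (ν₁.prod ν₂) =
      klDiv μ.fst ν₁ + klDiv μ.snd ν₂ + klDiv μ (μ.fst.prod μ.snd) := by
  have : IsProbabilityMeasure (μ.map Prod.swap) :=
    Measure.isProbabilityMeasure_map measurable_swap.aemeasurable
  have h := klDiv_prod_eq_add_fst (μ.map Prod.swap) ν₂ μ.fst
  rw [Measure.fst_map_swap, ← Measure.prod_swap (μ := μ.fst) (ν := ν₂),
    ← Measure.prod_swap (μ := μ.fst) (ν := μ.snd), klDiv_map_swap, klDiv_map_swap] at h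
  rw [klDiv_prod_eq_add_fst, h, add_assoc]

/-- Let `X₁, X₂` be Polish spaces with Borel σ-algebras, `ν₁, ν₂` probability
measures on them, and `μ` a probability measure on `X₁ × X₂` with marginals `μ₁, μ₂`.  Then
`𝓗(μ, ν₁ ⊗ ν₂) ≥ 𝓗(μ₁ ⊗ μ₂, ν₁ ⊗ ν₂) = 𝓗(μ₁, ν₁) + 𝓗(μ₂, ν₂)`, and if both
`𝓗(μ₁, ν₁)` and `𝓗(μ₂, ν₂)` are finite, equality holds iff `μ = μ₁ ⊗ μ₂`. -/
theorem relEnt_prod_marginals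
    {X₁ X₂ : Type*}
    [MeasurableSpace X₁] [TopologicalSpace X₁] [PolishSpace X₁] [BorelSpace X₁]
    [MeasurableSpace X₂] [TopologicalSpace X₂] [PolishSpace X₂] [BorelSpace X₂]
    (ν₁ : Measure X₁) (ν₂ : Measure X₂) [IsProbabilityMeasure ν₁] [IsProbabilityMeasure ν₂]
    (μ : Measure (X₁ × X₂)) [IsProbabilityMeasure μ]
    (μ₁ : Measure X₁) (μ₂ : Measure X₂) [IsProbabilityMeasure μ₁] [IsProbabilityMeasure μ₂]
    (hμ₁ : μ.map Prod.fst = μ₁) (hμ₂ : μ.map Prod.snd = μ₂) :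
    relEnt (μ₁.prod μ₂) (ν₁.prod ν₂) ≤ relEnt μ (ν₁.prod ν₂) ∧
    relEnt (μ₁.prod μ₂) (ν₁.prod ν₂) = relEnt μ₁ ν₁ + relEnt μ₂ ν₂ ∧
    (relEnt μ₁ ν₁ < ⊤ → relEnt μ₂ ν₂ < ⊤ →
      (relEnt μ (ν₁.prod ν₂) = relEnt μ₁ ν₁ + relEnt μ₂ ν₂ ↔ μ = μ₁.prod μ₂)) := by
  have : Nonempty X₁ := nonempty_of_isProbabilityMeasure ν₁
  have : Nonempty X₂ := nonempty_of_isProbabilityMeasure ν₂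
  have hfst : μ.fst = μ₁ := hμ₁
  have hsnd : μ.snd = μ₂ := hμ₂
  have hμ := klDiv_prod_eq_add μ ν₁ ν₂
  have hprod := klDiv_prod_eq_add (μ₁.prod μ₂) ν₁ ν₂
  rw [hfst, hsnd] at hμ
  rw [Measure.fst_prod, Measure.snd_prod, InformationTheory.klDiv_self, add_zero] at hprod
  simp only [relEnt_eq_klDiv, ← EReal.coe_ennreal_add, EReal.coe_ennreal_le_coe_ennreal_iff,
    EReal.coe_ennreal_eq_coe_ennreal_iff]
  refine ⟨?_, hprod, fun h₁ h₂ => ?_⟩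
  · rw [hμ, hprod]
    exact le_self_add
  · have hne : InformationTheory.klDiv μ₁ ν₁ + InformationTheory.klDiv μ₂ ν₂ ≠ ⊤ :=
      ENNReal.add_ne_top.2 ⟨by simpa using h₁.ne, by simpa using h₂.ne⟩
    rw [hμ, ← InformationTheory.klDiv_eq_zero_iff (μ := μ) (ν := μ₁.prod μ₂)]
    -- Finiteness of the marginal entropies allows cancelling them from both sides.
    exact ⟨fun h => (ENNReal.add_right_inj hne).1 (by rw [h, add_zero]),
      fun h => by rw [h, add_zero]⟩
end
end

section
/- Let m ≥ 1, let λ be Lebesgue measure on X = ℝ^m, and let V : X → ℝ ∪ {∞} be measurable with Z = ∫_X e^{−V(η)} dλ(η) finite. Then for every c > 0 and every D ∈ ℝ there exists a compact set S ⊆ X such that every probability measure μ on X with μ(S) ≤ 1 − c satisfies 𝓗(μ, e^{−V}·λ) ≥ D. -/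
/-!
The bound is a weak form of the Donsker–Varadhan inequality. Write `ν = e^{-V} λ`,
`f = dμ/dν`, and let `S` be a compact set. Since `log y ≥ 1 - 1/y`, every real `t` satisfies
`log f ≥ 1 + t - e^t / f` wherever `f > 0`, hence `μ`-a.e.
Taking `t = T ≥ 0` off `S` and `t = 0` on `S`, and using
`∫_A 1/f dμ ≤ ν A` (as `1/f = dν/dμ` holds `μ`-a.e.), one gets
`∫ log f dμ ≥ 1 + T μ(Sᶜ) - ν(X) - e^T ν(Sᶜ)`; this is `le_integral_log_rnDeriv`.
If `μ(S) ≤ 1 - c`, the second term is at least `T c`: choose `T` large first, and then, by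
inner regularity of the finite measure `ν`, a compact `S` with `ν(Sᶜ) ≤ e^{-T}`.
-/

open MeasureTheory
open scoped ENNReal

noncomputable section

/-- `e^{-t}` for `t ∈ ℝ ∪ {±∞}` (with `e^{-∞} = 0`, `e^{+∞}` read off `-(-∞)`). -/
def expNegE (t : EReal) : ℝ≥0∞ :=
  if t = ⊤ then 0 else if t = ⊥ then ⊤ else ENNReal.ofReal (Real.exp (-t.toReal))

/-- The test-function lower bound on relative entropy, for the test function equal to `T` on `A`
and to `0` off `A`. -/
lemma le_integral_log_rnDeriv {X : Type*} [MeasurableSpace X] (μ ν : Measure X)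
    [IsProbabilityMeasure μ] [IsFiniteMeasure ν] (hac : μ ≪ ν)
    (hint : Integrable (fun x => Real.log (μ.rnDeriv ν x).toReal) μ)
    {A : Set X} (hA : MeasurableSet A) (T : ℝ) :
    1 + T * μ.real A - ν.real Set.univ - Real.exp T * ν.real A
      ≤ ∫ x, Real.log (μ.rnDeriv ν x).toReal ∂μ := by
  have hr : Integrable (fun x => (ν.rnDeriv μ x).toReal) μ := Measure.integrable_toReal_rnDeriv
  have hrA : Integrable (A.indicator fun x => (ν.rnDeriv μ x).toReal) μ := hr.indicator hA
  have hTA : Integrable (A.indicator fun _ => T) μ := (integrable_const T).indicator hA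
  have hf1 : Integrable (fun x => 1 + A.indicator (fun _ => T) x) μ := (integrable_const 1).add hTA
  have hf2 : Integrable (fun x => 1 + A.indicator (fun _ => T) x - (ν.rnDeriv μ x).toReal) μ :=
    hf1.sub hr
  have hg : Integrable (fun x => 1 + A.indicator (fun _ => T) x - (ν.rnDeriv μ x).toReal
      - Real.exp T * A.indicator (fun x => (ν.rnDeriv μ x).toReal) x) μ :=
    hf2.sub (hrA.const_mul _)
  have hle : ∫ x, (1 + A.indicator (fun _ => T) x - (ν.rnDeriv μ x).toReal
      - Real.exp T * A.indicator (fun x => (ν.rnDeriv μ x).toReal) x) ∂μ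
      ≤ ∫ x, Real.log (μ.rnDeriv ν x).toReal ∂μ := by
    refine integral_mono_ae hg hint ?_
    filter_upwards [Measure.inv_rnDeriv hac, Measure.rnDeriv_pos hac,
      hac.ae_le (Measure.rnDeriv_lt_top μ ν)] with x hinv hpos htop
    have hy : 0 < (μ.rnDeriv ν x).toReal := ENNReal.toReal_pos hpos.ne' htop.ne
    have hi : (ν.rnDeriv μ x).toReal = ((μ.rnDeriv ν x).toReal)⁻¹ := by
      rw [← hinv, Pi.inv_apply, ENNReal.toReal_inv]
    -- `log y = t + log (y e^{-t}) ≥ t + 1 - e^t / y`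
    have key : ∀ t : ℝ, 1 + t - Real.exp t * ((μ.rnDeriv ν x).toReal)⁻¹
        ≤ Real.log (μ.rnDeriv ν x).toReal := by
      intro t
      have h := Real.one_sub_inv_le_log_of_pos (mul_pos hy (Real.exp_pos (-t)))
      rw [Real.log_mul hy.ne' (Real.exp_pos _).ne', Real.log_exp, mul_inv, Real.exp_neg,
        inv_inv] at h
      linarith
    have hyi := inv_pos.mpr hy
    by_cases hx : x ∈ A
    · simp only [Set.indicator_of_mem hx, hi]
      linarith [key T]
    · simp only [Set.indicator_of_notMem hx, hi]
      have := key 0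
      rw [Real.exp_zero] at this
      linarith
  have h1 : ∫ x, (ν.rnDeriv μ x).toReal ∂μ ≤ ν.real Set.univ := by
    rw [← setIntegral_univ]
    exact Measure.setIntegral_toReal_rnDeriv_le (measure_ne_top _ _)
  have h2 : ∫ x in A, (ν.rnDeriv μ x).toReal ∂μ ≤ ν.real A :=
    Measure.setIntegral_toReal_rnDeriv_le (measure_ne_top _ _)
  rw [integral_sub hf2 (hrA.const_mul _),
    integral_sub hf1 hr, integral_add (integrable_const 1) hTA,
    integral_const_mul, integral_indicator hA, integral_indicator hA] at hle
  simp only [integral_const, measureReal_restrict_apply_univ, probReal_univ, smul_eq_mul, mul_one] at hle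
  have := mul_le_mul_of_nonneg_left h2 (Real.exp_pos T).le
  linarith [mul_comm T (μ.real A)]

/-- Let `λ` be Lebesgue measure on `X = ℝ^m` and `V : X → ℝ ∪ {∞}`
measurable with `Z = ∫ e^{-V} dλ < ∞`.  For every `c > 0` and every `D ∈ ℝ` there is a
compact `S ⊆ X` such that every probability measure `μ` with `μ S ≤ 1 - c` has
`𝓗(μ, e^{-V} λ) ≥ D`. -/
theorem relEnt_ge_of_small_mass_on_compact (m : ℕ) (hm : 1 ≤ m)
    (V : (Fin m → ℝ) → EReal) (hV : Measurable V)
    (hZ : (∫⁻ η, expNegE (V η)) ≠ ⊤) :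
    ∀ c : ℝ, 0 < c → ∀ D : ℝ, ∃ S : Set (Fin m → ℝ), IsCompact S ∧
      ∀ μ : Measure (Fin m → ℝ), IsProbabilityMeasure μ → (μ S).toReal ≤ 1 - c →
        (D : EReal) ≤ relEnt μ (volume.withDensity fun η => expNegE (V η)) := by
  intro c hc D
  set ν : Measure (Fin m → ℝ) := volume.withDensity fun η => expNegE (V η) with hν
  have : IsFiniteMeasure ν := isFiniteMeasure_withDensity hZ
  -- `T` is chosen so that `T c - ν(X) ≥ D`
  set T : ℝ := max 0 ((D + ν.real Set.univ) / c) with hT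
  have hT0 : 0 ≤ T := le_max_left _ _
  have hTc : D + ν.real Set.univ ≤ T * c := (div_le_iff₀ hc).mp (le_max_right _ _)
  obtain ⟨S, -, hS, hSν⟩ := MeasurableSet.univ.exists_isCompact_sdiff_lt (μ := ν)
    (measure_ne_top _ _) (ENNReal.ofReal_pos.mpr (Real.exp_pos (-T))).ne'
  rw [← Set.compl_eq_univ_sdiff] at hSν
  refine ⟨S, hS, fun μ hμ hμS => ?_⟩
  unfold relEnt
  split_ifs with h
  · refine EReal.coe_le_coe_iff.mpr ?_
    have hb := le_integral_log_rnDeriv μ ν h.1 h.2 hS.measurableSet.compl T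
    have hνS : ν.real Sᶜ ≤ Real.exp (-T) :=
      ENNReal.toReal_le_of_le_ofReal (Real.exp_pos _).le hSν.le
    have hexp : Real.exp T * ν.real Sᶜ ≤ 1 := by
      calc Real.exp T * ν.real Sᶜ ≤ Real.exp T * Real.exp (-T) := by gcongr
        _ = 1 := by rw [← Real.exp_add, add_neg_cancel, Real.exp_zero]
    have hμc : c ≤ μ.real Sᶜ := by
      rw [probReal_compl_eq_one_sub hS.measurableSet]
      change μ.real S ≤ 1 - c at hμS
      linarith
    have := mul_le_mul_of_nonneg_left hμc hT0
    linarith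
  · exact le_top
end
end

section
/- Let μ₁ be the uniform distribution (Lebesgue measure) on [0,1] and let μ₂ be the measure on [0,1] with density g(η) = 2 − 4|η − 1/2| with respect to Lebesgue measure. Then for every C₁ > 2 there exists C₂ ∈ ℝ such that 𝓗(ν, μ₂) ≤ C₁·𝓗(ν, μ₁) + C₂ for every probability measure ν on [0,1]. In particular, if 𝓗(ν, μ₁) is finite then 𝓗(ν, μ₂) is finite. -/
/-!
Write `f = dν/dμ₁` and `g` for the wedge density. Since `μ₂ = g μ₁`, the chain rule for
densities gives `𝓗(ν, μ₂) = 𝓗(ν, μ₁) + ∫ f · (-log g) dμ₁`. With `a = C₁ - 1 > 1`, Young's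
inequality `u v ≤ v log v - v + exp u` at `u = -log g / a`, `v = f` bounds the last integrand by
`a (f log f - f + g ^ (-1/a))`. Since `g` vanishes only linearly at the endpoints and `1/a < 1`,
the function `g ^ (-1/a)` is integrable: it is at most `x ^ (-1/a) + (1 - x) ^ (-1/a)`.
Integrating, one may take `C₂ = a ∫ (x ^ (-1/a) + (1 - x) ^ (-1/a) - 1) dx`.
-/

open MeasureTheory

noncomputable section

/-- The uniform distribution (Lebesgue measure) on `[0,1]`. -/
def unifMeasure : Measure ℝ := volume.restrict (Set.Icc 0 1)

/-- The measure on `[0,1]` with wedge density `g η = 2 - 4 |η - 1/2|`. -/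
def wedgeMeasure : Measure ℝ :=
  (volume.restrict (Set.Icc 0 1)).withDensity fun η => ENNReal.ofReal (2 - 4 * |η - 1 / 2|)

/-- Young's inequality for the conjugate pair `v log v - v` and `exp u`. -/
lemma mul_le_mul_log_sub_add_exp (u v : ℝ) (hv : 0 ≤ v) :
    u * v ≤ v * Real.log v - v + Real.exp u := by
  rcases hv.eq_or_lt with rfl | hv
  · simpa using (Real.exp_pos u).le
  · have h := Real.add_one_le_exp (u - Real.log v)
    rw [Real.exp_sub, Real.exp_log hv, le_div_iff₀ hv] at h
    nlinarith

/-- The singular majorant of `g ^ (-p)`, where `g` is the wedge density. -/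
def wedgeMajorant (p x : ℝ) : ℝ := x ^ (-p) + (1 - x) ^ (-p)

lemma integrable_wedgeMajorant {p : ℝ} (hp : p < 1) :
    Integrable (wedgeMajorant p) unifMeasure := by
  have h1 : IntervalIntegrable (fun x : ℝ => x ^ (-p)) volume 0 1 :=
    intervalIntegral.intervalIntegrable_rpow' (by linarith)
  have h2 : IntervalIntegrable (fun x : ℝ => (1 - x) ^ (-p)) volume 0 1 := by
    simpa using (h1.comp_sub_left 1).symm
  have h := h1.add h2
  rw [intervalIntegrable_iff_integrableOn_Icc_of_le zero_le_one] at h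
  exact h

lemma wedge_pos {x : ℝ} (h0 : 0 < x) (h1 : x < 1) : 0 < 2 - 4 * |x - 1 / 2| := by
  have : |x - 1 / 2| < 1 / 2 := abs_lt.2 ⟨by linarith, by linarith⟩
  linarith

lemma exp_neg_log_wedge_le {p x : ℝ} (hp : 0 < p) (h0 : 0 < x) (h1 : x < 1) :
    Real.exp (-Real.log (2 - 4 * |x - 1 / 2|) * p) ≤ wedgeMajorant p x := by
  have hg := wedge_pos h0 h1
  have e : Real.exp (-Real.log (2 - 4 * |x - 1 / 2|) * p) = (2 - 4 * |x - 1 / 2|) ^ (-p) := by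
    rw [Real.rpow_def_of_pos hg]; congr 1; ring
  rw [e, wedgeMajorant]
  have hx := Real.rpow_nonneg h0.le (-p)
  have hx' := Real.rpow_nonneg (sub_pos.2 h1).le (-p)
  rcases abs_cases (x - 1 / 2) with ⟨h, _⟩ | ⟨h, _⟩
  · have : (2 - 4 * |x - 1 / 2|) ^ (-p) ≤ (1 - x) ^ (-p) :=
      Real.rpow_le_rpow_of_nonpos (by linarith) (by linarith) (by linarith)
    linarith
  · have : (2 - 4 * |x - 1 / 2|) ^ (-p) ≤ x ^ (-p) :=
      Real.rpow_le_rpow_of_nonpos h0 (by linarith) (by linarith)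
    linarith

lemma ae_unifMeasure_mem_Ioo : ∀ᵐ x ∂unifMeasure, x ∈ Set.Ioo (0 : ℝ) 1 := by
  have : unifMeasure = volume.restrict (Set.Ioo (0 : ℝ) 1) :=
    (restrict_Ioo_eq_restrict_Icc).symm
  rw [this]
  exact ae_restrict_mem measurableSet_Ioo

/-- The quantitative core: if `𝓗(ν, μ₁)` is given by a convergent integral, so is `𝓗(ν, μ₂)`,
and the two integrals satisfy the asserted inequality. -/
lemma wedge_entropy_bound {a : ℝ} (ha : 1 < a) (ν : Measure ℝ) [IsProbabilityMeasure ν]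
    (hac : ν ≪ unifMeasure)
    (hint : Integrable (fun x => Real.log (ν.rnDeriv unifMeasure x).toReal) ν) :
    ν ≪ wedgeMeasure ∧ Integrable (fun x => Real.log (ν.rnDeriv wedgeMeasure x).toReal) ν ∧
    ∫ x, Real.log (ν.rnDeriv wedgeMeasure x).toReal ∂ν ≤
      (a + 1) * ∫ x, Real.log (ν.rnDeriv unifMeasure x).toReal ∂ν +
        a * (∫ x, wedgeMajorant a⁻¹ x ∂unifMeasure - 1) := by
  have a0 : 0 < a := by linarith
  have hfin : IsFiniteMeasure unifMeasure := by unfold unifMeasure; infer_instance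
  have hw : wedgeMeasure =
    unifMeasure.withDensity fun η => ENNReal.ofReal (2 - 4 * |η - 1 / 2|) := rfl
  have hgm : Measurable fun η : ℝ => 2 - 4 * |η - 1 / 2| := by fun_prop
  have hgne : ∀ᵐ x ∂unifMeasure, ENNReal.ofReal (2 - 4 * |x - 1 / 2|) ≠ 0 := by
    filter_upwards [ae_unifMeasure_mem_Ioo] with x hx
    simpa using wedge_pos hx.1 hx.2
  set f : ℝ → ℝ := fun x => (ν.rnDeriv unifMeasure x).toReal with hf
  have hfi : Integrable f unifMeasure := Measure.integrable_toReal_rnDeriv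
  have hf1 : ∫ x, f x ∂unifMeasure = 1 := by
    rw [hf, Measure.integral_toReal_rnDeriv hac]; simp
  have hflog : Integrable (fun x => f x * Real.log (f x)) unifMeasure :=
    (integrable_rnDeriv_smul_iff hac).2 hint
  have hflog_eq : ∫ x, f x * Real.log (f x) ∂unifMeasure = ∫ x, Real.log (f x) ∂ν :=
    integral_rnDeriv_smul hac
  have hmaj := integrable_wedgeMajorant (p := a⁻¹) (inv_lt_one_of_one_lt₀ ha)
  have hU : Integrable (fun x => a * (f x * Real.log (f x) - f x + wedgeMajorant a⁻¹ x))
      unifMeasure := ((hflog.sub hfi).add hmaj).const_mul a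
  have hle : ∀ᵐ x ∂unifMeasure, f x * -Real.log (2 - 4 * |x - 1 / 2|) ≤
      a * (f x * Real.log (f x) - f x + wedgeMajorant a⁻¹ x) := by
    filter_upwards [ae_unifMeasure_mem_Ioo] with x hx
    have h1 := mul_le_mul_log_sub_add_exp (-Real.log (2 - 4 * |x - 1 / 2|) * a⁻¹) (f x)
      ENNReal.toReal_nonneg
    have h2 := exp_neg_log_wedge_le (inv_pos.2 a0) hx.1 hx.2
    calc f x * -Real.log (2 - 4 * |x - 1 / 2|)
        = a * (-Real.log (2 - 4 * |x - 1 / 2|) * a⁻¹ * f x) := by field_simp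
      _ ≤ _ := mul_le_mul_of_nonneg_left (by linarith) a0.le
  -- `g ≤ 2` bounds `-log g` from below, so the upper bound already yields integrability.
  have hge : ∀ᵐ x ∂unifMeasure, f x * -Real.log 2 ≤
      f x * -Real.log (2 - 4 * |x - 1 / 2|) := by
    filter_upwards [ae_unifMeasure_mem_Ioo] with x hx
    refine mul_le_mul_of_nonneg_left (neg_le_neg ?_) ENNReal.toReal_nonneg
    exact Real.log_le_log (wedge_pos hx.1 hx.2) (by linarith [abs_nonneg (x - 1 / 2)])
  have hfg : Integrable (fun x => f x * -Real.log (2 - 4 * |x - 1 / 2|)) unifMeasure :=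
    integrable_of_le_of_le
      ((Measure.measurable_rnDeriv _ _).ennreal_toReal.mul
        (Real.measurable_log.comp hgm).neg).aestronglyMeasurable
      hge hle (hfi.mul_const _) hU
  have hgν : Integrable (fun x => -Real.log (2 - 4 * |x - 1 / 2|)) ν :=
    (integrable_rnDeriv_smul_iff hac).1 hfg
  have hfg_eq : ∫ x, f x * -Real.log (2 - 4 * |x - 1 / 2|) ∂unifMeasure =
      ∫ x, -Real.log (2 - 4 * |x - 1 / 2|) ∂ν := integral_rnDeriv_smul hac
  have hchain : (fun x => Real.log (ν.rnDeriv wedgeMeasure x).toReal) =ᵐ[ν]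
      fun x => Real.log (f x) + -Real.log (2 - 4 * |x - 1 / 2|) := by
    have h1 := Measure.rnDeriv_withDensity_right ν unifMeasure
      (hgm.ennreal_ofReal.aemeasurable) hgne (ae_of_all _ fun x => ENNReal.ofReal_ne_top)
    filter_upwards [hac.ae_le h1, hac.ae_le ae_unifMeasure_mem_Ioo, Measure.rnDeriv_pos hac,
      hac.ae_le (Measure.rnDeriv_ne_top ν unifMeasure)] with x h1 hx hpos hnt
    have hg := wedge_pos hx.1 hx.2
    have hfx : 0 < f x := ENNReal.toReal_pos hpos.ne' hnt
    rw [hw, h1, ENNReal.toReal_mul, ENNReal.toReal_inv, ENNReal.toReal_ofReal hg.le,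
      Real.log_mul (inv_pos.2 hg).ne' hfx.ne', Real.log_inv, add_comm]
  refine ⟨?_, (hint.add hgν).congr hchain.symm, ?_⟩
  · rw [hw]
    exact hac.trans (withDensity_absolutelyContinuous' hgm.ennreal_ofReal.aemeasurable hgne)
  · rw [integral_congr_ae hchain, integral_add hint hgν, ← hfg_eq]
    have h := integral_mono_ae hfg hU hle
    have e : ∫ x, (f x * Real.log (f x) - f x + wedgeMajorant a⁻¹ x) ∂unifMeasure =
        ∫ x, Real.log (f x) ∂ν - 1 + ∫ x, wedgeMajorant a⁻¹ x ∂unifMeasure := by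
      rw [← hflog_eq, ← hf1, ← integral_sub hflog hfi]
      exact integral_add (hflog.sub hfi) hmaj
    rw [integral_const_mul, e] at h
    change _ ≤ (a + 1) * ∫ x, Real.log (f x) ∂ν + _
    linarith

/-- For every `C₁ > 2` there is `C₂ ∈ ℝ` such that for every probability
measure `ν` on `[0,1]`: `𝓗(ν, μ₂) ≤ C₁ 𝓗(ν, μ₁) + C₂`; in particular `𝓗(ν, μ₁) < ∞`
implies `𝓗(ν, μ₂) < ∞`. -/
theorem relEnt_wedge_le_relEnt_unif (C₁ : ℝ) (hC₁ : 2 < C₁) :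
    ∃ C₂ : ℝ, ∀ ν : Measure ℝ, IsProbabilityMeasure ν → ν (Set.Icc 0 1) = 1 →
      relEnt ν wedgeMeasure ≤ (C₁ : EReal) * relEnt ν unifMeasure + (C₂ : EReal) ∧
      (relEnt ν unifMeasure < ⊤ → relEnt ν wedgeMeasure < ⊤) := by
  refine ⟨(C₁ - 1) * (∫ x, wedgeMajorant (C₁ - 1)⁻¹ x ∂unifMeasure - 1), fun ν hν _ => ?_⟩
  by_cases h : ν ≪ unifMeasure ∧
      Integrable (fun x => Real.log (ν.rnDeriv unifMeasure x).toReal) ν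
  · obtain ⟨h1, h2, h3⟩ := wedge_entropy_bound (a := C₁ - 1) (by linarith) ν h.1 h.2
    rw [sub_add_cancel] at h3
    rw [relEnt, relEnt, if_pos h, if_pos ⟨h1, h2⟩]
    exact ⟨by exact_mod_cast h3, fun _ => EReal.coe_lt_top _⟩
  · have ht : relEnt ν unifMeasure = ⊤ := if_neg h
    rw [ht, EReal.coe_mul_top_of_pos (by linarith), EReal.top_add_coe]
    exact ⟨le_top, fun h => absurd h (lt_irrefl _)⟩
end
end

section
/- Let V̄ be the wedge-normalization of V. Then: (1) V̄(η) ≥ V(η) − log 2 for all η ∈ ℝ; (2) if (a, b) (with a, b ∈ ℝ ∪ {−∞, ∞}) is the interval on which V is finite, then V̄(η) → ∞ as η → a from above and as η → b from below; (3) V̄ is convex, in the sense that V̄(tα + (1−t)β) ≤ t·V̄(α) + (1−t)·V̄(β) in [0, ∞] for all α, β ∈ ℝ and t ∈ [0,1]. -/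
/-!
With `F` the distribution function of the density proportional to `e^{-V}`, the wedge satisfies
`g t = 4 min (t, 1 - t)`, and evenness of `V` gives `1 - F η = F (-η)` (`Fcdf_neg`). Hence, where it
is finite,
`V̄ η = max (V η - log F η, V η - log F (-η)) - log 4`,
and convexity of `V̄` reduces to concavity of `log F` (`concaveOn_log_Fcdf`).

The derivative of `log F` is a constant multiple of `e^{-V η} / ∫_{-∞}^η e^{-V}`. That this ratio
is antitone means, for `x ≤ y`,
`e^{-V y} ∫_{-∞}^x e^{-V} ≤ e^{-V x} ∫_{-∞}^y e^{-V}`,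
and after translating the second integral to `(-∞, x]` this is the integral of the pointwise
inequality `V x + V (ζ + y - x) ≤ V ζ + V y` for `ζ ≤ x ≤ y`, which is convexity of `V`
(`ConvexPotential.four_point`). Finiteness of `Z` comes from the linear growth of `V`
(`ConvexPotential.exists_dens_le`).

The lower bound is `g ≤ 2`. It gives the limits at infinite endpoints, since `V → ∞` there. At a
finite endpoint `F` is continuous with value `0` or `1`, so `g ∘ F → 0`, while `V ≥ 0`.
-/

open MeasureTheory Filter Set
open scoped ENNReal NNReal

noncomputable section

/-- `e^{-t}` for `t ∈ [0, ∞]`. -/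
def negExp (t : ℝ≥0∞) : ℝ≥0∞ := if t = ⊤ then 0 else ENNReal.ofReal (Real.exp (-t.toReal))

/-- The normalizing constant `Z = ∫_ℝ e^{-V η} dη`. -/
def Znorm (V : ℝ → ℝ≥0∞) : ℝ := (∫⁻ η, negExp (V η)).toReal

/-- The cumulative distribution function `F η = Z⁻¹ ∫_{-∞}^η e^{-V ζ} dζ`. -/
def Fcdf (V : ℝ → ℝ≥0∞) (η : ℝ) : ℝ :=
  (Znorm V)⁻¹ * (∫⁻ ζ in Iic η, negExp (V ζ)).toReal

/-- The wedge density `g t = 2 - 4 |t - 1/2|`. -/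
def wedge (t : ℝ) : ℝ := 2 - 4 * |t - 1 / 2|

open Classical in
/-- The wedge-normalization `V̄ η = V η - log (g (F η))`, equal to `∞` wherever `V η = ∞`
or `g (F η) = 0`. -/
def wedgeNorm (V : ℝ → ℝ≥0∞) (η : ℝ) : EReal :=
  if V η = ⊤ ∨ wedge (Fcdf V η) ≤ 0 then (⊤ : EReal)
  else (((V η).toReal - Real.log (wedge (Fcdf V η)) : ℝ) : EReal)

open Classical in
/-- The filter of real numbers approaching `a ∈ ℝ ∪ {±∞}` from above. -/
def rightApproach (a : EReal) : Filter ℝ :=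
  if a = ⊥ then atBot else nhdsWithin a.toReal (Ioi a.toReal)

open Classical in
/-- The filter of real numbers approaching `b ∈ ℝ ∪ {±∞}` from below. -/
def leftApproach (b : EReal) : Filter ℝ :=
  if b = ⊤ then atTop else nhdsWithin b.toReal (Iio b.toReal)

/-! ### Extended-valued convex potentials -/

/-- Convexity of an extended-valued potential `V : ℝ → [0, ∞]`. -/
def ConvexPotential (V : ℝ → ℝ≥0∞) : Prop :=
  ∀ (a b : ℝ) (p q : ℝ≥0), p + q = 1 →
    V ((p : ℝ) * a + (q : ℝ) * b) ≤ (p : ℝ≥0∞) * V a + (q : ℝ≥0∞) * V b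

/-- The unnormalized density `e^{-V}` as a real-valued function. -/
def dens (V : ℝ → ℝ≥0∞) (η : ℝ) : ℝ := (negExp (V η)).toReal

lemma negExp_coe (t : ℝ≥0) : negExp t = ENNReal.ofReal (Real.exp (-t)) := by
  simp [negExp]

lemma negExp_top : negExp ⊤ = 0 := by simp [negExp]

lemma negExp_antitone : Antitone negExp := by
  intro s t hst
  induction t with
  | top => simp [negExp_top]
  | coe t =>
    lift s to ℝ≥0 using ne_top_of_le_ne_top ENNReal.coe_ne_top hst
    rw [negExp_coe, negExp_coe]
    apply ENNReal.ofReal_le_ofReal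
    have : (s : ℝ) ≤ t := by exact_mod_cast hst
    gcongr

lemma negExp_ne_top (t : ℝ≥0∞) : negExp t ≠ ⊤ := by
  unfold negExp; split_ifs <;> simp

lemma negExp_add (s t : ℝ≥0∞) : negExp (s + t) = negExp s * negExp t := by
  induction s with
  | top => simp [negExp_top]
  | coe s =>
    induction t with
    | top => simp [negExp_top]
    | coe t =>
      rw [← ENNReal.coe_add, negExp_coe, negExp_coe, negExp_coe,
        ← ENNReal.ofReal_mul (Real.exp_pos _).le, ← Real.exp_add]
      push_cast
      ring_nf

lemma dens_of_ne_top {V : ℝ → ℝ≥0∞} {η : ℝ} (h : V η ≠ ⊤) :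
    dens V η = Real.exp (-(V η).toReal) := by
  simp [dens, negExp, h, (Real.exp_pos _).le]

lemma ConvexPotential.combo {V : ℝ → ℝ≥0∞} (hV : ConvexPotential V) (a b : ℝ) {s t : ℝ}
    (hs : 0 ≤ s) (ht : 0 ≤ t) (hst : s + t = 1) :
    V (s * a + t * b) ≤ ENNReal.ofReal s * V a + ENNReal.ofReal t * V b := by
  have := hV a b ⟨s, hs⟩ ⟨t, ht⟩ (by ext; exact hst)
  rw [ENNReal.ofReal_eq_coe_nnreal hs, ENNReal.ofReal_eq_coe_nnreal ht]
  exact this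

lemma ConvexPotential.convex_le {V : ℝ → ℝ≥0∞} (hV : ConvexPotential V) (c : ℝ≥0∞) :
    Convex ℝ {η | V η ≤ c} := by
  intro x hx y hy s t hs ht hst
  calc V (s * x + t * y) ≤ ENNReal.ofReal s * V x + ENNReal.ofReal t * V y :=
        hV.combo x y hs ht hst
    _ ≤ ENNReal.ofReal s * c + ENNReal.ofReal t * c := by
        gcongr
        · exact hx
        · exact hy
    _ = c := by
        rw [← add_mul, ← ENNReal.ofReal_add hs ht, hst]; simp

lemma ConvexPotential.convex_finite {V : ℝ → ℝ≥0∞} (hV : ConvexPotential V) :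
    Convex ℝ {η | V η ≠ ⊤} := by
  intro x hx y hy s t hs ht hst
  refine ne_top_of_le_ne_top ?_ (hV.combo x y hs ht hst)
  exact ENNReal.add_ne_top.2 ⟨ENNReal.mul_ne_top ENNReal.ofReal_ne_top hx,
    ENNReal.mul_ne_top ENNReal.ofReal_ne_top hy⟩

lemma ConvexPotential.measurable {V : ℝ → ℝ≥0∞} (hV : ConvexPotential V) : Measurable V :=
  measurable_of_Iic fun c => (hV.convex_le c).ordConnected.measurableSet

lemma ConvexPotential.measurable_negExp {V : ℝ → ℝ≥0∞} (hV : ConvexPotential V) :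
    Measurable fun η => negExp (V η) :=
  negExp_antitone.measurable.comp hV.measurable

lemma ConvexPotential.measurable_dens {V : ℝ → ℝ≥0∞} (hV : ConvexPotential V) :
    Measurable (dens V) :=
  hV.measurable_negExp.ennreal_toReal

lemma ConvexPotential.convexOn_toReal {V : ℝ → ℝ≥0∞} (hV : ConvexPotential V) :
    ConvexOn ℝ {η | V η ≠ ⊤} fun η => (V η).toReal := by
  refine ⟨hV.convex_finite, ?_⟩
  intro x hx y hy s t hs ht hst
  have hx' : ENNReal.ofReal s * V x ≠ ⊤ := ENNReal.mul_ne_top ENNReal.ofReal_ne_top hx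
  have hy' : ENNReal.ofReal t * V y ≠ ⊤ := ENNReal.mul_ne_top ENNReal.ofReal_ne_top hy
  have h := ENNReal.toReal_mono (ENNReal.add_ne_top.2 ⟨hx', hy'⟩) (hV.combo x y hs ht hst)
  rw [ENNReal.toReal_add hx' hy', ENNReal.toReal_mul, ENNReal.toReal_mul,
    ENNReal.toReal_ofReal hs, ENNReal.toReal_ofReal ht] at h
  exact h

/-- For `z ≤ x ≤ y`, the pair `x, z + y - x` has the same sum as the pair `z, y` but is less
spread out, so convexity decreases the sum of the values of `V`. -/
lemma ConvexPotential.four_point {V : ℝ → ℝ≥0∞} (hV : ConvexPotential V) {z x y : ℝ}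
    (hzx : z ≤ x) (hxy : x ≤ y) : V x + V (z + (y - x)) ≤ V z + V y := by
  rcases (hzx.trans hxy).eq_or_lt with h | h
  · obtain rfl : z = x := le_antisymm hzx (h ▸ hxy)
    simp
  have hd : 0 < y - z := sub_pos.2 h
  have hp : 0 ≤ (y - x) / (y - z) := div_nonneg (sub_nonneg.2 hxy) hd.le
  have hq : 0 ≤ (x - z) / (y - z) := div_nonneg (sub_nonneg.2 hzx) hd.le
  have hpq : (y - x) / (y - z) + (x - z) / (y - z) = 1 := by field_simp; ring
  have h1 := hV.combo z y hp hq hpq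
  have h2 := hV.combo z y hq hp (by rw [add_comm]; exact hpq)
  rw [show (y - x) / (y - z) * z + (x - z) / (y - z) * y = x by field_simp; ring] at h1
  rw [show (x - z) / (y - z) * z + (y - x) / (y - z) * y = z + (y - x) by
    field_simp; ring] at h2
  calc V x + V (z + (y - x)) ≤ _ := add_le_add h1 h2
    _ = (ENNReal.ofReal ((y - x) / (y - z)) + ENNReal.ofReal ((x - z) / (y - z)))
          * (V z + V y) := by ring
    _ = V z + V y := by rw [← ENNReal.ofReal_add hp hq, hpq]; simp

/-- The reverse hazard rate `e^{-V} / ∫_{-∞}^· e^{-V}` is antitone, written without division.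
After translating `(-∞, x]` to `(-∞, y]` this is a pointwise inequality between integrands. -/
lemma ConvexPotential.negExp_mul_lintegral_le {V : ℝ → ℝ≥0∞} (hV : ConvexPotential V)
    {x y : ℝ} (hxy : x ≤ y) :
    negExp (V y) * ∫⁻ ζ in Iic x, negExp (V ζ) ≤ negExp (V x) * ∫⁻ ζ in Iic y, negExp (V ζ) := by
  have hm := hV.measurable_negExp
  have hshift : ∫⁻ ζ in Iic y, negExp (V ζ) = ∫⁻ ζ in Iic x, negExp (V (ζ + (y - x))) := by
    rw [← lintegral_indicator measurableSet_Iic, ← lintegral_indicator measurableSet_Iic,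
      ← lintegral_add_right_eq_self _ (y - x)]
    congr 1
    ext ζ
    simp only [indicator, mem_Iic]
    congr 1
    simp only [eq_iff_iff]
    constructor <;> intro h <;> linarith
  have hm' : Measurable fun ζ => negExp (V (ζ + (y - x))) :=
    hm.comp (measurable_id.add_const (y - x))
  rw [hshift, ← lintegral_const_mul _ hm,
    ← lintegral_const_mul _ hm']
  refine setLIntegral_mono' measurableSet_Iic fun ζ hζ => ?_
  rw [← negExp_add, ← negExp_add]
  apply negExp_antitone
  rw [add_comm (V y)]
  exact hV.four_point hζ hxy

/-! ### Integrability of the density -/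

lemma ConvexPotential.zero_ne_top {V : ℝ → ℝ≥0∞} (hV : ConvexPotential V)
    (heven : ∀ η : ℝ, V (-η) = V η) (hfin : ∃ a b : ℝ, a < b ∧ ∀ η ∈ Ioo a b, V η ≠ ⊤) :
    V 0 ≠ ⊤ := by
  obtain ⟨a, b, hab, h⟩ := hfin
  obtain ⟨m, hm⟩ := exists_between hab
  have h1 : V m ≠ ⊤ := h m hm
  have h2 : V (-m) ≠ ⊤ := by rwa [heven]
  have := hV.convex_finite h1 h2 (a := 1 / 2) (b := 1 / 2) (by norm_num) (by norm_num)
    (by norm_num)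
  simpa using this

/-- A convex even potential tending to `∞` grows at least linearly, so `e^{-V}` decays
exponentially. -/
lemma ConvexPotential.exists_dens_le {V : ℝ → ℝ≥0∞} (hV : ConvexPotential V)
    (heven : ∀ η : ℝ, V (-η) = V η) (h0 : V 0 ≠ ⊤) (htop : Tendsto V atTop (nhds ⊤)) :
    ∃ R : ℝ, 0 < R ∧ ∀ η, dens V η ≤ Real.exp (1 - |η| / R) := by
  have hev : ∀ᶠ η in atTop, V 0 + 1 < V η :=
    htop.eventually (lt_mem_nhds (ENNReal.add_lt_top.2 ⟨h0.lt_top, ENNReal.one_lt_top⟩))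
  obtain ⟨R, hR, hR0⟩ := (hev.and (eventually_gt_atTop 0)).exists
  refine ⟨R, hR0, fun η => ?_⟩
  -- By symmetry it suffices to treat `η ≥ 0`.
  wlog hη : 0 ≤ η generalizing η
  · have := this (-η) (by linarith)
    simpa [dens, heven] using this
  by_cases hf : V η = ⊤
  · simp [dens, hf, negExp_top, (Real.exp_pos _).le]
  rw [dens_of_ne_top hf, abs_of_nonneg hη]
  apply Real.exp_le_exp.2
  have hnn : 0 ≤ (V η).toReal := ENNReal.toReal_nonneg
  rcases le_total η R with h | h
  · have : η / R ≤ 1 := (div_le_one hR0).2 h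
    linarith
  have hη0 : 0 < η := hR0.trans_le h
  have hs : 0 ≤ 1 - R / η := sub_nonneg.2 ((div_le_one hη0).2 h)
  have hRη : (1 - R / η) * 0 + R / η * η = R := by field_simp; ring
  have hc := hV.convexOn_toReal.2 h0 hf hs (div_nonneg hR0.le hη) (by ring)
  have hRf := hV.convex_finite h0 hf hs (div_nonneg hR0.le hη) (by ring)
  simp only [smul_eq_mul, hRη] at hc hRf
  have hlt := (ENNReal.toReal_lt_toReal (ENNReal.add_ne_top.2 ⟨h0, ENNReal.one_ne_top⟩) hRf).2 hR
  rw [ENNReal.toReal_add h0 ENNReal.one_ne_top, ENNReal.toReal_one] at hlt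
  have h00 : 0 ≤ (V 0).toReal := ENNReal.toReal_nonneg
  have key : 1 ≤ R / η * (V η).toReal := by nlinarith [div_nonneg hR0.le hη]
  have : η / R ≤ (V η).toReal := by
    rw [div_le_iff₀ hR0]
    rw [div_mul_eq_mul_div, le_div_iff₀ hη0] at key
    linarith
  linarith

lemma ConvexPotential.integrable_dens {V : ℝ → ℝ≥0∞} (hV : ConvexPotential V)
    (heven : ∀ η : ℝ, V (-η) = V η) (h0 : V 0 ≠ ⊤) (htop : Tendsto V atTop (nhds ⊤)) :
    Integrable (dens V) := by
  obtain ⟨R, hR, h⟩ := hV.exists_dens_le heven h0 htop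
  have hi : Integrable fun x : ℝ => (2 * Real.exp 1) * (1 + (x / R) ^ 2)⁻¹ :=
    (integrable_inv_one_add_sq.comp_div hR.ne').const_mul _
  refine hi.mono' hV.measurable_dens.aestronglyMeasurable (ae_of_all _ fun x => ?_)
  rw [Real.norm_of_nonneg (by simp [dens])]
  refine (h x).trans ?_
  have hs : 0 ≤ |x| / R := by positivity
  have hq := Real.quadratic_le_exp_of_nonneg hs
  rw [Real.exp_sub, div_eq_mul_inv, mul_comm 2, mul_assoc]
  gcongr
  rw [inv_le_iff_one_le_mul₀ (Real.exp_pos _)]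
  have h2 : (x / R) ^ 2 = (|x| / R) ^ 2 := by rw [div_pow, div_pow, sq_abs]
  rw [h2, ← div_eq_mul_inv, div_mul_eq_mul_div, le_div_iff₀ (by positivity)]
  nlinarith

lemma ConvexPotential.lintegral_ne_top {V : ℝ → ℝ≥0∞} (hInt : Integrable (dens V)) :
    ∫⁻ η, negExp (V η) ≠ ⊤ := by
  have := hInt.lintegral_lt_top.ne
  simpa [dens, ENNReal.ofReal_toReal (negExp_ne_top _)] using this

lemma ConvexPotential.Znorm_pos {V : ℝ → ℝ≥0∞} (hV : ConvexPotential V)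
    (hInt : Integrable (dens V)) (hfin : ∃ a b : ℝ, a < b ∧ ∀ η ∈ Ioo a b, V η ≠ ⊤) :
    0 < Znorm V := by
  obtain ⟨a, b, hab, h⟩ := hfin
  refine ENNReal.toReal_pos (ne_of_gt ?_) (lintegral_ne_top hInt)
  rw [lintegral_pos_iff_support hV.measurable_negExp]
  refine lt_of_lt_of_le ?_ (measure_mono (s := Ioo a b) fun η hη => ?_)
  · simp [hab]
  · simp [negExp, h η hη, Real.exp_pos]

lemma setIntegral_dens {V : ℝ → ℝ≥0∞} (hV : ConvexPotential V) (s : Set ℝ) :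
    ∫ ζ in s, dens V ζ = (∫⁻ ζ in s, negExp (V ζ)).toReal :=
  integral_toReal hV.measurable_negExp.aemeasurable (ae_of_all _ fun _ => (negExp_ne_top _).lt_top)

/-! ### The distribution function and its log-concavity -/

lemma Fcdf_eq {V : ℝ → ℝ≥0∞} (hV : ConvexPotential V) (η : ℝ) :
    Fcdf V η = (Znorm V)⁻¹ * ∫ ζ in Iic η, dens V ζ := by
  rw [Fcdf, setIntegral_dens hV]

lemma Fcdf_eq_primitive {V : ℝ → ℝ≥0∞} (hV : ConvexPotential V) (hInt : Integrable (dens V)) :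
    Fcdf V = fun η => Fcdf V 0 + (Znorm V)⁻¹ * ∫ ζ in (0 : ℝ)..η, dens V ζ := by
  ext η
  rw [Fcdf_eq hV, Fcdf_eq hV,
    ← intervalIntegral.integral_Iic_sub_Iic hInt.integrableOn hInt.integrableOn]
  ring

lemma continuous_Fcdf {V : ℝ → ℝ≥0∞} (hV : ConvexPotential V) (hInt : Integrable (dens V)) :
    Continuous (Fcdf V) := by
  rw [Fcdf_eq_primitive hV hInt]
  exact continuous_const.add (continuous_const.mul (hInt.continuous_primitive 0))

lemma hasDerivAt_Fcdf {V : ℝ → ℝ≥0∞} (hV : ConvexPotential V) (hInt : Integrable (dens V))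
    {η : ℝ} (hη : η ∈ interior {η | V η ≠ ⊤}) :
    HasDerivAt (Fcdf V) ((Znorm V)⁻¹ * dens V η) η := by
  have hVc : ContinuousAt (fun η => (V η).toReal) η :=
    hV.convexOn_toReal.continuousOn_interior.continuousAt (isOpen_interior.mem_nhds hη)
  have hc : ContinuousAt (dens V) η := by
    have h1 : ContinuousAt (fun η => Real.exp (-(V η).toReal)) η := hVc.neg.rexp
    refine h1.congr ?_
    filter_upwards [mem_interior_iff_mem_nhds.1 hη] with x hx
    exact (dens_of_ne_top hx).symm
  have h := intervalIntegral.integral_hasDerivAt_right (a := 0) (hInt.intervalIntegrable)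
    (hV.measurable_dens.stronglyMeasurable.stronglyMeasurableAtFilter) hc
  have h2 := (h.const_mul (Znorm V)⁻¹).const_add (Fcdf V 0)
  rwa [← Fcdf_eq_primitive hV hInt] at h2

lemma Fcdf_nonneg (V : ℝ → ℝ≥0∞) (η : ℝ) : 0 ≤ Fcdf V η :=
  mul_nonneg (inv_nonneg.2 ENNReal.toReal_nonneg) ENNReal.toReal_nonneg

lemma Fcdf_mono {V : ℝ → ℝ≥0∞} (hInt : Integrable (dens V)) : Monotone (Fcdf V) := by
  intro x y hxy
  unfold Fcdf
  have hne : ∫⁻ ζ in Iic y, negExp (V ζ) ≠ ⊤ :=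
    ne_top_of_le_ne_top (ConvexPotential.lintegral_ne_top hInt) (setLIntegral_le_lintegral _ _)
  refine mul_le_mul_of_nonneg_left ?_ (inv_nonneg.2 ENNReal.toReal_nonneg)
  exact ENNReal.toReal_mono hne (lintegral_mono_set (Iic_subset_Iic.2 hxy))

/-- Evenness of `V` makes the distribution symmetric about `0`. -/
lemma Fcdf_neg {V : ℝ → ℝ≥0∞} (hV : ConvexPotential V) (hInt : Integrable (dens V))
    (heven : ∀ η : ℝ, V (-η) = V η) (hZ : 0 < Znorm V) (η : ℝ) :
    Fcdf V (-η) = 1 - Fcdf V η := by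
  have h1 : ∫ ζ in Iic (-η), dens V ζ = ∫ ζ in Ioi η, dens V ζ := by
    rw [← integral_comp_neg_Ioi]
    simp [dens, heven]
  have h2 : (∫ ζ in Iic η, dens V ζ) + ∫ ζ in Ioi η, dens V ζ = Znorm V := by
    rw [intervalIntegral.integral_Iic_add_Ioi hInt.integrableOn hInt.integrableOn, Znorm,
      ← setLIntegral_univ, ← setIntegral_dens hV, setIntegral_univ]
  rw [Fcdf_eq hV, Fcdf_eq hV, h1, eq_sub_iff_add_eq, ← mul_add, add_comm, h2,
    inv_mul_cancel₀ hZ.ne']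

lemma dens_mul_Fcdf_le {V : ℝ → ℝ≥0∞} (hV : ConvexPotential V) (hInt : Integrable (dens V))
    {x y : ℝ} (hxy : x ≤ y) : dens V y * Fcdf V x ≤ dens V x * Fcdf V y := by
  have hne : ∫⁻ ζ in Iic y, negExp (V ζ) ≠ ⊤ :=
    ne_top_of_le_ne_top (ConvexPotential.lintegral_ne_top hInt) (setLIntegral_le_lintegral _ _)
  have h := ENNReal.toReal_mono (ENNReal.mul_ne_top (negExp_ne_top _) hne)
    (hV.negExp_mul_lintegral_le hxy)
  rw [ENNReal.toReal_mul, ENNReal.toReal_mul] at h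
  have hZ : 0 ≤ (Znorm V)⁻¹ := inv_nonneg.2 ENNReal.toReal_nonneg
  calc dens V y * Fcdf V x = (Znorm V)⁻¹ *
        (dens V y * (∫⁻ ζ in Iic x, negExp (V ζ)).toReal) := by rw [Fcdf]; ring
    _ ≤ (Znorm V)⁻¹ * (dens V x * (∫⁻ ζ in Iic y, negExp (V ζ)).toReal) :=
        mul_le_mul_of_nonneg_left h hZ
    _ = dens V x * Fcdf V y := by rw [Fcdf]; ring

/-- The part of the domain of `V` on which `F` is positive. -/
def posDomain (V : ℝ → ℝ≥0∞) : Set ℝ := {η | V η ≠ ⊤ ∧ 0 < Fcdf V η}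

lemma convex_posDomain {V : ℝ → ℝ≥0∞} (hV : ConvexPotential V) (hInt : Integrable (dens V)) :
    Convex ℝ (posDomain V) := by
  have : IsUpperSet {η | 0 < Fcdf V η} := fun x y hxy hx => lt_of_lt_of_le hx (Fcdf_mono hInt hxy)
  exact hV.convex_finite.inter this.ordConnected.convex

/-- Log-concavity of the distribution function of a log-concave density: the logarithmic
derivative of `F` is the reverse hazard rate `e^{-V} / ∫_{-∞}^· e^{-V}`, which is antitone. -/
lemma concaveOn_log_Fcdf {V : ℝ → ℝ≥0∞} (hV : ConvexPotential V) (hInt : Integrable (dens V)) :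
    ConcaveOn ℝ (posDomain V) fun η => Real.log (Fcdf V η) := by
  have hderiv : ∀ η ∈ interior (posDomain V), HasDerivAt (fun η => Real.log (Fcdf V η))
      ((Znorm V)⁻¹ * dens V η / Fcdf V η) η := by
    intro η hη
    have hsub : posDomain V ⊆ {η | V η ≠ ⊤} := fun _ h => h.1
    exact (hasDerivAt_Fcdf hV hInt (interior_mono hsub hη)).log (interior_subset hη).2.ne'
  refine AntitoneOn.concaveOn_of_deriv (convex_posDomain hV hInt) ?_ ?_ ?_
  · exact (continuous_Fcdf hV hInt).continuousOn.log fun η hη => hη.2.ne'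
  · exact fun η hη => (hderiv η hη).differentiableAt.differentiableWithinAt
  · intro x hx y hy hxy
    rw [(hderiv x hx).deriv, (hderiv y hy).deriv, mul_div_assoc, mul_div_assoc]
    refine mul_le_mul_of_nonneg_left ?_ (inv_nonneg.2 ENNReal.toReal_nonneg)
    rw [div_le_div_iff₀ (interior_subset hy).2 (interior_subset hx).2]
    exact dens_mul_Fcdf_le hV hInt hxy

/-! ### The wedge-normalization -/

lemma wedge_eq_min (t : ℝ) : wedge t = 4 * min t (1 - t) := by
  unfold wedge
  rcases le_total t (1 / 2) with h | h
  · rw [abs_of_nonpos (by linarith), min_eq_left (by linarith)]; ring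
  · rw [abs_of_nonneg (by linarith), min_eq_right (by linarith)]; ring

lemma wedge_le_two (t : ℝ) : wedge t ≤ 2 := by
  unfold wedge
  linarith [abs_nonneg (t - 1 / 2)]

lemma continuous_wedge : Continuous wedge := by
  unfold wedge
  fun_prop

/-- The set of points where the wedge-normalization takes a real value. -/
def wedgeDomain (V : ℝ → ℝ≥0∞) : Set ℝ := posDomain V ∩ (fun η => -η) ⁻¹' posDomain V

/-- The real-valued formula for the wedge-normalization on `wedgeDomain V`. -/
def wedgeReal (V : ℝ → ℝ≥0∞) (η : ℝ) : ℝ :=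
  max ((V η).toReal - Real.log (Fcdf V η)) ((V η).toReal - Real.log (Fcdf V (-η))) - Real.log 4

lemma wedgeNorm_of_not_mem {V : ℝ → ℝ≥0∞} (hV : ConvexPotential V) (hInt : Integrable (dens V))
    (heven : ∀ η : ℝ, V (-η) = V η) (hZ : 0 < Znorm V) {η : ℝ} (hη : η ∉ wedgeDomain V) :
    wedgeNorm V η = ⊤ := by
  refine if_pos ?_
  by_contra! hcon
  obtain ⟨h1, h2⟩ := hcon
  rw [wedge_eq_min, ← Fcdf_neg hV hInt heven hZ] at h2
  have h3 : 0 < min (Fcdf V η) (Fcdf V (-η)) := by linarith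
  exact hη ⟨⟨h1, (lt_min_iff.1 h3).1⟩, ⟨by rwa [heven], (lt_min_iff.1 h3).2⟩⟩

lemma wedgeNorm_of_mem {V : ℝ → ℝ≥0∞} (hV : ConvexPotential V) (hInt : Integrable (dens V))
    (heven : ∀ η : ℝ, V (-η) = V η) (hZ : 0 < Znorm V) {η : ℝ} (hη : η ∈ wedgeDomain V) :
    wedgeNorm V η = (wedgeReal V η : ℝ) := by
  obtain ⟨⟨h1, h2⟩, -, h3⟩ := hη
  have hw : wedge (Fcdf V η) = 4 * min (Fcdf V η) (Fcdf V (-η)) := by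
    rw [wedge_eq_min, Fcdf_neg hV hInt heven hZ]
  have hm : 0 < min (Fcdf V η) (Fcdf V (-η)) := lt_min h2 h3
  have hneg : ¬(V η = ⊤ ∨ wedge (Fcdf V η) ≤ 0) := by
    rw [hw]
    push Not
    exact ⟨h1, by linarith⟩
  rw [wedgeNorm, if_neg hneg, hw, Real.log_mul (by norm_num) hm.ne', wedgeReal]
  congr 1
  rcases le_total (Fcdf V η) (Fcdf V (-η)) with h | h
  · have := Real.log_le_log h2 h
    rw [min_eq_left h, max_eq_left (by linarith)]; ring
  · have := Real.log_le_log h3 h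
    rw [min_eq_right h, max_eq_right (by linarith)]; ring

lemma convexOn_wedgeReal {V : ℝ → ℝ≥0∞} (hV : ConvexPotential V) (hInt : Integrable (dens V)) :
    ConvexOn ℝ (wedgeDomain V) (wedgeReal V) := by
  have hpos := convex_posDomain hV hInt
  have hneg : Convex ℝ ((fun η : ℝ => -η) ⁻¹' posDomain V) :=
    hpos.linear_preimage (-LinearMap.id : ℝ →ₗ[ℝ] ℝ)
  have hD : Convex ℝ (wedgeDomain V) := hpos.inter hneg
  have hVc : ConvexOn ℝ (wedgeDomain V) fun η => (V η).toReal :=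
    hV.convexOn_toReal.subset (fun η hη => hη.1.1) hD
  have hl : ConcaveOn ℝ (wedgeDomain V) fun η => Real.log (Fcdf V η) :=
    (concaveOn_log_Fcdf hV hInt).subset inter_subset_left hD
  have hr : ConcaveOn ℝ (wedgeDomain V) fun η => Real.log (Fcdf V (-η)) :=
    ((concaveOn_log_Fcdf hV hInt).comp_linearMap (-LinearMap.id : ℝ →ₗ[ℝ] ℝ)).subset
      inter_subset_right hD
  exact ((hVc.sub hl).sup (hVc.sub hr)).sub (concaveOn_const _ hD)

lemma sub_log_two_le_wedgeNorm (V : ℝ → ℝ≥0∞) (η : ℝ) :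
    (V η : EReal) - ((Real.log 2 : ℝ) : EReal) ≤ wedgeNorm V η := by
  unfold wedgeNorm
  split_ifs with h
  · exact le_top
  push Not at h
  obtain ⟨h1, h2⟩ := h
  have hlog := Real.log_le_log h2 (wedge_le_two _)
  rw [← EReal.coe_toReal (x := (V η : EReal)) (by simpa using h1) (by simp), ← EReal.coe_sub,
    EReal.toReal_coe_ennreal]
  exact EReal.coe_le_coe_iff.2 (by linarith)

lemma tendsto_wedgeNorm_of_tendsto {V : ℝ → ℝ≥0∞} {l : Filter ℝ} (h : Tendsto V l (nhds ⊤)) :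
    Tendsto (wedgeNorm V) l (nhds ⊤) := by
  rw [EReal.tendsto_nhds_top_iff_real]
  intro M
  have hev : ∀ᶠ η in l, ENNReal.ofReal (M + Real.log 2) < V η :=
    h.eventually (lt_mem_nhds ENNReal.ofReal_lt_top)
  filter_upwards [hev] with η hη
  refine lt_of_lt_of_le ?_ (sub_log_two_le_wedgeNorm V η)
  have h0 : ((M + Real.log 2 : ℝ) : EReal) ≤ (ENNReal.ofReal (M + Real.log 2) : EReal) := by
    rw [EReal.coe_ennreal_ofReal]
    exact EReal.coe_le_coe_iff.2 (le_max_left _ _)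
  have h1 : ((M + Real.log 2 : ℝ) : EReal) < (V η : EReal) :=
    h0.trans_lt (EReal.coe_ennreal_lt_coe_ennreal_iff.2 hη)
  rw [EReal.coe_add] at h1
  exact EReal.lt_sub_iff_add_lt (by simp) (by simp) |>.2 h1

/-- If `g ∘ F` vanishes at `c`, then the wedge-normalization blows up at `c`. -/
lemma tendsto_wedgeNorm_of_wedge_eq_zero {V : ℝ → ℝ≥0∞} (hV : ConvexPotential V)
    (hInt : Integrable (dens V)) {c : ℝ} (hc : wedge (Fcdf V c) = 0) :
    Tendsto (wedgeNorm V) (nhds c) (nhds ⊤) := by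
  rw [EReal.tendsto_nhds_top_iff_real]
  intro M
  have hlim : Tendsto (fun η => wedge (Fcdf V η)) (nhds c) (nhds 0) := by
    rw [← hc]
    exact (continuous_wedge.comp (continuous_Fcdf hV hInt)).tendsto c
  filter_upwards [hlim.eventually (gt_mem_nhds (Real.exp_pos (-M)))] with η hη
  unfold wedgeNorm
  split_ifs with h
  · exact EReal.coe_lt_top M
  push Not at h
  have h1 := Real.log_lt_log h.2 hη
  rw [Real.log_exp] at h1
  have h2 : 0 ≤ (V η).toReal := ENNReal.toReal_nonneg
  exact EReal.coe_lt_coe_iff.2 (by linarith)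

lemma Fcdf_eq_zero {V : ℝ → ℝ≥0∞} {c : ℝ} (h : ∀ η ≤ c, V η = ⊤) : Fcdf V c = 0 := by
  have : ∫⁻ ζ in Iic c, negExp (V ζ) = ∫⁻ ζ in Iic c, 0 :=
    setLIntegral_congr_fun measurableSet_Iic fun ζ hζ => by simp [h ζ hζ, negExp_top]
  simp [Fcdf, this]

/-- `V̄` blows up at `c` if the domain of `V` lies to the right of `c`, since then `F c = 0`. -/
lemma tendsto_wedgeNorm_left {V : ℝ → ℝ≥0∞} (hV : ConvexPotential V)
    (hInt : Integrable (dens V)) {c : ℝ} (h : ∀ η ≤ c, V η = ⊤) :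
    Tendsto (wedgeNorm V) (nhds c) (nhds ⊤) := by
  refine tendsto_wedgeNorm_of_wedge_eq_zero hV hInt ?_
  rw [Fcdf_eq_zero h, wedge_eq_min]
  norm_num

/-- `V̄` blows up at `c` if the domain of `V` lies to the left of `c`, since then `F c = 1`. -/
lemma tendsto_wedgeNorm_right {V : ℝ → ℝ≥0∞} (hV : ConvexPotential V)
    (hInt : Integrable (dens V)) (heven : ∀ η : ℝ, V (-η) = V η) (hZ : 0 < Znorm V) {c : ℝ}
    (h : ∀ η, c ≤ η → V η = ⊤) : Tendsto (wedgeNorm V) (nhds c) (nhds ⊤) := by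
  refine tendsto_wedgeNorm_of_wedge_eq_zero hV hInt ?_
  have h0 : Fcdf V (-c) = 0 :=
    Fcdf_eq_zero fun η hη => by rw [← heven]; exact h _ (by linarith)
  rw [wedge_eq_min, ← Fcdf_neg hV hInt heven hZ, h0, min_eq_right (Fcdf_nonneg V c), mul_zero]

lemma wedgeNorm_ne_bot (V : ℝ → ℝ≥0∞) (η : ℝ) : wedgeNorm V η ≠ ⊥ := by
  unfold wedgeNorm
  split_ifs
  · exact top_ne_bot
  · exact EReal.coe_ne_bot _

lemma coe_mul_ne_bot_of_nonneg {s : ℝ} (hs : 0 ≤ s) {x : EReal} (hx : x ≠ ⊥) :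
    (s : EReal) * x ≠ ⊥ := by
  induction x with
  | bot => exact absurd rfl hx
  | top =>
    rcases hs.eq_or_lt with rfl | h
    · simp
    · rw [EReal.coe_mul_top_of_pos h]; exact top_ne_bot
  | coe r => rw [← EReal.coe_mul]; exact EReal.coe_ne_bot _

lemma wedgeNorm_convex {V : ℝ → ℝ≥0∞} (hV : ConvexPotential V)
    (hInt : Integrable (dens V)) (heven : ∀ η : ℝ, V (-η) = V η) (hZ : 0 < Znorm V)
    (α β t : ℝ) (ht0 : 0 ≤ t) (ht1 : t ≤ 1) :
    wedgeNorm V (t * α + (1 - t) * β) ≤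
      (t : EReal) * wedgeNorm V α + ((1 - t : ℝ) : EReal) * wedgeNorm V β := by
  have hs0 : 0 ≤ 1 - t := sub_nonneg.2 ht1
  rcases ht0.eq_or_lt with rfl | ht
  · simp
  rcases hs0.eq_or_lt with hs | hs
  · obtain rfl : t = 1 := by linarith
    simp
  -- Both weights are positive, so an infinite value at `α` or `β` makes the right side infinite.
  by_cases hα : α ∈ wedgeDomain V
  · by_cases hβ : β ∈ wedgeDomain V
    · have hc := convexOn_wedgeReal hV hInt
      have hmem : t * α + (1 - t) * β ∈ wedgeDomain V := hc.1 hα hβ ht0 hs0 (by ring)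
      rw [wedgeNorm_of_mem hV hInt heven hZ hα, wedgeNorm_of_mem hV hInt heven hZ hβ,
        wedgeNorm_of_mem hV hInt heven hZ hmem]
      exact_mod_cast hc.2 hα hβ ht0 hs0 (by ring)
    · rw [wedgeNorm_of_not_mem hV hInt heven hZ hβ, EReal.coe_mul_top_of_pos hs,
        EReal.add_top_of_ne_bot (coe_mul_ne_bot_of_nonneg ht0 (wedgeNorm_ne_bot V α))]
      exact le_top
  · rw [wedgeNorm_of_not_mem hV hInt heven hZ hα, EReal.coe_mul_top_of_pos ht,
      EReal.top_add_of_ne_bot (coe_mul_ne_bot_of_nonneg hs0 (wedgeNorm_ne_bot V β))]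
    exact le_top

/-- Let `V : ℝ → [0,∞]` be convex, even, finite on a nonempty open
interval, with `V η → ∞` as `η → ±∞`, and let `V̄` be its wedge-normalization.  Then:
(1) `V̄ η ≥ V η - log 2`;
(2) if `(a, b)` (with `a, b ∈ ℝ ∪ {±∞}`) is the interval on which `V` is finite, then
`V̄ η → ∞` as `η → a⁺` and as `η → b⁻`;
(3) `V̄` is convex. -/
theorem wedgeNorm_basic_properties (V : ℝ → ℝ≥0∞)
    (hconv : ∀ (a b : ℝ) (p q : ℝ≥0), p + q = 1 →
      V ((p : ℝ) * a + (q : ℝ) * b) ≤ (p : ℝ≥0∞) * V a + (q : ℝ≥0∞) * V b)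
    (heven : ∀ η : ℝ, V (-η) = V η)
    (hfin : ∃ a b : ℝ, a < b ∧ ∀ η ∈ Ioo a b, V η ≠ ⊤)
    (htop : Tendsto V atTop (nhds ⊤)) (hbot : Tendsto V atBot (nhds ⊤)) :
    (∀ η : ℝ, ((V η : EReal) - ((Real.log 2 : ℝ) : EReal)) ≤ wedgeNorm V η) ∧
    (∀ a b : EReal, a < b →
      {η : ℝ | V η ≠ ⊤} = {η : ℝ | a < (η : EReal) ∧ (η : EReal) < b} →
      Tendsto (wedgeNorm V) (rightApproach a) (nhds (⊤ : EReal)) ∧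
        Tendsto (wedgeNorm V) (leftApproach b) (nhds (⊤ : EReal))) ∧
    (∀ α β t : ℝ, 0 ≤ t → t ≤ 1 →
      wedgeNorm V (t * α + (1 - t) * β) ≤
        (t : EReal) * wedgeNorm V α + ((1 - t : ℝ) : EReal) * wedgeNorm V β) := by
  have hV : ConvexPotential V := hconv
  have h0 := hV.zero_ne_top heven hfin
  have hInt := hV.integrable_dens heven h0 htop
  have hZ := hV.Znorm_pos hInt hfin
  refine ⟨sub_log_two_le_wedgeNorm V, fun a b hab hdom => ⟨?_, ?_⟩,
    wedgeNorm_convex hV hInt heven hZ⟩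
  · unfold rightApproach
    split_ifs with ha
    · exact tendsto_wedgeNorm_of_tendsto hbot
    -- `a < b` excludes `a = ⊤`, so `a` is a real number.
    lift a to ℝ using ⟨hab.ne_top, ha⟩
    refine (tendsto_wedgeNorm_left hV hInt fun η hη => ?_).mono_left nhdsWithin_le_nhds
    by_contra hne
    have hmem : η ∈ {η : ℝ | (a : EReal) < η ∧ (η : EReal) < b} := hdom ▸ hne
    exact absurd (EReal.coe_lt_coe_iff.1 hmem.1) (not_lt.2 hη)
  · unfold leftApproach
    split_ifs with hb
    · exact tendsto_wedgeNorm_of_tendsto htop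
    lift b to ℝ using ⟨hb, hab.ne_bot⟩
    refine (tendsto_wedgeNorm_right hV hInt heven hZ fun η hη => ?_).mono_left nhdsWithin_le_nhds
    by_contra hne
    have hmem : η ∈ {η : ℝ | a < (η : EReal) ∧ (η : EReal) < (b : EReal)} := hdom ▸ hne
    exact absurd (EReal.coe_lt_coe_iff.1 hmem.2) (not_lt.2 hη)
end
end

section
/- Let V̄ be the wedge-normalization of V and let λ denote Lebesgue measure on ℝ. Then for every C₁ > 2 there exists C₂ ∈ ℝ such that for every probability measure μ on ℝ: 𝓗(μ, e^{−V}·λ) − C₂ ≤ 𝓗(μ, e^{−V̄}·λ) ≤ C₁·𝓗(μ, e^{−V}·λ) + C₂. -/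
/-!
With `ν = e^{-V} λ`, the measure `e^{-V̄} λ` is `ν` weighted by the density `G = g ∘ F`, so
`log (dμ/dν̄) = log (dμ/dν) - log G`. The lower bound follows from `G ≤ 2`, so that `log 2`
suffices as a constant.

For the upper bound put `s = (C₁ - 1)⁻¹ ∈ (0, 1)`. Integrating `t ≤ e^t` at
`t = -s log G - log (dμ/dν)` against `μ` gives
`∫ -s log G dμ ≤ 𝓗(μ, ν) + ∫ G ^ (-s) dν`, a form of the Gibbs variational principle, and dividing
by `s` yields the factor `1 + s⁻¹ = C₁` (`relEnt_comparison`). It remains to see that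
`∫ G ^ (-s) dν < ∞`. Since `ν` has no atoms, `F` is uniformly distributed under `ν / ν(ℝ)`; only the
resulting tail bound `ν {G ≤ t} ≤ ν(ℝ) t / 2` is needed (`measure_wedge_le`), and the layer cake
formula concludes because `s < 1` (`lintegral_rpow_neg_lt_top`).

Convexity of `V` is used for measurability, and, together with evenness and divergence at infinity,
to bound `V` below by an affine function of `|η|`, which makes `ν` finite
(`lintegral_negExp_lt_top`).
-/

open MeasureTheory Filter Set
open scoped ENNReal NNReal

noncomputable section

/-! ### The law of the distribution function -/

/-- For a down-closed `S`, any compact `K ⊆ S` lies in `Iic (sSup K)` with `sSup K ∈ S`, so inner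
regularity bounds `ν S`. -/
lemma measure_lower_le (ν : Measure ℝ) [IsFiniteMeasure ν] {S : Set ℝ} (hS : MeasurableSet S)
    {c : ℝ≥0∞} (h : ∀ x ∈ S, ν (Iic x) ≤ c) : ν S ≤ c := by
  rw [hS.measure_eq_iSup_isCompact_of_ne_top (measure_ne_top ν S)]
  refine iSup_le fun K => iSup_le fun hK => iSup_le fun hc => ?_
  rcases K.eq_empty_or_nonempty with rfl | hne
  · simp
  · exact (measure_mono fun x hx => hc.isGreatest_sSup hne |>.2 hx).trans
      (h _ (hK (hc.sSup_mem hne)))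

/-- Mirror image of `measure_lower_le`, for up-closed sets. -/
lemma measure_upper_le (ν : Measure ℝ) [IsFiniteMeasure ν] {S : Set ℝ} (hS : MeasurableSet S)
    {c : ℝ≥0∞} (h : ∀ x ∈ S, ν (Ici x) ≤ c) : ν S ≤ c := by
  rw [hS.measure_eq_iSup_isCompact_of_ne_top (measure_ne_top ν S)]
  refine iSup_le fun K => iSup_le fun hK => iSup_le fun hc => ?_
  rcases K.eq_empty_or_nonempty with rfl | hne
  · simp
  · exact (measure_mono fun x hx => hc.isLeast_sInf hne |>.2 hx).trans
      (h _ (hK (hc.sInf_mem hne)))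

/-- Tail bound replacing the statement that `F` is uniformly distributed under normalized `ν`:
`wedge (F x) ≤ t` means that `F x ≤ t / 4` or `F x ≥ 1 - t / 4`. -/
lemma measure_wedge_le (ν : Measure ℝ) [IsFiniteMeasure ν] [NullSingletonClass ν] (F : ℝ → ℝ)
    (hZ : 0 < ν.real univ) (hF : ∀ x, F x = (ν.real univ)⁻¹ * ν.real (Iic x))
    (hFm : Measurable F) {t : ℝ} :
    ν {x | wedge (F x) ≤ t} ≤ ENNReal.ofReal (ν.real univ / 2 * t) := by
  have hFZ : ∀ x, ν.real (Iic x) = ν.real univ * F x := fun x => by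
    rw [hF, mul_inv_cancel_left₀ hZ.ne']
  have hsub : {x | wedge (F x) ≤ t} ⊆ {x | F x ≤ t / 4} ∪ {x | 1 - t / 4 ≤ F x} := by
    intro x hx
    simp only [mem_ofPred_eq, wedge, mem_union] at hx ⊢
    rcases abs_cases (F x - 1 / 2) with h | h
    · right; linarith
    · left; linarith
  have h1 : ν {x | F x ≤ t / 4} ≤ ENNReal.ofReal (ν.real univ * (t / 4)) := by
    refine measure_lower_le ν (measurableSet_le hFm measurable_const) fun x hx => ?_
    rw [← ofReal_measureReal, hFZ]
    exact ENNReal.ofReal_le_ofReal (mul_le_mul_of_nonneg_left hx hZ.le)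
  have h2 : ν {x | 1 - t / 4 ≤ F x} ≤ ENNReal.ofReal (ν.real univ * (t / 4)) := by
    refine measure_upper_le ν (measurableSet_le measurable_const hFm) fun x hx => ?_
    rw [← measure_congr (Ioi_ae_eq_Ici (μ := ν) (a := x)), ← ofReal_measureReal]
    refine ENNReal.ofReal_le_ofReal ?_
    rw [← compl_Iic, measureReal_compl measurableSet_Iic, hFZ]
    have := mul_le_mul_of_nonneg_left (show 1 - t / 4 ≤ F x from hx) hZ.le
    linarith
  by_cases ht : 0 ≤ t
  · refine (measure_mono hsub).trans ((measure_union_le _ _).trans ((add_le_add h1 h2).trans ?_))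
    rw [← ENNReal.ofReal_add (by positivity) (by positivity)]
    exact ENNReal.ofReal_le_ofReal (by linarith)
  · refine (measure_mono hsub).trans ((measure_union_le _ _).trans ((add_le_add h1 h2).trans ?_))
    have : ν.real univ * (t / 4) ≤ 0 := by nlinarith
    simp [ENNReal.ofReal_of_nonpos this]

lemma lintegral_rpow_neg_lt_top {X : Type*} [MeasurableSpace X] (ν : Measure X) [IsFiniteMeasure ν]
    {G : X → ℝ} (hG : Measurable G) (hG0 : ∀ x, 0 ≤ G x) {c : ℝ}
    (htail : ∀ t, ν {x | G x ≤ t} ≤ ENNReal.ofReal (c * t)) {s : ℝ} (hs0 : 0 < s) (hs1 : s < 1) :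
    ∫⁻ x, ENNReal.ofReal (G x ^ (-s)) ∂ν < ⊤ := by
  rw [lintegral_eq_lintegral_meas_le ν (ae_of_all _ fun x => Real.rpow_nonneg (hG0 x) _)
    (hG.pow_const _).aemeasurable, ← Ioc_union_Ioi_eq_Ioi (zero_le_one' ℝ)]
  refine (lintegral_union_le _ _ _).trans_lt (ENNReal.add_lt_top.2 ⟨?_, ?_⟩)
  · refine (lintegral_mono (g := fun _ => ν univ) fun t => measure_mono (subset_univ _)).trans_lt ?_
    simp
  · refine (setLIntegral_mono (g := fun t => ENNReal.ofReal (c * t ^ (-s⁻¹)))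
      (by fun_prop) fun t ht => (measure_mono ?_).trans (htail _)).trans_lt ?_
    · intro x hx
      have ht0 : (0 : ℝ) < t := zero_lt_one.trans ht
      rcases (hG0 x).eq_or_lt with h0 | h0
      -- the junk value `0 ^ (-s) = 0` is harmless: `G x = 0 ≤ t ^ (-s⁻¹)` holds anyway
      · simpa [← h0] using Real.rpow_nonneg ht0.le _
      · simp only [mem_ofPred_eq] at hx ⊢
        have := Real.rpow_le_rpow_of_nonpos ht0 hx (z := -s⁻¹) (by simpa using hs0.le)
        rwa [← Real.rpow_mul h0.le, neg_mul_neg, mul_inv_cancel₀ hs0.ne', Real.rpow_one] at this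
    · refine Integrable.lintegral_lt_top (Integrable.const_mul ?_ c)
      exact integrableOn_Ioi_rpow_of_lt (neg_lt_neg ((one_lt_inv₀ hs0).2 hs1)) one_pos

/-! ### Comparison of relative entropies -/

open Classical in
/-- Comparison of relative entropies with respect to `ν` and `G ν`, for a density `G ≤ 2` some
negative power of which is `ν`-integrable. -/
lemma relEnt_comparison {X : Type*} [MeasurableSpace X] (ν : Measure X) [IsFiniteMeasure ν]
    {G : X → ℝ} (hG : Measurable G) (hpos : ∀ᵐ x ∂ν, 0 < G x) (hle : ∀ x, G x ≤ 2)
    {s : ℝ} (hs0 : 0 < s) (hM : ∫⁻ x, ENNReal.ofReal (G x ^ (-s)) ∂ν < ⊤) :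
    ∃ C₂ : ℝ, ∀ μ : Measure X, IsProbabilityMeasure μ →
      relEnt μ ν - (C₂ : EReal) ≤ relEnt μ (ν.withDensity fun x => ENNReal.ofReal (G x)) ∧
      relEnt μ (ν.withDensity fun x => ENNReal.ofReal (G x)) ≤
        ((1 + s⁻¹ : ℝ) : EReal) * relEnt μ ν + (C₂ : EReal) := by
  set M := (∫⁻ x, ENNReal.ofReal (G x ^ (-s)) ∂ν).toReal with hMdef
  have hM0 : 0 ≤ M := ENNReal.toReal_nonneg
  have hlog2 : 0 < Real.log 2 := Real.log_pos one_lt_two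
  refine ⟨Real.log 2 + s⁻¹ * M, fun μ _ => ?_⟩
  set ν' := ν.withDensity fun x => ENNReal.ofReal (G x) with hν'
  have hGm : AEMeasurable (fun x => ENNReal.ofReal (G x)) ν := hG.ennreal_ofReal.aemeasurable
  have hne : ∀ᵐ x ∂ν, ENNReal.ofReal (G x) ≠ 0 := by
    filter_upwards [hpos] with x hx
    simpa using hx
  have hνν' : ν ≪ ν' := withDensity_absolutelyContinuous' hGm hne
  have hν'ν : ν' ≪ ν := withDensity_absolutelyContinuous _ _
  have hac : μ ≪ ν' ↔ μ ≪ ν := ⟨fun h => h.trans hν'ν, fun h => h.trans hνν'⟩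
  by_cases hμ : μ ≪ ν
  swap
  · have h1 : relEnt μ ν = ⊤ := by simp [relEnt, hμ]
    have h2 : relEnt μ ν' = ⊤ := by simp [relEnt, hac, hμ]
    rw [h1, h2, EReal.coe_mul_top_of_pos (by positivity), EReal.top_add_coe]
    exact ⟨le_top, le_top⟩
  -- the two log-likelihood ratios differ by `log G`
  have hllr : ∀ᵐ x ∂μ, llr μ ν' x = llr μ ν x - Real.log (G x) := by
    filter_upwards [hμ.ae_le (Measure.rnDeriv_withDensity_right μ ν hGm hne
      (ae_of_all _ fun x => ENNReal.ofReal_ne_top)), hμ.ae_le hpos, Measure.rnDeriv_pos hμ,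
      hμ.ae_le (Measure.rnDeriv_ne_top μ ν)] with x h1 h2 h3 h4
    simp only [llr]
    rw [h1, ENNReal.toReal_mul, ENNReal.toReal_inv, ENNReal.toReal_ofReal h2.le,
      Real.log_mul (inv_pos.2 h2).ne' (ENNReal.toReal_pos h3.ne' h4).ne', Real.log_inv]
    ring
  have hGμ : ∀ᵐ x ∂μ, 0 < G x := hμ.ae_le hpos
  have hlogle : ∀ᵐ x ∂μ, Real.log (G x) ≤ Real.log 2 := by
    filter_upwards [hGμ] with x hx using Real.log_le_log hx (hle x)
  have hLm : Measurable fun x => Real.log (G x) := Real.measurable_log.comp hG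
  -- `exp (-llr μ ν)` is the density `dν/dμ`; it controls the negative part of `llr μ ν`
  have hexp : Integrable (fun x => Real.exp (-llr μ ν x)) μ :=
    Measure.integrable_toReal_rnDeriv.congr (exp_neg_llr hμ).symm
  have hE1 : relEnt μ ν =
      if Integrable (llr μ ν) μ then ((∫ x, llr μ ν x ∂μ : ℝ) : EReal) else ⊤ := by
    unfold relEnt; simp [hμ]; rfl
  have hE2 : relEnt μ ν' =
      if Integrable (llr μ ν') μ then ((∫ x, llr μ ν' x ∂μ : ℝ) : EReal) else ⊤ := by
    unfold relEnt; simp [hac.2 hμ]; rfl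
  rw [hE1, hE2]
  constructor
  · by_cases hI' : Integrable (llr μ ν') μ
    swap
    · rw [if_neg hI']
      exact le_top
    have hI : Integrable (llr μ ν) μ := by
      refine ((hI'.abs.add (integrable_const (Real.log 2))).add hexp).mono'
        (measurable_llr μ ν).aestronglyMeasurable ?_
      filter_upwards [hllr, hlogle] with x h1 h2
      simp only [Pi.add_apply]
      rw [Real.norm_eq_abs, abs_le]
      have h3 := Real.add_one_le_exp (-llr μ ν x)
      have h4 := abs_nonneg (llr μ ν' x)
      have h5 := le_abs_self (llr μ ν' x)
      have h6 := Real.exp_pos (-llr μ ν x)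
      constructor <;> linarith
    rw [if_pos hI, if_pos hI', ← EReal.coe_sub, EReal.coe_le_coe_iff]
    have : ∫ x, llr μ ν x ∂μ ≤ ∫ x, (llr μ ν' x + Real.log 2) ∂μ := by
      refine integral_mono_ae hI (hI'.add (integrable_const _)) ?_
      filter_upwards [hllr, hlogle] with x h1 h2
      linarith
    rw [integral_add hI' (integrable_const _)] at this
    simp only [integral_const, probReal_univ, one_smul] at this
    have : 0 ≤ s⁻¹ * M := by positivity
    linarith
  · by_cases hI : Integrable (llr μ ν) μ
    swap
    · rw [if_neg hI, EReal.coe_mul_top_of_pos (by positivity), EReal.top_add_coe]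
      exact le_top
    set E : X → ℝ := fun x => Real.exp (-s * Real.log (G x) - llr μ ν x) with hE
    have hEm : Measurable E :=
      ((hLm.const_mul _).sub (measurable_llr μ ν)).exp
    have hEbound : ∫⁻ x, ENNReal.ofReal (E x) ∂μ ≤ ∫⁻ x, ENNReal.ofReal (G x ^ (-s)) ∂ν := by
      calc ∫⁻ x, ENNReal.ofReal (E x) ∂μ
          = ∫⁻ x, ν.rnDeriv μ x * ENNReal.ofReal (G x ^ (-s)) ∂μ := by
            refine lintegral_congr_ae ?_
            filter_upwards [exp_neg_llr hμ, hGμ, Measure.rnDeriv_ne_top ν μ] with x h1 h2 h3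
            rw [hE]
            dsimp only at h1 ⊢
            rw [sub_eq_add_neg, Real.exp_add, h1, Real.rpow_def_of_pos h2,
              mul_comm (-s), ENNReal.ofReal_mul (Real.exp_pos _).le, ENNReal.ofReal_toReal h3,
              mul_comm]
        _ = ∫⁻ x, ENNReal.ofReal (G x ^ (-s)) ∂(μ.withDensity (ν.rnDeriv μ)) := by
            rw [lintegral_withDensity_eq_lintegral_mul _ (Measure.measurable_rnDeriv ν μ)
              (hG.pow_const _).ennreal_ofReal]
            rfl
        _ ≤ _ := lintegral_mono' (Measure.withDensity_rnDeriv_le ν μ) le_rfl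
    have hEI : Integrable E μ := by
      refine ⟨hEm.aestronglyMeasurable, ?_⟩
      rw [hasFiniteIntegral_iff_ofReal (ae_of_all _ fun x => (Real.exp_pos _).le)]
      exact hEbound.trans_lt hM
    have hEle : ∫ x, E x ∂μ ≤ M := by
      rw [integral_eq_lintegral_of_nonneg_ae (ae_of_all _ fun x => (Real.exp_pos _).le)
        hEm.aestronglyMeasurable]
      exact ENNReal.toReal_mono hM.ne hEbound
    -- Young's inequality `t ≤ exp t` at `t = -s * log G - llr μ ν`
    have hY : ∀ x, -s * Real.log (G x) ≤ llr μ ν x + E x := fun x => by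
      have := Real.add_one_le_exp (-s * Real.log (G x) - llr μ ν x)
      simp only [hE]; linarith
    have hLI : Integrable (fun x => -s * Real.log (G x)) μ := by
      refine ((hI.abs.add hEI).add (integrable_const (s * Real.log 2))).mono'
        (hLm.const_mul _).aestronglyMeasurable ?_
      filter_upwards [hlogle] with x h2
      simp only [Pi.add_apply]
      rw [Real.norm_eq_abs, abs_le]
      have h3 := hY x
      have h4 := le_abs_self (llr μ ν x)
      have h5 := abs_nonneg (llr μ ν x)
      have h6 : 0 < E x := Real.exp_pos _
      have h7 := mul_le_mul_of_nonneg_left h2 hs0.le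
      have h8 := mul_pos hs0 hlog2
      constructor <;> linarith
    have hint : ∫ x, -s * Real.log (G x) ∂μ ≤ ∫ x, llr μ ν x ∂μ + M := by
      have := integral_mono hLI (hI.add hEI) hY
      simp only [Pi.add_apply] at this
      rw [integral_add hI hEI] at this
      linarith
    have heq : llr μ ν' =ᵐ[μ] fun x => llr μ ν x + s⁻¹ * (-s * Real.log (G x)) := by
      filter_upwards [hllr] with x hx
      rw [hx]; field_simp; ring
    have hI' : Integrable (llr μ ν') μ := (hI.add (hLI.const_mul s⁻¹)).congr heq.symm
    rw [if_pos hI, if_pos hI', ← EReal.coe_mul, ← EReal.coe_add, EReal.coe_le_coe_iff,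
      integral_congr_ae heq, integral_add hI (hLI.const_mul s⁻¹), integral_const_mul]
    have := mul_le_mul_of_nonneg_left hint (inv_pos.2 hs0).le
    linarith

/-! ### The reference measure -/

lemma measurable_of_convex {V : ℝ → ℝ≥0∞}
    (hconv : ∀ (a b : ℝ) (p q : ℝ≥0), p + q = 1 →
      V ((p : ℝ) * a + (q : ℝ) * b) ≤ (p : ℝ≥0∞) * V a + (q : ℝ≥0∞) * V b) : Measurable V := by
  refine measurable_of_Iic fun c => Set.OrdConnected.measurableSet ?_
  refine Convex.ordConnected (s := V ⁻¹' Iic c) fun a ha b hb p q hp hq hpq => ?_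
  lift p to ℝ≥0 using hp
  lift q to ℝ≥0 using hq
  have hpq' : p + q = 1 := by exact_mod_cast hpq
  refine (hconv a b p q hpq').trans ((add_le_add (mul_le_mul_right ha _)
    (mul_le_mul_right hb _)).trans ?_)
  rw [← add_mul, ← ENNReal.coe_add, hpq', ENNReal.coe_one, one_mul]

lemma measurable_negExp : Measurable negExp :=
  Measurable.ite (measurableSet_singleton _) measurable_const (by fun_prop)

lemma negExp_le_of_le {a : ℝ} {t : ℝ≥0∞} (h : ENNReal.ofReal a ≤ t) :
    negExp t ≤ ENNReal.ofReal (Real.exp (-a)) := by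
  unfold negExp
  split_ifs with ht
  · exact zero_le
  · refine ENNReal.ofReal_le_ofReal (Real.exp_le_exp.2 (neg_le_neg ?_))
    exact (ENNReal.ofReal_le_iff_le_toReal ht).1 h

/-- Convexity along `0 < R ≤ x`, where `V R > V 0 + 1`, forces `V x ≥ x / R`; below `R`
the stated bound is trivial. -/
lemma exists_linear_lower {V : ℝ → ℝ≥0∞}
    (hconv : ∀ (a b : ℝ) (p q : ℝ≥0), p + q = 1 →
      V ((p : ℝ) * a + (q : ℝ) * b) ≤ (p : ℝ≥0∞) * V a + (q : ℝ≥0∞) * V b)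
    (heven : ∀ η : ℝ, V (-η) = V η)
    (hfin : ∃ a b : ℝ, a < b ∧ ∀ η ∈ Ioo a b, V η ≠ ⊤)
    (htop : Tendsto V atTop (nhds ⊤)) :
    ∃ R : ℝ, 0 < R ∧ ∀ x : ℝ, 0 ≤ x → ENNReal.ofReal (x / R - 1) ≤ V x := by
  obtain ⟨a, b, hab, h⟩ := hfin
  have hm := h ((a + b) / 2) ⟨by linarith, by linarith⟩
  set m := (a + b) / 2
  have h0 : V 0 ≠ ⊤ := by
    have h2 : (2⁻¹ : ℝ≥0) + 2⁻¹ = 1 := by ext; norm_num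
    have := hconv m (-m) 2⁻¹ 2⁻¹ h2
    rw [heven, ← add_mul, ← ENNReal.coe_add, h2] at this
    refine ne_top_of_le_ne_top hm ?_
    simpa using this
  have hlt : V 0 + 1 < ⊤ := by simpa [lt_top_iff_ne_top] using h0
  obtain ⟨R, hR, hR0⟩ := ((htop.eventually (lt_mem_nhds hlt)).and (eventually_gt_atTop 0)).exists
  refine ⟨R, hR0, fun x hx => ?_⟩
  rcases le_total x R with hxR | hxR
  · rw [ENNReal.ofReal_of_nonpos (by rw [sub_nonpos]; exact (div_le_one hR0).2 hxR)]
    exact zero_le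
  by_cases hVx : V x = ⊤
  · simp [hVx]
  have hx0 : 0 < x := hR0.trans_le hxR
  have hq : 0 ≤ 1 - R / x := by rw [sub_nonneg]; exact (div_le_one hx0).2 hxR
  obtain ⟨p, hp⟩ : ∃ p : ℝ≥0, (p : ℝ) = R / x := ⟨⟨R / x, by positivity⟩, rfl⟩
  obtain ⟨q, hq⟩ : ∃ q : ℝ≥0, (q : ℝ) = 1 - R / x := ⟨⟨1 - R / x, hq⟩, rfl⟩
  have key := hconv x 0 p q (by ext; push_cast; rw [hp, hq]; ring)
  rw [hp, mul_zero, add_zero, div_mul_cancel₀ R hx0.ne'] at key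
  have key2 := hR.le.trans key
  lift V x to ℝ≥0 using hVx with vx
  lift V 0 to ℝ≥0 using h0 with v0
  have key3 : v0 + 1 ≤ p * vx + q * v0 := by
    exact_mod_cast key2
  have key4 : (v0 : ℝ) + 1 ≤ R / x * vx + (1 - R / x) * v0 := by
    rw [← hq, ← hp]; exact_mod_cast key3
  refine ENNReal.ofReal_le_of_le_toReal ?_
  rw [ENNReal.coe_toReal]
  have h5 : 1 ≤ R / x * vx := by
    have : 0 ≤ R / x * v0 := by positivity
    linarith
  rw [div_mul_eq_mul_div, one_le_div hx0] at h5
  have : x / R ≤ vx := (div_le_iff₀' hR0).2 h5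
  linarith

lemma lintegral_negExp_lt_top {V : ℝ → ℝ≥0∞}
    (hconv : ∀ (a b : ℝ) (p q : ℝ≥0), p + q = 1 →
      V ((p : ℝ) * a + (q : ℝ) * b) ≤ (p : ℝ≥0∞) * V a + (q : ℝ≥0∞) * V b)
    (heven : ∀ η : ℝ, V (-η) = V η)
    (hfin : ∃ a b : ℝ, a < b ∧ ∀ η ∈ Ioo a b, V η ≠ ⊤)
    (htop : Tendsto V atTop (nhds ⊤)) :
    ∫⁻ η, negExp (V η) < ⊤ := by
  obtain ⟨R, hR, h⟩ := exists_linear_lower hconv heven hfin htop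
  have hi : 0 < R⁻¹ := inv_pos.2 hR
  rw [← setLIntegral_univ, ← Iic_union_Ioi (a := (0 : ℝ))]
  refine (lintegral_union_le _ _ _).trans_lt (ENNReal.add_lt_top.2 ⟨?_, ?_⟩)
  · refine (setLIntegral_mono
      (g := fun x => ENNReal.ofReal (Real.exp 1 * Real.exp (R⁻¹ * x))) (by fun_prop) ?_).trans_lt
      ((integrableOn_exp_mul_Iic hi 0).const_mul _).lintegral_lt_top
    intro x hx
    rw [← heven, ← Real.exp_add]
    refine (negExp_le_of_le (h (-x) (by simpa using hx))).trans (le_of_eq ?_)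
    congr 2; ring
  · refine (setLIntegral_mono
      (g := fun x => ENNReal.ofReal (Real.exp 1 * Real.exp (-R⁻¹ * x))) (by fun_prop) ?_).trans_lt
      ((integrableOn_exp_mul_Ioi (neg_lt_zero.2 hi) 0).const_mul _).lintegral_lt_top
    intro x hx
    rw [← Real.exp_add]
    refine (negExp_le_of_le (h x (le_of_lt hx))).trans (le_of_eq ?_)
    congr 2; ring

lemma lintegral_negExp_pos {V : ℝ → ℝ≥0∞} (hV : Measurable V)
    (hfin : ∃ a b : ℝ, a < b ∧ ∀ η ∈ Ioo a b, V η ≠ ⊤) : 0 < ∫⁻ η, negExp (V η) := by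
  obtain ⟨a, b, hab, h⟩ := hfin
  refine (lintegral_pos_iff_support (measurable_negExp.comp hV)).2
    (lt_of_lt_of_le (by simpa using hab) (measure_mono (s := Ioo a b) fun x hx => ?_))
  simp [negExp, h x hx, Real.exp_pos]

lemma expNegE_wedgeNorm (V : ℝ → ℝ≥0∞) (η : ℝ) :
    expNegE (wedgeNorm V η) = negExp (V η) * ENNReal.ofReal (wedge (Fcdf V η)) := by
  unfold wedgeNorm negExp
  by_cases h1 : V η = ⊤
  · simp [h1, expNegE]
  by_cases h2 : wedge (Fcdf V η) ≤ 0
  · simp [h2, expNegE, ENNReal.ofReal_of_nonpos h2]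
  · simp only [h1, h2, or_self, if_false, expNegE, EReal.coe_ne_top, EReal.coe_ne_bot,
      EReal.toReal_coe]
    push Not at h2
    rw [← ENNReal.ofReal_mul (Real.exp_pos _).le, neg_sub, sub_eq_add_neg, Real.exp_add,
      Real.exp_log h2, mul_comm]

/-- Let `V : ℝ → [0,∞]` be convex, even, finite on a nonempty open interval,
with `V η → ∞` as `η → ±∞`, and let `V̄` be its wedge-normalization.  For every `C₁ > 2` there
is `C₂ ∈ ℝ` such that for every probability measure `μ` on `ℝ`:
`𝓗(μ, e^{-V} λ) - C₂ ≤ 𝓗(μ, e^{-V̄} λ) ≤ C₁ 𝓗(μ, e^{-V} λ) + C₂`. -/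
theorem relEnt_wedgeNorm_comparison (V : ℝ → ℝ≥0∞)
    (hconv : ∀ (a b : ℝ) (p q : ℝ≥0), p + q = 1 →
      V ((p : ℝ) * a + (q : ℝ) * b) ≤ (p : ℝ≥0∞) * V a + (q : ℝ≥0∞) * V b)
    (heven : ∀ η : ℝ, V (-η) = V η)
    (hfin : ∃ a b : ℝ, a < b ∧ ∀ η ∈ Ioo a b, V η ≠ ⊤)
    (htop : Tendsto V atTop (nhds ⊤)) (hbot : Tendsto V atBot (nhds ⊤))
    (C₁ : ℝ) (hC₁ : 2 < C₁) :
    ∃ C₂ : ℝ, ∀ μ : Measure ℝ, IsProbabilityMeasure μ →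
      relEnt μ (volume.withDensity fun η => negExp (V η)) - (C₂ : EReal) ≤
          relEnt μ (volume.withDensity fun η => expNegE (wedgeNorm V η)) ∧
        relEnt μ (volume.withDensity fun η => expNegE (wedgeNorm V η)) ≤
          (C₁ : EReal) * relEnt μ (volume.withDensity fun η => negExp (V η)) + (C₂ : EReal) := by
  have hV := measurable_of_convex hconv
  have hn : Measurable fun η => negExp (V η) := measurable_negExp.comp hV
  set ν : Measure ℝ := volume.withDensity fun η => negExp (V η) with hν
  have huniv : ν univ = ∫⁻ η, negExp (V η) := by
    rw [hν, withDensity_apply _ MeasurableSet.univ, setLIntegral_univ]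
  have hlt := lintegral_negExp_lt_top hconv heven hfin htop
  have : IsFiniteMeasure ν := ⟨huniv ▸ hlt⟩
  have hZ : 0 < ν.real univ :=
    ENNReal.toReal_pos (huniv ▸ (lintegral_negExp_pos hV hfin).ne') (measure_ne_top _ _)
  have hF : ∀ x, Fcdf V x = (ν.real univ)⁻¹ * ν.real (Iic x) := fun x => by
    rw [Fcdf, Znorm, Measure.real, Measure.real, huniv, hν, withDensity_apply _ measurableSet_Iic]
  have hFmono : Monotone (Fcdf V) := fun x y hxy => by
    rw [hF, hF]
    exact mul_le_mul_of_nonneg_left (measureReal_mono (Iic_subset_Iic.2 hxy)) (inv_pos.2 hZ).le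
  have hF0 : ∀ x, 0 ≤ Fcdf V x := fun x => by rw [hF]; positivity
  have hF1 : ∀ x, Fcdf V x ≤ 1 := fun x => by
    rw [hF, inv_mul_le_one₀ hZ]
    exact measureReal_mono (subset_univ _)
  have hGm : Measurable fun x => wedge (Fcdf V x) := by
    have := hFmono.measurable
    unfold wedge
    fun_prop
  have hG0 : ∀ x, 0 ≤ wedge (Fcdf V x) := fun x => by
    have : |Fcdf V x - 1 / 2| ≤ 1 / 2 := abs_le.2 ⟨by linarith [hF0 x], by linarith [hF1 x]⟩
    unfold wedge
    linarith
  have hG2 : ∀ x, wedge (Fcdf V x) ≤ 2 := fun x => by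
    unfold wedge
    linarith [abs_nonneg (Fcdf V x - 1 / 2)]
  have htail : ∀ t, ν {x | wedge (Fcdf V x) ≤ t} ≤ ENNReal.ofReal (ν.real univ / 2 * t) :=
    fun t => measure_wedge_le ν _ hZ hF hFmono.measurable
  have hpos : ∀ᵐ x ∂ν, 0 < wedge (Fcdf V x) := by
    rw [ae_iff]
    simpa using htail 0
  have hs0 : 0 < (C₁ - 1)⁻¹ := inv_pos.2 (by linarith)
  -- `2 < C₁` enters here: it makes `g ^ (-(C₁ - 1)⁻¹)` integrable on `[0, 1]`
  have hs1 : (C₁ - 1)⁻¹ < 1 := inv_lt_one_of_one_lt₀ (by linarith)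
  have hν' : (volume.withDensity fun η => expNegE (wedgeNorm V η)) =
      ν.withDensity fun x => ENNReal.ofReal (wedge (Fcdf V x)) := by
    rw [hν, ← withDensity_mul _ hn hGm.ennreal_ofReal]
    congr 1
    ext η
    exact expNegE_wedgeNorm V η
  obtain ⟨C₂, h⟩ := relEnt_comparison ν hGm hpos hG2 hs0
    (lintegral_rpow_neg_lt_top ν hGm hG0 htail hs0 hs1)
  rw [inv_inv, add_sub_cancel] at h
  rw [hν']
  exact ⟨C₂, h⟩
end
end

section
/- Let X be a Polish space with its Borel σ-algebra, let ν be a finite nonzero measure on X, and let C ∈ ℝ. If (μ_n) is a sequence of probability measures on X with 𝓗(μ_n, ν) ≤ C for all n, and μ_n converges weakly to a probability measure μ, then μ_n(A) → μ(A) for every Borel set A ⊆ X. -/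
/-!
The bound `𝓗(μ, ν) ≤ C` makes the measures `μ` uniformly absolutely continuous with respect to `ν`.
Testing the relative entropy against the function `s · 1_E`, as in the Donsker–Varadhan inequality,
gives `s μ(E) ≤ 𝓗(μ, ν) + ν(X) + e ^ s ν(E)` for every real `s`; taking `s` large and then `ν(E)`
small makes `μ(E)` small, at a rate depending only on `C` and `ν(X)`.

A Borel set `A` contains a closed set `F` with `ν(A \ F)` as small as desired, so `μ n A` exceeds
`μ n F` by at most `ε`, uniformly in `n`. The portmanteau theorem for `F` then yields
`limsup μ n A ≤ μlim F + ε ≤ μlim A + ε`. The same bound for the complement of `A` gives the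
matching lower bound on the `liminf`.
-/

open MeasureTheory Filter

noncomputable section

/-- An entropy inequality of Donsker–Varadhan type for the test function `s · 1_E`. -/
lemma mul_measureReal_le_integral_llr_add {X : Type*} [MeasurableSpace X] {μ ν : Measure X}
    [IsProbabilityMeasure μ] [IsFiniteMeasure ν] (hac : μ ≪ ν)
    (hint : Integrable (fun x => Real.log (μ.rnDeriv ν x).toReal) μ) (s : ℝ)
    {E : Set X} (hE : MeasurableSet E) :
    s * μ.real E ≤ (∫ x, Real.log (μ.rnDeriv ν x).toReal ∂μ) + ν.real Set.univ
      + Real.exp s * ν.real E := by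
  have hI : Integrable (E.indicator fun _ => s) μ := (integrable_const s).indicator hE
  have hJ : Integrable (E.indicator fun _ => Real.exp s) ν := (integrable_const _).indicator hE
  have hφ := hint.sub hI
  have key : ∫ x, -(1 + E.indicator (fun _ => Real.exp s) x) ∂ν ≤
      ∫ x, (μ.rnDeriv ν x).toReal •
        (Real.log (μ.rnDeriv ν x).toReal - E.indicator (fun _ => s) x) ∂ν := by
    refine integral_mono ((integrable_const 1).add hJ).neg
      ((integrable_rnDeriv_smul_iff hac).mpr hφ) fun x => ?_
    -- The pointwise bound `y (log y - t) ≥ - e ^ t` for `y ≥ 0`, from `log (e ^ t / y) ≤ e ^ t / y`.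
    have hpt : ∀ y t : ℝ, 0 ≤ y → -Real.exp t ≤ y * (Real.log y - t) := by
      intro y t hy
      rcases hy.eq_or_lt with rfl | hy
      · simp [Real.exp_nonneg]
      · have h := Real.log_le_self (x := Real.exp t / y) (by positivity)
        rw [Real.log_div (Real.exp_ne_zero _) hy.ne', Real.log_exp, le_div_iff₀ hy] at h
        linarith
    have h := hpt (μ.rnDeriv ν x).toReal (E.indicator (fun _ => s) x) ENNReal.toReal_nonneg
    by_cases hx : x ∈ E
    · simp only [hx, Set.indicator_of_mem, smul_eq_mul] at h ⊢
      linarith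
    · simp only [hx, not_false_eq_true, Set.indicator_of_notMem, smul_eq_mul, Real.exp_zero]
        at h ⊢
      linarith
  rw [integral_rnDeriv_smul hac, integral_sub hint hI, integral_neg,
    integral_add (integrable_const 1) hJ, integral_indicator_const _ hE,
    integral_indicator_const _ hE] at key
  simp only [integral_const, smul_eq_mul, mul_one] at key
  linarith

/-- Relative-entropy level sets are uniformly absolutely continuous with respect to `ν`. -/
lemma exists_pos_measure_le_of_relEnt_le {X : Type*} [MeasurableSpace X] (ν : Measure X)
    [IsFiniteMeasure ν] (C : ℝ) {ε : ℝ} (hε : 0 < ε) :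
    ∃ δ : ℝ, 0 < δ ∧ ∀ μ : Measure X, IsProbabilityMeasure μ → relEnt μ ν ≤ (C : EReal) →
      ∀ E : Set X, MeasurableSet E → ν E < ENNReal.ofReal δ → μ E ≤ ENNReal.ofReal ε := by
  set M : ℝ := |C| + ν.real Set.univ + 1 with hM
  have hM0 : 0 < M := by positivity
  -- With `s = M / ε` and `δ = e ^ (-s)` the entropy inequality reads `s μ(E) ≤ M`.
  refine ⟨Real.exp (-(M / ε)), Real.exp_pos _, fun μ _ hent E hE hνE => ?_⟩
  unfold relEnt at hent
  split_ifs at hent with h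
  · have hent' := EReal.coe_le_coe_iff.mp hent
    have h1 := mul_measureReal_le_integral_llr_add h.1 h.2 (M / ε) hE
    have h2 : ν.real E ≤ Real.exp (-(M / ε)) :=
      ENNReal.toReal_le_of_le_ofReal (Real.exp_nonneg _) hνE.le
    have h3 : Real.exp (M / ε) * ν.real E ≤ 1 := by
      calc _ ≤ Real.exp (M / ε) * Real.exp (-(M / ε)) := by gcongr
        _ = 1 := by rw [← Real.exp_add]; simp
    have h4 : M / ε * μ.real E ≤ M := by linarith [le_abs_self C]
    have h5 : μ.real E ≤ ε := by
      rw [div_mul_eq_mul_div, div_le_iff₀ hε] at h4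
      exact le_of_mul_le_mul_left h4 hM0
    exact (ENNReal.le_ofReal_iff_toReal_le (measure_ne_top μ E) hε.le).mpr h5
  · simp at hent

/-- On a Polish space `X` with a finite nonzero measure `ν`, if the
probability measures `μ n` lie in a relative-entropy level set (`𝓗(μ n, ν) ≤ C`) and
converge weakly to a probability measure `μlim`, then `μ n A → μlim A` for every
Borel set `A`. -/
theorem tendsto_measure_of_weak_of_relEnt_le
    {X : Type*} [MeasurableSpace X] [TopologicalSpace X] [PolishSpace X] [BorelSpace X]
    (ν : Measure X) [IsFiniteMeasure ν] (hν : ν ≠ 0) (C : ℝ)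
    (μ : ℕ → Measure X) (hμ : ∀ n, IsProbabilityMeasure (μ n))
    (hent : ∀ n, relEnt (μ n) ν ≤ (C : EReal))
    (μlim : Measure X) [IsProbabilityMeasure μlim]
    (hweak : ∀ f : BoundedContinuousFunction X ℝ,
      Tendsto (fun n => ∫ x, f x ∂(μ n)) atTop (nhds (∫ x, f x ∂μlim))) :
    ∀ A : Set X, MeasurableSet A → Tendsto (fun n => μ n A) atTop (nhds (μlim A)) := by
  let P : ℕ → ProbabilityMeasure X := fun n => ⟨μ n, hμ n⟩
  let Q : ProbabilityMeasure X := ⟨μlim, inferInstance⟩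
  have hlim : Tendsto P atTop (nhds Q) :=
    ProbabilityMeasure.tendsto_iff_forall_integral_tendsto.mpr hweak
  have hsup : ∀ A : Set X, MeasurableSet A → limsup (fun n => μ n A) atTop ≤ μlim A := by
    intro A hA
    refine ENNReal.le_of_forall_pos_le_add fun ε hε _ => ?_
    obtain ⟨δ, hδ, hμδ⟩ := exists_pos_measure_le_of_relEnt_le ν C (NNReal.coe_pos.mpr hε)
    let := TopologicalSpace.upgradeIsCompletelyMetrizable X
    obtain ⟨F, hFA, hF, hνF⟩ := hA.exists_isClosed_sdiff_lt (measure_ne_top ν A)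
      (ENNReal.ofReal_pos.mpr hδ).ne'
    have hle : ∀ n, μ n A ≤ μ n F + ε := fun n => by
      have h := hμδ (μ n) (hμ n) (hent n) _ (hA.diff hF.measurableSet) hνF
      rw [ENNReal.ofReal_coe_nnreal] at h
      calc μ n A ≤ μ n F + μ n (A \ F) := by
            rw [← Set.union_sdiff_cancel hFA]
            simpa using measure_union_le (μ := μ n) F (A \ F)
        _ ≤ _ := by gcongr
    calc limsup (fun n => μ n A) atTop
        ≤ limsup (fun n => μ n F + ε) atTop := limsup_le_limsup (Eventually.of_forall hle)
      _ = limsup (fun n => μ n F) atTop + ε :=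
          limsup_add_const atTop _ _ (by isBoundedDefault) (by isBoundedDefault)
      _ ≤ μlim F + ε := by
          gcongr
          exact ProbabilityMeasure.limsup_measure_closed_le_of_tendsto hlim hF
      _ ≤ μlim A + ε := by gcongr
  intro A hA
  exact tendsto_of_le_liminf_of_limsup_le
    (le_measure_liminf_of_limsup_measure_compl_le hA (hsup Aᶜ hA.compl)) (hsup A hA)
end
end

section
/- With the above finite-volume Gibbs setup over E = ℤ, suppose ψ₁, ψ₂ : B → ℤ are two boundary conditions with ψ₁(b) ≤ ψ₂(b) for all b ∈ B, and for i ∈ {1,2} let H_i denote the Hamiltonian with boundary condition ψ_i and assume Z_i = Σ_{φ : Λ → ℤ} e^{−H_i(φ)} ∈ (0, ∞); let μ_i be the probability measure on ℤ^Λ with μ_i({φ}) = Z_i^{−1} e^{−H_i(φ)}. Then μ₁ is stochastically dominated by μ₂: there exists a probability measure ρ on ℤ^Λ × ℤ^Λ whose first marginal is μ₁ and whose second marginal is μ₂, such that ρ({(φ₁, φ₂) : φ₁(x) ≤ φ₂(x) for all x ∈ Λ}) = 1. -/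
/-!
Convexity of the potentials and `ψ₁ ≤ ψ₂` give the Holley condition
`f₁ φ * f₂ χ ≤ f₁ (φ ⊓ χ) * f₂ (φ ⊔ χ)` for the Boltzmann weights `fᵢ = e^{-Hᵢ}`
(`expNegE_gibbsH_mul_le`): on each edge the increments of `φ ⊓ χ` and `φ ⊔ χ` lie between those of
`φ` and `χ` and have the same sum.

It remains to couple monotonically two probability weights on `ℤⁿ` satisfying the Holley condition
(`CouplesMonotonically`). On a linear order, the condition says that `f₂ / f₁` is
nondecreasing, so in the maximal coupling, which keeps the common mass `min f₁ f₂` on the diagonal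
and couples the excesses `f₁ - f₂` and `f₂ - f₁` independently, the excess mass is automatically
ordered (`couplesMonotonically_of_linearOrder`). The property passes to products
(`CouplesMonotonically.prod`): by the four functions theorem the marginals on the first factor again
satisfy the Holley condition, hence have a monotone coupling, and given first coordinates `a ≤ a'`
the conditional weights on the second factor satisfy it as well, so they can be coupled in turn.
-/


open MeasureTheory
open scoped ENNReal

noncomputable section

/-- Extension of `φ : Λ → ℤ` to the whole vertex set by the boundary condition `ψ`. -/
def extBC {ι : Type*} [DecidableEq ι] (Λ : Finset ι) (ψ : ι → ℤ) (φ : ↥Λ → ℤ) : ι → ℤ :=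
  fun v => if h : v ∈ Λ then φ ⟨v, h⟩ else ψ v

/-- The Hamiltonian `H(φ) = Σ_{(x,y) ∈ 𝔈} V_{(x,y)} (φ y - φ x)`, where `φ` is extended by
the boundary condition `ψ` off `Λ`. -/
def gibbsH {ι : Type*} [DecidableEq ι] (Λ : Finset ι) (𝔈 : Finset (ι × ι))
    (W : ι × ι → ℝ → EReal) (ψ : ι → ℤ) (φ : ↥Λ → ℤ) : EReal :=
  ∑ e ∈ 𝔈, W e ((extBC Λ ψ φ e.2 - extBC Λ ψ φ e.1 : ℤ) : ℝ)

/-- The partition function `Z = Σ_{φ : Λ → ℤ} e^{-H(φ)}`. -/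
def gibbsZ {ι : Type*} [DecidableEq ι] (Λ : Finset ι) (𝔈 : Finset (ι × ι))
    (W : ι × ι → ℝ → EReal) (ψ : ι → ℤ) : ℝ≥0∞ :=
  ∑' φ : ↥Λ → ℤ, expNegE (gibbsH Λ 𝔈 W ψ φ)

/-! ### Monotone couplings from the Holley condition -/

/-- Any two probability weights on `α` satisfying the Holley condition are the marginals of a weight
`g` on `α × α` supported on `{(a, b) | a ≤ b}`. -/
def CouplesMonotonically (α : Type*) [Lattice α] : Prop :=
  ∀ f₁ f₂ : α → ℝ≥0∞, ∑' a, f₁ a = 1 → ∑' a, f₂ a = 1 →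
    (∀ a b, f₁ a * f₂ b ≤ f₁ (a ⊓ b) * f₂ (a ⊔ b)) →
    ∃ g : α → α → ℝ≥0∞, (∀ a, ∑' b, g a b = f₁ a) ∧ (∀ b, ∑' a, g a b = f₂ b) ∧
      ∀ a b, g a b ≠ 0 → a ≤ b

open scoped FinsetFamily in
/-- The four functions theorem for infinite sums over a distributive lattice. -/
lemma four_functions_tsum {α : Type*} [DistribLattice α] {f₁ f₂ f₃ f₄ : α → ℝ≥0∞}
    (h₁ : ∀ a, f₁ a ≠ ⊤) (h₂ : ∀ a, f₂ a ≠ ⊤) (h₃ : ∀ a, f₃ a ≠ ⊤) (h₄ : ∀ a, f₄ a ≠ ⊤)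
    (h : ∀ a b, f₁ a * f₂ b ≤ f₃ (a ⊓ b) * f₄ (a ⊔ b)) :
    (∑' a, f₁ a) * ∑' a, f₂ a ≤ (∑' a, f₃ a) * ∑' a, f₄ a := by
  classical
  lift f₁ to α → NNReal using h₁
  lift f₂ to α → NNReal using h₂
  lift f₃ to α → NNReal using h₃
  lift f₄ to α → NNReal using h₄
  rw [ENNReal.tsum_eq_iSup_sum, ENNReal.tsum_eq_iSup_sum (f := fun a => (f₂ a : ℝ≥0∞)),
    ENNReal.iSup_mul]
  refine iSup_le fun s => ?_
  rw [ENNReal.mul_iSup]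
  refine iSup_le fun t => ?_
  have key := four_functions_theorem f₁ f₂ f₃ f₄ (fun _ => zero_le) (fun _ => zero_le)
    (fun _ => zero_le) (fun _ => zero_le) (fun a b => by have := h a b; beta_reduce at this; exact_mod_cast this) s t
  calc _ ≤ (∑ a ∈ s ⊼ t, (f₃ a : ℝ≥0∞)) * ∑ a ∈ s ⊻ t, (f₄ a : ℝ≥0∞) := by exact_mod_cast key
    _ ≤ _ := mul_le_mul' (ENNReal.sum_le_tsum _) (ENNReal.sum_le_tsum _)

/-- The maximal coupling `min f₁ f₂` on the diagonal plus the independent coupling of the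
excesses is monotone, because `f₂ / f₁` is nondecreasing. -/
lemma couplesMonotonically_of_linearOrder (α : Type*) [LinearOrder α] :
    CouplesMonotonically α := by
  intro f₁ f₂ h₁ h₂ h
  have s₁ : ∀ a, min (f₁ a) (f₂ a) + (f₁ a - f₂ a) = f₁ a := fun a => by
    rcases le_total (f₁ a) (f₂ a) with hle | hle
    · rw [min_eq_left hle, tsub_eq_zero_of_le hle, add_zero]
    · rw [min_eq_right hle, add_tsub_cancel_of_le hle]
  have s₂ : ∀ a, min (f₁ a) (f₂ a) + (f₂ a - f₁ a) = f₂ a := fun a => by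
    rcases le_total (f₁ a) (f₂ a) with hle | hle
    · rw [min_eq_left hle, add_tsub_cancel_of_le hle]
    · rw [min_eq_right hle, tsub_eq_zero_of_le hle, add_zero]
  -- Both excesses have the same total mass `D`, the total variation distance.
  obtain ⟨D, hD⟩ : ∃ D, ∑' a, (f₁ a - f₂ a) = D := ⟨_, rfl⟩
  have hD_top : D ≠ ⊤ := by
    rw [← hD]
    refine ne_top_of_le_ne_top (b := 1) (by simp) ?_
    rw [← h₁]
    exact ENNReal.tsum_le_tsum fun a => tsub_le_self
  have hD' : ∑' a, (f₂ a - f₁ a) = D := by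
    have e : ∑' a, min (f₁ a) (f₂ a) + ∑' a, (f₂ a - f₁ a)
        = ∑' a, min (f₁ a) (f₂ a) + ∑' a, (f₁ a - f₂ a) := by
      rw [← ENNReal.tsum_add, ← ENNReal.tsum_add, tsum_congr s₁, tsum_congr s₂, h₁, h₂]
    have hm : ∑' a, min (f₁ a) (f₂ a) ≠ ⊤ := by
      refine ne_top_of_le_ne_top (b := 1) (by simp) ?_
      rw [← h₁]
      exact ENNReal.tsum_le_tsum fun a => min_le_left _ _
    rw [← hD]
    exact (ENNReal.add_right_inj hm).1 e
  have hcancel : ∀ x, x ≤ D → x * D⁻¹ * D = x := fun x hx => by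
    rcases eq_or_ne D 0 with h0 | h0
    · simp [h0, nonpos_iff_eq_zero.1 (h0 ▸ hx)]
    · rw [mul_assoc, ENNReal.inv_mul_cancel h0 hD_top, mul_one]
  refine ⟨fun a b => (if a = b then min (f₁ a) (f₂ a) else 0)
    + (f₁ a - f₂ a) * D⁻¹ * (f₂ b - f₁ b), fun a => ?_, fun b => ?_, fun a b hab => ?_⟩
  · rw [ENNReal.tsum_add, ENNReal.tsum_mul_left, hD', tsum_ite_eq' a,
      hcancel _ (hD ▸ ENNReal.le_tsum a), s₁]
  · have e : ∀ a, (f₁ a - f₂ a) * D⁻¹ * (f₂ b - f₁ b)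
        = ((f₂ b - f₁ b) * D⁻¹) * (f₁ a - f₂ a) := fun a => by ring
    rw [ENNReal.tsum_add, tsum_congr e, ENNReal.tsum_mul_left, hD,
      tsum_ite_eq b (fun a => min (f₁ a) (f₂ a)), hcancel _ (hD' ▸ ENNReal.le_tsum b), s₂]
  · by_contra! hlt
    refine hab ?_
    simp only [hlt.ne', if_false, zero_add]
    -- Excess mass at `a` for `f₁` and at `b < a` for `f₂` contradicts the Holley condition at `(a, b)`.
    by_contra hne
    have ha : f₂ a < f₁ a := by
      rw [← tsub_pos_iff_lt, pos_iff_ne_zero]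
      rintro h0
      simp [h0] at hne
    have hb : f₁ b < f₂ b := by
      rw [← tsub_pos_iff_lt, pos_iff_ne_zero]
      rintro h0
      simp [h0] at hne
    have := h a b
    rw [inf_eq_right.2 hlt.le, sup_eq_left.2 hlt.le, mul_comm (f₁ b)] at this
    exact absurd this (not_le.2 (ENNReal.mul_lt_mul ha hb))

/-- The coupling has the form `G a a' * K a a' b b'`, where `G` couples the marginals on `α` and
`K a a'` couples the conditional weights on `β` given first coordinates `a` and `a'`. -/
lemma CouplesMonotonically.prod {α β : Type*} [Lattice α] [DistribLattice β]
    (hα : CouplesMonotonically α) (hβ : CouplesMonotonically β) :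
    CouplesMonotonically (α × β) := by
  intro f₁ f₂ h₁ h₂ h
  have hfin₁ : ∀ a, f₁ a ≠ ⊤ := ENNReal.ne_top_of_tsum_ne_top (by simp [h₁])
  have hfin₂ : ∀ a, f₂ a ≠ ⊤ := ENNReal.ne_top_of_tsum_ne_top (by simp [h₂])
  rw [ENNReal.tsum_prod'] at h₁ h₂
  obtain ⟨F₁, hF₁⟩ : ∃ F : α → ℝ≥0∞, ∀ a, ∑' b, f₁ (a, b) = F a := ⟨_, fun _ => rfl⟩
  obtain ⟨F₂, hF₂⟩ : ∃ F : α → ℝ≥0∞, ∀ a, ∑' b, f₂ (a, b) = F a := ⟨_, fun _ => rfl⟩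
  simp only [hF₁] at h₁
  simp only [hF₂] at h₂
  have hF₁top : ∀ a, F₁ a ≠ ⊤ := ENNReal.ne_top_of_tsum_ne_top (by simp [h₁])
  have hF₂top : ∀ a, F₂ a ≠ ⊤ := ENNReal.ne_top_of_tsum_ne_top (by simp [h₂])
  obtain ⟨G, hG₁, hG₂, hGle⟩ := hα F₁ F₂ h₁ h₂ fun a a' => by
    simp only [← hF₁, ← hF₂]
    exact four_functions_tsum (fun _ => hfin₁ _) (fun _ => hfin₂ _) (fun _ => hfin₁ _)
      (fun _ => hfin₂ _) fun b b' => h (a, b) (a', b')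
  have hG0₁ : ∀ a a', G a a' ≠ 0 → F₁ a ≠ 0 := fun a a' hne h0 => by
    rw [← hG₁, ENNReal.tsum_eq_zero] at h0
    exact hne (h0 a')
  have hG0₂ : ∀ a a', G a a' ≠ 0 → F₂ a' ≠ 0 := fun a a' hne h0 => by
    rw [← hG₂, ENNReal.tsum_eq_zero] at h0
    exact hne (h0 a)
  have hK : ∀ a a', ∃ k : β → β → ℝ≥0∞, G a a' ≠ 0 →
      (∀ b, ∑' b', k b b' = (F₁ a)⁻¹ * f₁ (a, b)) ∧
      (∀ b', ∑' b, k b b' = (F₂ a')⁻¹ * f₂ (a', b')) ∧ ∀ b b', k b b' ≠ 0 → b ≤ b' := by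
    intro a a'
    by_cases hne : G a a' = 0
    · exact ⟨fun _ _ => 0, fun hh => absurd hne hh⟩
    obtain ⟨k, hk⟩ := hβ (fun b => (F₁ a)⁻¹ * f₁ (a, b)) (fun b' => (F₂ a')⁻¹ * f₂ (a', b'))
      (by rw [ENNReal.tsum_mul_left, hF₁, ENNReal.inv_mul_cancel (hG0₁ _ _ hne) (hF₁top _)])
      (by rw [ENNReal.tsum_mul_left, hF₂, ENNReal.inv_mul_cancel (hG0₂ _ _ hne) (hF₂top _)])
      (fun b b' => by
        simp only [mul_mul_mul_comm _ (f₁ _)]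
        have := h (a, b) (a', b')
        simp only [Prod.mk_inf_mk, Prod.mk_sup_mk, inf_eq_left.2 (hGle _ _ hne),
          sup_eq_right.2 (hGle _ _ hne)] at this
        gcongr)
    exact ⟨k, fun _ => hk⟩
  choose K hK using hK
  refine ⟨fun p q => G p.1 q.1 * K p.1 q.1 p.2 q.2, fun p => ?_, fun q => ?_, fun p q hpq => ?_⟩
  · rw [ENNReal.tsum_prod']
    have e : ∀ a', ∑' b', G p.1 a' * K p.1 a' p.2 b' = G p.1 a' * ((F₁ p.1)⁻¹ * f₁ p) := by
      intro a'
      rw [ENNReal.tsum_mul_left]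
      by_cases hne : G p.1 a' = 0
      · simp [hne]
      · rw [(hK _ _ hne).1]
    rw [tsum_congr e, ENNReal.tsum_mul_right, hG₁, ← mul_assoc]
    by_cases h0 : F₁ p.1 = 0
    · have : f₁ p = 0 := by
        have h0' := h0
        rw [← hF₁, ENNReal.tsum_eq_zero] at h0'
        exact h0' p.2
      simp [this]
    · rw [ENNReal.mul_inv_cancel h0 (hF₁top _), one_mul]
  · rw [ENNReal.tsum_prod']
    have e : ∀ a, ∑' b, G a q.1 * K a q.1 b q.2 = G a q.1 * ((F₂ q.1)⁻¹ * f₂ q) := by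
      intro a
      rw [ENNReal.tsum_mul_left]
      by_cases hne : G a q.1 = 0
      · simp [hne]
      · rw [(hK _ _ hne).2.1]
    rw [tsum_congr e, ENNReal.tsum_mul_right, hG₂, ← mul_assoc]
    by_cases h0 : F₂ q.1 = 0
    · have : f₂ q = 0 := by
        have h0' := h0
        rw [← hF₂, ENNReal.tsum_eq_zero] at h0'
        exact h0' q.2
      simp [this]
    · rw [ENNReal.mul_inv_cancel h0 (hF₂top _), one_mul]
  · have hG := left_ne_zero_of_mul hpq
    exact ⟨hGle _ _ hG, (hK _ _ hG).2.2 _ _ (right_ne_zero_of_mul hpq)⟩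

lemma CouplesMonotonically.of_orderIso {α β : Type*} [Lattice α] [Lattice β] (e : α ≃o β)
    (hα : CouplesMonotonically α) : CouplesMonotonically β := by
  intro f₁ f₂ h₁ h₂ h
  obtain ⟨g, hg₁, hg₂, hle⟩ := hα (f₁ ∘ e) (f₂ ∘ e)
    (by rw [← h₁]; exact e.toEquiv.tsum_eq f₁) (by rw [← h₂]; exact e.toEquiv.tsum_eq f₂)
    (fun a b => by simpa using h (e a) (e b))
  refine ⟨fun x y => g (e.symm x) (e.symm y), fun x => ?_, fun y => ?_, fun x y hxy => ?_⟩
  · simpa [hg₁] using e.symm.toEquiv.tsum_eq (g (e.symm x))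
  · simpa [hg₂] using e.symm.toEquiv.tsum_eq (fun a => g a (e.symm y))
  · simpa using hle _ _ hxy

lemma couplesMonotonically_fin (n : ℕ) : CouplesMonotonically (Fin n → ℤ) := by
  induction n with
  | zero =>
    intro f₁ f₂ h₁ h₂ _
    rw [tsum_fintype, Fintype.sum_unique] at h₁ h₂
    refine ⟨fun _ _ => 1, fun a => ?_, fun b => ?_, fun a b _ => (Subsingleton.elim a b).le⟩
    · rw [tsum_fintype, Fintype.sum_unique, ← h₁]
      exact congrArg f₁ (Subsingleton.elim _ _)
    · rw [tsum_fintype, Fintype.sum_unique, ← h₂]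
      exact congrArg f₂ (Subsingleton.elim _ _)
  | succ n ih =>
    exact ((couplesMonotonically_of_linearOrder ℤ).prod ih).of_orderIso
      (Fin.consOrderIso fun _ => ℤ)

lemma couplesMonotonically_pi (ι : Type*) [Fintype ι] : CouplesMonotonically (ι → ℤ) := by
  let e := Fintype.equivFin ι
  refine (couplesMonotonically_fin (Fintype.card ι)).of_orderIso
    { toEquiv := Equiv.arrowCongr e.symm (Equiv.refl ℤ), map_rel_iff' := ?_ }
  intro a b
  simp only [Pi.le_def, Equiv.arrowCongr_apply]
  exact ⟨fun hh i => by simpa using hh (e.symm i), fun hh i => hh _⟩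

/-! ### The Holley condition for Boltzmann weights -/

lemma expNegE_antitone : Antitone expNegE := by
  intro s t hst
  induction s with
  | bot => simp [expNegE]
  | top => simp [expNegE, top_le_iff.1 hst]
  | coe s =>
    induction t with
    | bot => simp at hst
    | top => simp [expNegE]
    | coe t =>
      have : s ≤ t := by exact_mod_cast hst
      simpa [expNegE] using ENNReal.ofReal_le_ofReal (Real.exp_le_exp.2 (neg_le_neg this))

lemma expNegE_add {s t : EReal} (hs : s ≠ ⊥) (ht : t ≠ ⊥) :
    expNegE (s + t) = expNegE s * expNegE t := by
  induction s with
  | bot => simp at hs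
  | top => simp [expNegE, EReal.top_add_of_ne_bot ht]
  | coe s =>
    induction t with
    | bot => simp at ht
    | top => simp [expNegE]
    | coe t =>
      rw [← EReal.coe_add]
      simp only [expNegE, EReal.coe_ne_top, EReal.coe_ne_bot, if_false, EReal.toReal_coe]
      rw [← ENNReal.ofReal_mul (Real.exp_nonneg _), ← Real.exp_add, neg_add]

lemma expNegE_sum {κ : Type*} (s : Finset κ) (f : κ → EReal) (hf : ∀ e ∈ s, f e ≠ ⊥) :
    expNegE (∑ e ∈ s, f e) = ∏ e ∈ s, expNegE (f e) ∧ ∑ e ∈ s, f e ≠ ⊥ := by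
  classical
  induction s using Finset.induction_on with
  | empty => simp [expNegE]
  | insert a s ha ih =>
    obtain ⟨h₁, h₂⟩ := ih fun e he => hf e (Finset.mem_insert_of_mem he)
    have h₃ := hf a (Finset.mem_insert_self _ _)
    rw [Finset.sum_insert ha, Finset.prod_insert ha, expNegE_add h₃ h₂, h₁]
    exact ⟨rfl, by simp [EReal.add_eq_bot_iff, h₂, h₃]⟩

/-- For a convex potential, moving two arguments towards each other with their sum fixed does not
decrease the product of the Boltzmann factors. -/
lemma expNegE_convex_mul_le (w : ℝ → EReal) (hbot : ∀ r, w r ≠ ⊥)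
    (hconv : ∀ a b t : ℝ, 0 ≤ t → t ≤ 1 →
      w (t * a + (1 - t) * b) ≤ (t : EReal) * w a + ((1 - t : ℝ) : EReal) * w b)
    (a b c d : ℝ) (hsum : c + d = a + b) (hc₁ : min a b ≤ c) (hc₂ : c ≤ max a b) :
    expNegE (w a) * expNegE (w b) ≤ expNegE (w c) * expNegE (w d) := by
  obtain ⟨t, ht₀, ht₁, rfl⟩ : ∃ t : ℝ, 0 ≤ t ∧ t ≤ 1 ∧ t * a + (1 - t) * b = c := by
    rcases lt_trichotomy a b with hab | rfl | hab
    · rw [min_eq_left hab.le] at hc₁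
      rw [max_eq_right hab.le] at hc₂
      have hpos : 0 < b - a := sub_pos.2 hab
      refine ⟨(b - c) / (b - a), div_nonneg (by linarith) hpos.le,
        (div_le_one hpos).2 (by linarith), ?_⟩
      field_simp
      ring
    · exact ⟨0, le_rfl, zero_le_one, by
        rw [min_self] at hc₁
        rw [max_self] at hc₂
        linarith⟩
    · rw [min_eq_right hab.le] at hc₁
      rw [max_eq_left hab.le] at hc₂
      have hpos : 0 < a - b := sub_pos.2 hab
      refine ⟨(c - b) / (a - b), div_nonneg (by linarith) hpos.le,
        (div_le_one hpos).2 (by linarith), ?_⟩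
      field_simp
      ring
  obtain rfl : d = (1 - t) * a + (1 - (1 - t)) * b := by linarith
  have hc := hconv a b t ht₀ ht₁
  have hd := hconv a b (1 - t) (by linarith) (by linarith)
  rw [← expNegE_add (hbot _) (hbot _), ← expNegE_add (hbot _) (hbot _)]
  generalize w (t * a + (1 - t) * b) = u at *
  generalize w ((1 - t) * a + (1 - (1 - t)) * b) = v at *
  have ha := hbot a
  have hb := hbot b
  refine expNegE_antitone ?_
  generalize w a = x at *
  generalize w b = y at *
  induction x with
  | bot => simp at ha
  | top => simp [EReal.top_add_of_ne_bot hb]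
  | coe x =>
    induction y with
    | bot => simp at hb
    | top => simp
    | coe y =>
      refine (add_le_add hc hd).trans (le_of_eq ?_)
      norm_cast
      ring

/-- The Holley condition for the Boltzmann weights. Off `Λ` the extensions of `φ ⊓ χ` and `φ ⊔ χ` are
again the minimum and maximum of those of `φ` and `χ`, because `ψ₁ ≤ ψ₂` on `B`. -/
lemma expNegE_gibbsH_mul_le {ι : Type*} [DecidableEq ι]
    (Λ B : Finset ι)
    (𝔈 : Finset (ι × ι)) (h𝔈 : ∀ e ∈ 𝔈, e.1 ∈ Λ ∪ B ∧ e.2 ∈ Λ ∪ B ∧ e.1 ≠ e.2)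
    (W : ι × ι → ℝ → EReal)
    (hWbot : ∀ e ∈ 𝔈, ∀ r : ℝ, W e r ≠ ⊥)
    (hWconv : ∀ e ∈ 𝔈, ∀ a b t : ℝ, 0 ≤ t → t ≤ 1 →
      W e (t * a + (1 - t) * b) ≤ (t : EReal) * W e a + ((1 - t : ℝ) : EReal) * W e b)
    (ψ₁ ψ₂ : ι → ℤ) (hψ : ∀ v ∈ B, ψ₁ v ≤ ψ₂ v) (φ χ : ↥Λ → ℤ) :
    expNegE (gibbsH Λ 𝔈 W ψ₁ φ) * expNegE (gibbsH Λ 𝔈 W ψ₂ χ)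
      ≤ expNegE (gibbsH Λ 𝔈 W ψ₁ (φ ⊓ χ)) * expNegE (gibbsH Λ 𝔈 W ψ₂ (φ ⊔ χ)) := by
  have hinf : ∀ v ∈ Λ ∪ B, extBC Λ ψ₁ (φ ⊓ χ) v = min (extBC Λ ψ₁ φ v) (extBC Λ ψ₂ χ v) := by
    intro v hv
    by_cases hΛ : v ∈ Λ
    · simp [extBC, hΛ]
    · have := hψ v ((Finset.mem_union.1 hv).resolve_left hΛ)
      simp [extBC, hΛ, this]
  have hsup : ∀ v ∈ Λ ∪ B, extBC Λ ψ₂ (φ ⊔ χ) v = max (extBC Λ ψ₁ φ v) (extBC Λ ψ₂ χ v) := by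
    intro v hv
    by_cases hΛ : v ∈ Λ
    · simp [extBC, hΛ]
    · have := hψ v ((Finset.mem_union.1 hv).resolve_left hΛ)
      simp [extBC, hΛ, this]
  have hprod : ∀ ψ φ, expNegE (gibbsH Λ 𝔈 W ψ φ)
      = ∏ e ∈ 𝔈, expNegE (W e ((extBC Λ ψ φ e.2 - extBC Λ ψ φ e.1 : ℤ) : ℝ)) := fun ψ φ =>
    (expNegE_sum 𝔈 _ fun e he => hWbot e he _).1
  simp only [hprod, ← Finset.prod_mul_distrib]
  refine Finset.prod_le_prod' fun e he => ?_
  obtain ⟨he₁, he₂, -⟩ := h𝔈 e he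
  refine expNegE_convex_mul_le _ (hWbot e he) (hWconv e he) _ _ _ _ ?_ ?_ ?_
  all_goals
    rw [hinf _ he₁, hinf _ he₂]
    try rw [hsup _ he₁, hsup _ he₂]
    norm_cast
    omega

/-! ### The coupling as a measure -/

lemma tsum_measure_singleton {α : Type*} [MeasurableSpace α] [Countable α]
    [MeasurableSingletonClass α] (μ : Measure α) [IsProbabilityMeasure μ] :
    ∑' a, μ {a} = 1 := by
  have := Measure.tsum_indicator_apply_singleton μ Set.univ MeasurableSet.univ
  simpa using this

/-- In the finite-volume Gibbs setup over `E = ℤ` with two ordered boundary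
conditions `ψ₁ ≤ ψ₂` on `B` and finite nonzero partition functions, the Gibbs measure `μ₁`
is stochastically dominated by `μ₂`: there is a coupling `ρ` with marginals `μ₁, μ₂`
concentrated on `{(φ₁, φ₂) : φ₁ ≤ φ₂ pointwise}`. -/
theorem gibbs_stochastic_domination
    {ι : Type*} [DecidableEq ι]
    (Λ B : Finset ι) (hdisj : Disjoint Λ B)
    (𝔈 : Finset (ι × ι)) (h𝔈 : ∀ e ∈ 𝔈, e.1 ∈ Λ ∪ B ∧ e.2 ∈ Λ ∪ B ∧ e.1 ≠ e.2)
    (W : ι × ι → ℝ → EReal)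
    (hWbot : ∀ e ∈ 𝔈, ∀ r : ℝ, W e r ≠ ⊥)
    (hWconv : ∀ e ∈ 𝔈, ∀ a b t : ℝ, 0 ≤ t → t ≤ 1 →
      W e (t * a + (1 - t) * b) ≤ (t : EReal) * W e a + ((1 - t : ℝ) : EReal) * W e b)
    (ψ₁ ψ₂ : ι → ℤ) (hψ : ∀ v ∈ B, ψ₁ v ≤ ψ₂ v)
    (hZ₁0 : gibbsZ Λ 𝔈 W ψ₁ ≠ 0) (hZ₁top : gibbsZ Λ 𝔈 W ψ₁ ≠ ⊤)
    (hZ₂0 : gibbsZ Λ 𝔈 W ψ₂ ≠ 0) (hZ₂top : gibbsZ Λ 𝔈 W ψ₂ ≠ ⊤)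
    (μ₁ μ₂ : Measure (↥Λ → ℤ)) [IsProbabilityMeasure μ₁] [IsProbabilityMeasure μ₂]
    (hμ₁ : ∀ φ : ↥Λ → ℤ, μ₁ {φ} = (gibbsZ Λ 𝔈 W ψ₁)⁻¹ * expNegE (gibbsH Λ 𝔈 W ψ₁ φ))
    (hμ₂ : ∀ φ : ↥Λ → ℤ, μ₂ {φ} = (gibbsZ Λ 𝔈 W ψ₂)⁻¹ * expNegE (gibbsH Λ 𝔈 W ψ₂ φ)) :
    ∃ ρ : Measure ((↥Λ → ℤ) × (↥Λ → ℤ)), IsProbabilityMeasure ρ ∧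
      ρ.map Prod.fst = μ₁ ∧ ρ.map Prod.snd = μ₂ ∧
      ρ {p : (↥Λ → ℤ) × (↥Λ → ℤ) | ∀ x, p.1 x ≤ p.2 x} = 1 := by
  have hH : ∀ φ χ : ↥Λ → ℤ, μ₁ {φ} * μ₂ {χ} ≤ μ₁ {φ ⊓ χ} * μ₂ {φ ⊔ χ} := by
    intro φ χ
    simp only [hμ₁, hμ₂, mul_mul_mul_comm _ (expNegE _)]
    exact mul_le_mul_right (expNegE_gibbsH_mul_le Λ B 𝔈 h𝔈 W hWbot hWconv ψ₁ ψ₂ hψ φ χ) _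
  obtain ⟨g, hg₁, hg₂, hle⟩ := couplesMonotonically_pi ↥Λ (fun φ => μ₁ {φ}) (fun φ => μ₂ {φ})
    (tsum_measure_singleton μ₁) (tsum_measure_singleton μ₂) hH
  obtain ⟨ρ, hρ⟩ : ∃ ρ : Measure ((↥Λ → ℤ) × (↥Λ → ℤ)), ∀ s, ρ s
      = ∑' p : (↥Λ → ℤ) × (↥Λ → ℤ), g p.1 p.2 * s.indicator 1 p := by
    refine ⟨Measure.sum fun p => g p.1 p.2 • Measure.dirac p, fun s => ?_⟩
    rw [Measure.sum_apply _ s.to_countable.measurableSet]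
    simp
  have hfst : ρ.map Prod.fst = μ₁ := by
    refine Measure.ext_of_singleton fun φ => ?_
    rw [Measure.map_apply measurable_fst (measurableSet_singleton _), hρ, ENNReal.tsum_prod',
      tsum_eq_single φ fun φ' hne => by simp [Set.indicator, hne]]
    simpa using hg₁ φ
  have hsnd : ρ.map Prod.snd = μ₂ := by
    refine Measure.ext_of_singleton fun χ => ?_
    rw [Measure.map_apply measurable_snd (measurableSet_singleton _), hρ, ENNReal.tsum_prod',
      ENNReal.tsum_comm, tsum_eq_single χ fun χ' hne => by simp [Set.indicator, hne]]
    simpa using hg₂ χ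
  have huniv : ρ Set.univ = 1 := by
    have : (ρ.map Prod.fst) Set.univ = 1 := by rw [hfst]; exact measure_univ
    rwa [Measure.map_apply measurable_fst MeasurableSet.univ, Set.preimage_univ] at this
  refine ⟨ρ, ⟨huniv⟩, hfst, hsnd, ?_⟩
  rw [← huniv, hρ, hρ]
  refine tsum_congr fun p => ?_
  by_cases h0 : g p.1 p.2 = 0
  · simp [h0]
  · have : p ∈ {p : (↥Λ → ℤ) × (↥Λ → ℤ) | ∀ x, p.1 x ≤ p.2 x} := hle _ _ h0
    rw [Set.indicator_of_mem this, Set.indicator_of_mem (Set.mem_univ p)]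
end
end

section
/- Let X and Y be partially ordered measurable spaces and let μ and ν be probability measures on X and Y respectively, each satisfying the FKG inequality. Then the product measure μ ⊗ ν on X × Y, with the product partial order ((x,y) ≤ (x′,y′) iff x ≤ x′ and y ≤ y′), satisfies the FKG inequality. -/
/-!
Both kinds of sections of an increasing set in `X × Y` are increasing. Given increasing `A` and
`B`, consider `C = {(x, y, z) | (x, y) ∈ A, (x, z) ∈ B}` under `μ ⊗ ν ⊗ ν`. Its section at `(y, z)`
is the intersection of the horizontal sections of `A` at `y` and of `B` at `z`, so the FKG
inequality for `μ` and integration over `(y, z)` bound the measure of `C` below by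
`(μ ⊗ ν) A * (μ ⊗ ν) B`. Its section at `x` is the rectangle `A_x ×ˢ B_x`, of measure
`ν A_x * ν B_x ≤ ν (A_x ∩ B_x)` by the FKG inequality for `ν`, so integration over `x` bounds it
above by `(μ ⊗ ν) (A ∩ B)`. Using `C` avoids passing from increasing sets to increasing functions.
-/

open MeasureTheory

/-- A measurable set `A` in a partially ordered measurable space is increasing if
`x ∈ A` and `x ≤ y` imply `y ∈ A`. -/
def IncreasingSet {X : Type*} [Preorder X] (A : Set X) : Prop :=
  ∀ ⦃x y : X⦄, x ∈ A → x ≤ y → y ∈ A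

/-- A probability measure `κ` on a partially ordered measurable space satisfies the FKG
inequality if `κ (A ∩ B) ≥ κ A * κ B` for all increasing measurable sets `A`, `B`. -/
def SatisfiesFKG {X : Type*} [MeasurableSpace X] [Preorder X] (κ : Measure X) : Prop :=
  ∀ A B : Set X, MeasurableSet A → MeasurableSet B →
    IncreasingSet A → IncreasingSet B → κ A * κ B ≤ κ (A ∩ B)

/-- If `μ` and `ν` are probability measures on partially ordered measurable
spaces, each satisfying the FKG inequality, then the product measure `μ ⊗ ν` satisfies the FKG
inequality for the product partial order. -/
theorem satisfiesFKG_prod {X Y : Type*} [MeasurableSpace X] [MeasurableSpace Y]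
    [PartialOrder X] [PartialOrder Y]
    (μ : Measure X) (ν : Measure Y) [IsProbabilityMeasure μ] [IsProbabilityMeasure ν]
    (hμ : SatisfiesFKG μ) (hν : SatisfiesFKG ν) :
    SatisfiesFKG (μ.prod ν) := by
  intro A B hA hB hAi hBi
  let C : Set (X × Y × Y) := {p | (p.1, p.2.1) ∈ A ∧ (p.1, p.2.2) ∈ B}
  have hC : MeasurableSet C :=
    (hA.preimage (f := fun p : X × Y × Y => (p.1, p.2.1)) (by fun_prop)).inter
      (hB.preimage (f := fun p : X × Y × Y => (p.1, p.2.2)) (by fun_prop))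
  calc μ.prod ν A * μ.prod ν B
      = (∫⁻ y, μ ((fun x => (x, y)) ⁻¹' A) ∂ν) * ∫⁻ z, μ ((fun x => (x, z)) ⁻¹' B) ∂ν := by
        rw [Measure.prod_apply_symm hA, Measure.prod_apply_symm hB]
    _ = ∫⁻ p, μ ((fun x => (x, p.1)) ⁻¹' A) * μ ((fun x => (x, p.2)) ⁻¹' B) ∂ν.prod ν :=
        (lintegral_prod_mul (measurable_measure_prodMk_right hA).aemeasurable
          (measurable_measure_prodMk_right hB).aemeasurable).symm
    _ ≤ ∫⁻ p, μ ((fun x => (x, p)) ⁻¹' C) ∂ν.prod ν :=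
        lintegral_mono fun p =>
          hμ _ _ (measurable_prodMk_right hA) (measurable_prodMk_right hB)
            (fun _ _ hx hle => hAi hx ⟨hle, le_rfl⟩) (fun _ _ hx hle => hBi hx ⟨hle, le_rfl⟩)
    _ = ∫⁻ x, ν.prod ν (Prod.mk x ⁻¹' C) ∂μ := by
        rw [← Measure.prod_apply_symm hC, Measure.prod_apply hC]
    _ = ∫⁻ x, ν (Prod.mk x ⁻¹' A) * ν (Prod.mk x ⁻¹' B) ∂μ :=
        lintegral_congr fun x => Measure.prod_prod (Prod.mk x ⁻¹' A) (Prod.mk x ⁻¹' B)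
    _ ≤ ∫⁻ x, ν (Prod.mk x ⁻¹' (A ∩ B)) ∂μ :=
        lintegral_mono fun x =>
          hν _ _ (measurable_prodMk_left hA) (measurable_prodMk_left hB)
            (fun _ _ hy hle => hAi hy ⟨le_rfl, hle⟩) (fun _ _ hy hle => hBi hy ⟨le_rfl, hle⟩)
    _ = μ.prod ν (A ∩ B) := (Measure.prod_apply (hA.inter hB)).symm
end

section
/- Let d ≥ 1, let (E₁, ℰ₁), (E₂, ℰ₂), (E₃, ℰ₃) be measurable spaces, and for i ∈ {1,2,3} let μ_i be a probability measure on Ω_i = E_i^{ℤ^d} (with the product σ-algebra) that is trivial on its tail σ-algebra. Then, identifying (E₁ × E₂ × E₃)^{ℤ^d} with Ω₁ × Ω₂ × Ω₃, the product measure μ₁ ⊗ μ₂ ⊗ μ₃ is trivial on the tail σ-algebra of (E₁ × E₂ × E₃)^{ℤ^d}. -/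
/-!
It suffices to treat two factors `μ` on `E^{ℤ^d}` and `ν` on `F^{ℤ^d}`; the case of three follows
by iterating. Let `A` be a tail event of `(E × F)^{ℤ^d}`, seen as a set of pairs `(ω, η)`.
For each finite `Λ`, `A` belongs to the product of the σ-algebras generated by the coordinates of
`ω` and of `η` outside `Λ`. Hence every section `A_ω` is a tail event, so that `ν A_ω ∈ {0, 1}`,
and `ω ↦ ν A_ω` is measurable with respect to the coordinates outside `Λ`, for every `Λ`. Therefore
`B = {ω | ν A_ω = 1}` is a tail event, and by Fubini `(μ ⊗ ν) A = μ B ∈ {0, 1}`.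
-/


open MeasureTheory

noncomputable section

/-- Sites of the lattice `ℤ^d`. -/
abbrev Site (d : ℕ) := Fin d → ℤ

/-- The tail σ-algebra of the configuration space `E^{ℤ^d}`:
`⋂_{Λ finite} σ(coordinates outside Λ)`. -/
def tailSigma (d : ℕ) (E : Type*) [MeasurableSpace E] : MeasurableSpace (Site d → E) :=
  ⨅ Λ : Finset (Site d), ⨆ x : {x : Site d // x ∉ Λ},
    MeasurableSpace.comap (fun ω : Site d → E => ω x.1) inferInstance

/-- A measure on `E^{ℤ^d}` is trivial on the tail σ-algebra if every tail event has
measure `0` or `1`. -/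
def TailTrivial {d : ℕ} {E : Type*} [MeasurableSpace E] (μ : Measure (Site d → E)) : Prop :=
  ∀ A : Set (Site d → E), MeasurableSet[tailSigma d E] A → μ A = 0 ∨ μ A = 1

/-- The σ-algebra on `E^{ℤ^d}` generated by the coordinates outside `Λ`. -/
def outsideSigma (d : ℕ) (E : Type*) [MeasurableSpace E] (Λ : Finset (Site d)) :
    MeasurableSpace (Site d → E) :=
  ⨆ x : {x : Site d // x ∉ Λ},
    MeasurableSpace.comap (fun ω : Site d → E => ω x.1) inferInstance

/-- The identification of `E^{ℤ^d} × F^{ℤ^d}` with `(E × F)^{ℤ^d}`. -/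
def zipConfig (d : ℕ) (E F : Type*) (p : (Site d → E) × (Site d → F)) : Site d → E × F :=
  fun x => (p.1 x, p.2 x)

lemma measurableSet_tailSigma_iff {d : ℕ} {E : Type*} [MeasurableSpace E]
    {A : Set (Site d → E)} :
    MeasurableSet[tailSigma d E] A ↔ ∀ Λ, MeasurableSet[outsideSigma d E Λ] A :=
  MeasurableSpace.measurableSet_iInf

lemma outsideSigma_le {d : ℕ} {E : Type*} [MeasurableSpace E] (Λ : Finset (Site d)) :
    outsideSigma d E Λ ≤ MeasurableSpace.pi :=
  iSup_le fun x => (measurable_pi_apply x.1).comap_le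

lemma measurable_eval_outside {d : ℕ} {E : Type*} [MeasurableSpace E] {Λ : Finset (Site d)}
    {x : Site d} (hx : x ∉ Λ) :
    Measurable[outsideSigma d E Λ] (fun ω : Site d → E => ω x) :=
  Measurable.of_comap_le (le_iSup (fun x : {x : Site d // x ∉ Λ} =>
    MeasurableSpace.comap (fun ω : Site d → E => ω x.1) inferInstance) ⟨x, hx⟩)

lemma measurable_zipConfig {d : ℕ} {E F : Type*} [MeasurableSpace E] [MeasurableSpace F] :
    Measurable (zipConfig d E F) := by
  unfold zipConfig
  fun_prop

/-- `zipConfig` remains measurable when only the coordinates outside `Λ` are observed. -/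
lemma measurable_zipConfig_outside {d : ℕ} {E F : Type*} [MeasurableSpace E] [MeasurableSpace F]
    (Λ : Finset (Site d)) :
    @Measurable _ _ ((outsideSigma d E Λ).prod (outsideSigma d F Λ)) (outsideSigma d (E × F) Λ)
      (zipConfig d E F) := by
  refine Measurable.of_le_map (iSup_le fun x => ?_)
  rw [MeasurableSpace.comap_le_iff_le_map, MeasurableSpace.map_comp]
  let _ : MeasurableSpace (Site d → E) := outsideSigma d E Λ
  let _ : MeasurableSpace (Site d → F) := outsideSigma d F Λ
  have h1 : Measurable fun p : (Site d → E) × (Site d → F) => p.1 x.1 :=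
    (measurable_eval_outside x.2).comp measurable_fst
  have h2 : Measurable fun p : (Site d → E) × (Site d → F) => p.2 x.1 :=
    (measurable_eval_outside x.2).comp measurable_snd
  exact (h1.prodMk h2).le_map

/-- The mass of the sections of a set in a product σ-algebra `m₁ ⊗ m₂` is `m₁`-measurable, also
when `m₂` is smaller than the σ-algebra carrying the measure. -/
lemma measurable_measure_section {Ω₁ Ω₂ : Type*} (m₁ : MeasurableSpace Ω₁)
    {m m₂ : MeasurableSpace Ω₂} (hm : m₂ ≤ m) (ν : Measure[m] Ω₂) [IsProbabilityMeasure ν]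
    {A : Set (Ω₁ × Ω₂)} (hA : MeasurableSet[m₁.prod m₂] A) :
    Measurable[m₁] fun ω => ν (Prod.mk ω ⁻¹' A) := by
  have h := @measurable_measure_prodMk_left Ω₁ Ω₂ m₁ m₂ (ν.trim hm) inferInstance A hA
  convert h using 2 with ω
  exact Eq.symm <| trim_measurableSet_eq hm ((@measurable_prodMk_left Ω₁ Ω₂ m₁ m₂ ω) hA)

/-- The product of two tail-trivial probability measures is tail-trivial. -/
lemma TailTrivial.zip {d : ℕ} {E F : Type*} [MeasurableSpace E] [MeasurableSpace F]
    {μ : Measure (Site d → E)} {ν : Measure (Site d → F)}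
    [IsProbabilityMeasure μ] [IsProbabilityMeasure ν]
    (hμ : TailTrivial μ) (hν : TailTrivial ν) :
    TailTrivial ((μ.prod ν).map (zipConfig d E F)) := by
  intro A hA
  rw [measurableSet_tailSigma_iff] at hA
  have hA0 : MeasurableSet A := outsideSigma_le ∅ _ (hA ∅)
  set A' := zipConfig d E F ⁻¹' A with hA'
  have hout : ∀ Λ, MeasurableSet[(outsideSigma d E Λ).prod (outsideSigma d F Λ)] A' :=
    fun Λ => measurable_zipConfig_outside Λ (hA Λ)
  have hsec : ∀ ω, ν (Prod.mk ω ⁻¹' A') = 0 ∨ ν (Prod.mk ω ⁻¹' A') = 1 := fun ω =>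
    hν _ (measurableSet_tailSigma_iff.2 fun Λ =>
      (@measurable_prodMk_left _ _ (outsideSigma d E Λ) (outsideSigma d F Λ) ω) (hout Λ))
  set B : Set (Site d → E) := {ω | ν (Prod.mk ω ⁻¹' A') = 1} with hB
  have hBout : ∀ Λ, MeasurableSet[outsideSigma d E Λ] B := fun Λ =>
    measurable_measure_section _ (outsideSigma_le Λ) ν (hout Λ) (measurableSet_singleton 1)
  have hind : (fun ω => ν (Prod.mk ω ⁻¹' A')) = B.indicator 1 := by
    funext ω
    by_cases h : ω ∈ B
    · rw [Set.indicator_of_mem h]; exact h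
    · rw [Set.indicator_of_notMem h]; exact (hsec ω).resolve_right h
  have key : (μ.prod ν).map (zipConfig d E F) A = μ B := by
    rw [Measure.map_apply measurable_zipConfig hA0,
      Measure.prod_apply (measurable_zipConfig hA0), ← hA', hind,
      lintegral_indicator_one (outsideSigma_le ∅ _ (hBout ∅))]
  rw [key]
  exact hμ B (measurableSet_tailSigma_iff.2 hBout)

/-- If `μ₁, μ₂, μ₃` are probability measures on `Ωᵢ = Eᵢ^{ℤ^d}` that are
trivial on their tail σ-algebras, then (identifying `(E₁ × E₂ × E₃)^{ℤ^d}` with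
`Ω₁ × Ω₂ × Ω₃`) the product `μ₁ ⊗ μ₂ ⊗ μ₃` is trivial on the tail σ-algebra of
`(E₁ × E₂ × E₃)^{ℤ^d}`. -/
theorem tailTrivial_prod (d : ℕ) (hd : 1 ≤ d)
    {E₁ E₂ E₃ : Type*} [MeasurableSpace E₁] [MeasurableSpace E₂] [MeasurableSpace E₃]
    (μ₁ : Measure (Site d → E₁)) (μ₂ : Measure (Site d → E₂)) (μ₃ : Measure (Site d → E₃))
    [IsProbabilityMeasure μ₁] [IsProbabilityMeasure μ₂] [IsProbabilityMeasure μ₃]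
    (h₁ : TailTrivial μ₁) (h₂ : TailTrivial μ₂) (h₃ : TailTrivial μ₃) :
    TailTrivial ((μ₁.prod (μ₂.prod μ₃)).map
      fun ω : (Site d → E₁) × (Site d → E₂) × (Site d → E₃) =>
        fun x : Site d => (ω.1 x, ω.2.1 x, ω.2.2 x)) := by
  have : IsProbabilityMeasure ((μ₂.prod μ₃).map (zipConfig d E₂ E₃)) :=
    Measure.isProbabilityMeasure_map measurable_zipConfig.aemeasurable
  have h := h₁.zip (h₂.zip h₃)
  have hprod : μ₁.prod ((μ₂.prod μ₃).map (zipConfig d E₂ E₃)) =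
      (μ₁.prod (μ₂.prod μ₃)).map (Prod.map id (zipConfig d E₂ E₃)) := by
    rw [← Measure.map_prod_map μ₁ (μ₂.prod μ₃) measurable_id measurable_zipConfig, Measure.map_id]
  rwa [hprod, Measure.map_map measurable_zipConfig
    (measurable_id.prodMap measurable_zipConfig)] at h
end
end

section
/- Fix 0 < r < 1/2 and let X = {x ∈ ℝ² : ‖x − z‖ ≥ r for all z ∈ ℤ²}, the plane with the open disc of radius r removed around each point of ℤ², with the Euclidean metric. Then for all a, b ∈ X and every continuous path p : [0,1] → X with p(0) = a and p(1) = b, there exists a continuous path q : [0,1] → X from a to b that is path-homotopic to p within X, has finite length, and has minimal length in its homotopy class: length(q) ≤ length(q′) for every continuous path q′ from a to b that is path-homotopic to p within X. -/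
/-!
The minimizer is obtained by the direct method. The map `retr`, radial projection out of each disc,
is Lipschitz on the plane, fixes the punctured plane `X` pointwise and sends every point at distance
at least `r / 2` from the lattice into `X`. Composing a straight-line homotopy with it shows that paths in `X` with common
endpoints and uniform distance at most `r / 2` are homotopic (`exists_homotopic_retr`). The same
construction, applied to a Bernstein polynomial approximating `p`, gives a path of finite length `M`
in the class of `p` (`exists_homotopic_pathLength_ne_top`).

Every path of length at most `M` can be reparametrized to be `(M + 1)`-Lipschitz, which changes
neither its class nor its length (`exists_lipschitz_reparam`). The set of `(M + 1)`-Lipschitz paths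
in the class is closed under uniform limits, because uniformly close paths are homotopic, so it is
compact by Arzelà–Ascoli (`isCompact_lipschitzClass`). Length is lower semicontinuous, hence attains
its minimum there, and this minimum is at most `M`, so it bounds the longer paths as well.
-/

open scoped ENNReal unitInterval

noncomputable section

/-- The point of the Euclidean plane corresponding to a lattice point `z ∈ ℤ²`. -/
def latticePoint (z : Fin 2 → ℤ) : EuclideanSpace ℝ (Fin 2) :=
  (WithLp.equiv 2 (Fin 2 → ℝ)).symm fun i => (z i : ℝ)

/-- The (closed countably) punctured plane: `ℝ²` with the open disc of radius `r` removed
around each point of `ℤ²`. -/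
def puncturedPlane (r : ℝ) : Set (EuclideanSpace ℝ (Fin 2)) :=
  {x | ∀ z : Fin 2 → ℤ, r ≤ dist x (latticePoint z)}

/-- The length of a path: its total variation. -/
def pathLength {r : ℝ} {a b : puncturedPlane r} (p : Path a b) : ℝ≥0∞ :=
  eVariationOn (fun t : unitInterval => (p t : EuclideanSpace ℝ (Fin 2))) Set.univ

/-! ### The radial retraction onto the punctured plane -/

/-- The radial displacement field of one disc: for `r / 2 ≤ ‖v‖ ≤ r` the vector `v + radialPush r v` is
the radial projection of `v` to the circle of radius `r`, and `radialPush r v = 0` for `r ≤ ‖v‖`. The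
inner cutoff at `r / 2` makes the field Lipschitz on the whole plane. -/
def radialPush (r : ℝ) (v : EuclideanSpace ℝ (Fin 2)) : EuclideanSpace ℝ (Fin 2) :=
  max 0 (r / max ‖v‖ (r / 2) - 1) • v

lemma radialPush_eq_zero {r : ℝ} (hr0 : 0 < r) {v : EuclideanSpace ℝ (Fin 2)} (hv : r ≤ ‖v‖) :
    radialPush r v = 0 := by
  have h1 : r / max ‖v‖ (r / 2) - 1 ≤ 0 := by
    have : r / max ‖v‖ (r / 2) ≤ 1 := by
      rw [div_le_one (by positivity)]
      exact hv.trans (le_max_left _ _)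
    linarith
  rw [radialPush, max_eq_left h1, zero_smul]

lemma norm_add_radialPush {r : ℝ} (hr0 : 0 < r) {v : EuclideanSpace ℝ (Fin 2)} (hv : r / 2 ≤ ‖v‖)
    (hv' : ‖v‖ ≤ r) : ‖v + radialPush r v‖ = r := by
  have hpos : 0 < ‖v‖ := by linarith
  have h1 : 0 ≤ r / ‖v‖ - 1 := by
    rw [sub_nonneg, one_le_div hpos]; exact hv'
  have h2 : v + radialPush r v = (r / ‖v‖) • v := by
    rw [radialPush, max_eq_left hv, max_eq_right h1, sub_smul, one_smul]
    abel
  rw [h2, norm_smul, Real.norm_of_nonneg (by positivity), div_mul_cancel₀ _ hpos.ne']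

/-- The radial factor in `radialPush` is Lipschitz with constant `4 / r` and lies in `[0, 1]`. -/
lemma radialPush_factor_bounds {r : ℝ} (hr0 : 0 < r) (s t : ℝ) :
    |max 0 (r / max s (r / 2) - 1) - max 0 (r / max t (r / 2) - 1)| ≤ 4 / r * |s - t| ∧
      |max 0 (r / max s (r / 2) - 1)| ≤ 1 := by
  constructor
  · have hs : r / 2 ≤ max s (r / 2) := le_max_right _ _
    have ht : r / 2 ≤ max t (r / 2) := le_max_right _ _
    have hst : |max t (r / 2) - max s (r / 2)| ≤ |s - t| := by
      rw [abs_sub_comm]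
      exact abs_max_sub_max_le_abs _ _ _
    set S := max s (r / 2)
    set T := max t (r / 2)
    have hS : 0 < S := by linarith
    have hT : 0 < T := by linarith
    calc |max 0 (r / S - 1) - max 0 (r / T - 1)|
        ≤ |(r / S - 1) - (r / T - 1)| := by
          rw [max_comm 0, max_comm 0]
          exact abs_max_sub_max_le_abs _ _ _
      _ = |r / (S * T) * (T - S)| := by
          congr 1
          field_simp
          ring
      _ = r / (S * T) * |T - S| := by
          rw [abs_mul, abs_of_nonneg (by positivity)]
      _ ≤ 4 / r * |s - t| := by
          gcongr ?_ * ?_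
          rw [div_le_div_iff₀ (by positivity) hr0]
          nlinarith [mul_le_mul hs ht (by positivity) hS.le]
  · rw [abs_of_nonneg (le_max_left _ _)]
    refine max_le zero_le_one ?_
    have : r / max s (r / 2) ≤ 2 := by
      rw [div_le_iff₀ (lt_of_lt_of_le (by positivity) (le_max_right _ _))]
      linarith [le_max_right s (r / 2)]
    linarith

lemma norm_radialPush_sub_le {r : ℝ} (hr0 : 0 < r) (v w : EuclideanSpace ℝ (Fin 2)) :
    ‖radialPush r v - radialPush r w‖ ≤ 5 * ‖v - w‖ := by
  wlog hvw : ‖v‖ ≤ ‖w‖ generalizing v w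
  · rw [norm_sub_rev, norm_sub_rev v]
    exact this w v (le_of_not_ge hvw)
  rcases le_or_gt r ‖v‖ with hv | hv
  · rw [radialPush_eq_zero hr0 hv, radialPush_eq_zero hr0 (hv.trans hvw)]
    simp
  obtain ⟨h1, -⟩ := radialPush_factor_bounds hr0 ‖v‖ ‖w‖
  obtain ⟨-, h2⟩ := radialPush_factor_bounds hr0 ‖w‖ ‖w‖
  unfold radialPush
  set A := max 0 (r / max ‖v‖ (r / 2) - 1)
  set B := max 0 (r / max ‖w‖ (r / 2) - 1)
  have hn : |‖v‖ - ‖w‖| ≤ ‖v - w‖ := abs_norm_sub_norm_le v w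
  calc ‖A • v - B • w‖ = ‖(A - B) • v + B • (v - w)‖ := by
        congr 1
        rw [sub_smul, smul_sub]
        abel
    _ ≤ |A - B| * ‖v‖ + |B| * ‖v - w‖ := by
        refine (norm_add_le _ _).trans ?_
        rw [norm_smul, norm_smul, Real.norm_eq_abs, Real.norm_eq_abs]
    _ ≤ (4 / r * ‖v - w‖) * r + 1 * ‖v - w‖ := by
        gcongr
        exact h1.trans (by gcongr)
    _ = 5 * ‖v - w‖ := by
        field_simp
        ring

lemma one_le_dist_latticePoint {z w : Fin 2 → ℤ} (h : z ≠ w) :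
    1 ≤ dist (latticePoint z) (latticePoint w) := by
  obtain ⟨i, hi⟩ := Function.ne_iff.1 h
  have h1 : ‖(latticePoint z - latticePoint w) i‖ ≤ ‖latticePoint z - latticePoint w‖ :=
    PiLp.norm_apply_le _ i
  have h2 : (latticePoint z - latticePoint w) i = ((z i - w i : ℤ) : ℝ) := by
    simp [latticePoint]
  rw [dist_eq_norm]
  refine le_trans ?_ h1
  rw [h2, Real.norm_eq_abs, ← Int.cast_abs]
  exact_mod_cast Int.one_le_abs (sub_ne_zero.2 hi)

open Classical in
/-- The retraction onto the punctured plane: inside the disc around a lattice point it adds the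
displacement `radialPush` of that disc, elsewhere it is the identity. It genuinely lands in the punctured
plane only on points at distance at least `r / 2` from the lattice. -/
def retr (r : ℝ) (x : EuclideanSpace ℝ (Fin 2)) : EuclideanSpace ℝ (Fin 2) :=
  if h : ∃ z, dist x (latticePoint z) < r then x + radialPush r (x - latticePoint h.choose) else x

lemma retr_of_mem {r : ℝ} {x : EuclideanSpace ℝ (Fin 2)} (hx : x ∈ puncturedPlane r) :
    retr r x = x := by
  rw [retr, dif_neg]
  rintro ⟨z, hz⟩
  exact absurd (hx z) (not_le.2 hz)

/-- At every point at most one disc contributes to the displacement. -/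
lemma exists_retr_eq {r : ℝ} (hr0 : 0 < r) (hr : r < 1 / 2) (x : EuclideanSpace ℝ (Fin 2)) :
    ∃ z, retr r x = x + radialPush r (x - latticePoint z) ∧
      ∀ w, w ≠ z → r ≤ dist x (latticePoint w) := by
  by_cases h : ∃ z, dist x (latticePoint z) < r
  · refine ⟨h.choose, by rw [retr, dif_pos h], fun w hw => ?_⟩
    have h1 := h.choose_spec
    have h2 := one_le_dist_latticePoint hw
    have h3 := dist_triangle_left (latticePoint w) (latticePoint h.choose) x
    linarith
  · push Not at h
    refine ⟨0, ?_, fun w _ => h w⟩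
    rw [retr_of_mem h, radialPush_eq_zero hr0 (by rw [← dist_eq_norm]; exact h 0), add_zero]

lemma lipschitzWith_retr {r : ℝ} (hr0 : 0 < r) (hr : r < 1 / 2) : LipschitzWith 11 (retr r) := by
  refine LipschitzWith.of_dist_le_mul fun x y => ?_
  obtain ⟨z, hz, hz'⟩ := exists_retr_eq hr0 hr x
  obtain ⟨w, hw, hw'⟩ := exists_retr_eq hr0 hr y
  have key : ∀ u, ‖radialPush r (x - latticePoint u) - radialPush r (y - latticePoint u)‖ ≤ 5 * ‖x - y‖ := by
    intro u
    have := norm_radialPush_sub_le hr0 (x - latticePoint u) (y - latticePoint u)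
    rwa [sub_sub_sub_cancel_right] at this
  have hpos := norm_nonneg (x - y)
  rw [dist_eq_norm, dist_eq_norm, hz, hw]
  push_cast
  by_cases hzw : z = w
  · subst hzw
    calc _ = ‖(x - y) + (radialPush r (x - latticePoint z) - radialPush r (y - latticePoint z))‖ := by
          congr 1; abel
      _ ≤ ‖x - y‖ + 5 * ‖x - y‖ := (norm_add_le _ _).trans (by gcongr; exact key z)
      _ ≤ 11 * ‖x - y‖ := by linarith
  · have hx0 : radialPush r (x - latticePoint w) = 0 := by
      refine radialPush_eq_zero hr0 ?_
      rw [← dist_eq_norm]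
      exact hz' w (Ne.symm hzw)
    have hy0 : radialPush r (y - latticePoint z) = 0 := by
      refine radialPush_eq_zero hr0 ?_
      rw [← dist_eq_norm]
      exact hw' z hzw
    calc _ = ‖(x - y) + ((radialPush r (x - latticePoint z) - radialPush r (y - latticePoint z)) +
            (radialPush r (x - latticePoint w) - radialPush r (y - latticePoint w)))‖ := by
          rw [hx0, hy0]; congr 1; abel
      _ ≤ ‖x - y‖ + (5 * ‖x - y‖ + 5 * ‖x - y‖) := by
          refine (norm_add_le _ _).trans ?_
          gcongr
          exact (norm_add_le _ _).trans (add_le_add (key z) (key w))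
      _ = 11 * ‖x - y‖ := by ring

lemma retr_mem {r : ℝ} (hr0 : 0 < r) (hr : r < 1 / 2) {x : EuclideanSpace ℝ (Fin 2)}
    (hx : ∀ z, r / 2 ≤ dist x (latticePoint z)) : retr r x ∈ puncturedPlane r := by
  by_cases h : ∃ z, dist x (latticePoint z) < r
  · have h1 := h.choose_spec
    have h2 : dist (retr r x) (latticePoint h.choose) = r := by
      have := norm_add_radialPush hr0 (v := x - latticePoint h.choose)
        (by rw [← dist_eq_norm]; exact hx _) (by rw [← dist_eq_norm]; exact h1.le)
      rw [retr, dif_pos h, dist_eq_norm, add_sub_right_comm, this]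
    intro w
    by_cases hw : w = h.choose
    · rw [hw, h2]
    · have h3 := one_le_dist_latticePoint hw
      have h4 := dist_triangle_left (latticePoint w) (latticePoint h.choose) (retr r x)
      linarith
  · push Not at h
    rwa [retr_of_mem h]

/-! ### Uniformly close paths are homotopic -/

/-- A curve within `r / 2` of a path `p`, with the same endpoints, retracts to a path homotopic
to `p`: the straight-line homotopy stays at distance at least `r / 2` from the lattice, so it can be
composed with `retr`. -/
lemma exists_homotopic_retr {r : ℝ} (hr0 : 0 < r) (hr : r < 1 / 2) {a b : puncturedPlane r}
    (p : Path a b) (f : C(I, EuclideanSpace ℝ (Fin 2))) (hf0 : f 0 = a) (hf1 : f 1 = b)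
    (hpf : ∀ t, dist (f t) (p t) ≤ r / 2) :
    ∃ q : Path a b, Path.Homotopic p q ∧ ∀ t, (q t : EuclideanSpace ℝ (Fin 2)) = retr r (f t) := by
  have hcont := (lipschitzWith_retr hr0 hr).continuous
  have hmem : ∀ s t : I, retr r (AffineMap.lineMap (p t : EuclideanSpace ℝ (Fin 2)) (f t) (s : ℝ))
      ∈ puncturedPlane r := by
    intro s t
    refine retr_mem hr0 hr fun z => ?_
    have h1 := (p t).2 z
    have h2 : dist (AffineMap.lineMap (p t : EuclideanSpace ℝ (Fin 2)) (f t) (s : ℝ)) (p t : _)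
        ≤ r / 2 := by
      rw [dist_lineMap_left, Real.norm_of_nonneg s.2.1, dist_comm]
      calc (s : ℝ) * dist (f t) (p t) ≤ 1 * dist (f t) (p t) := by
            gcongr
            exact s.2.2
        _ ≤ r / 2 := by rw [one_mul]; exact hpf t
    have h3 := dist_triangle_left (p t : EuclideanSpace ℝ (Fin 2)) (latticePoint z)
      (AffineMap.lineMap (p t : EuclideanSpace ℝ (Fin 2)) (f t) (s : ℝ))
    linarith
  have hmem1 : ∀ t, retr r (f t) ∈ puncturedPlane r := fun t => by simpa using hmem 1 t
  refine ⟨⟨⟨fun t => ⟨retr r (f t), hmem1 t⟩, by fun_prop⟩, ?_, ?_⟩, ⟨⟨⟨⟨fun x =>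
    ⟨retr r (AffineMap.lineMap (p x.2 : EuclideanSpace ℝ (Fin 2)) (f x.2) (x.1 : ℝ)),
      hmem x.1 x.2⟩, ?_⟩, ?_, ?_⟩, ?_⟩⟩, fun t => rfl⟩
  · exact Subtype.ext (by simp [hf0, retr_of_mem a.2])
  · exact Subtype.ext (by simp [hf1, retr_of_mem b.2])
  · refine Continuous.subtype_mk (hcont.comp ?_) _
    simp only [AffineMap.lineMap_apply_module]
    fun_prop
  · intro t
    exact Subtype.ext (by simp [retr_of_mem (p t).2])
  · intro t
    exact Subtype.ext (by simp)
  · rintro s t (rfl | rfl)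
    · exact Subtype.ext (by simp [hf0, retr_of_mem a.2])
    · exact Subtype.ext (by simp [hf1, retr_of_mem b.2])

/-- Bernstein approximation of `p`, followed by the retraction. -/
lemma exists_homotopic_pathLength_ne_top {r : ℝ} (hr0 : 0 < r) (hr : r < 1 / 2)
    {a b : puncturedPlane r} (p : Path a b) :
    ∃ q : Path a b, Path.Homotopic p q ∧ pathLength q ≠ ⊤ := by
  let f : C(I, EuclideanSpace ℝ (Fin 2)) := ⟨fun t => (p t : EuclideanSpace ℝ (Fin 2)), by fun_prop⟩
  obtain ⟨n, hn, hn0⟩ := (((Metric.tendsto_nhds.1 (bernsteinApproximation_uniform f)) (r / 2)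
    (by positivity)).and (Filter.eventually_ne_atTop 0)).exists
  obtain ⟨q, hpq, hq⟩ := exists_homotopic_retr hr0 hr p (bernsteinApproximation n f)
    (by simp [f]) (by simp [hn0, f])
    (fun t => (ContinuousMap.dist_apply_le_dist t).trans hn.le)
  refine ⟨q, hpq, ?_⟩
  -- the Bernstein approximation as a smooth function on the whole real line
  let g : ℝ → EuclideanSpace ℝ (Fin 2) := fun x =>
    ∑ k : Fin (n + 1), ((n.choose k : ℝ) * x ^ (k : ℕ) * (1 - x) ^ (n - k)) •
      f (bernstein.z k)
  have hg : ContDiff ℝ 1 g := by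
    unfold g
    fun_prop
  obtain ⟨K, hK⟩ := hg.contDiffOn.exists_lipschitzOnWith one_ne_zero (convex_Icc (0 : ℝ) 1)
    isCompact_Icc
  have hfun : (fun t : I => (q t : EuclideanSpace ℝ (Fin 2))) =
      (retr r ∘ g) ∘ (Subtype.val : I → ℝ) := by
    funext t
    simp [hq, g, bernsteinApproximation.apply, bernstein_apply]
  have hL : LipschitzOnWith (11 * K) (retr r ∘ g) (Set.Icc 0 1) :=
    (lipschitzWith_retr hr0 hr).comp_lipschitzOnWith hK
  have hmono : Monotone (Subtype.val : I → ℝ) := fun x y h => h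
  have hbv : BoundedVariationOn (Subtype.val : I → ℝ) Set.univ := by
    have hI : (Set.univ : Set I) ∩ Set.Icc 0 1 = Set.univ := by
      ext x
      simp [unitInterval.le_one']
    have h := (hmono.monotoneOn Set.univ).eVariationOn_eq (Set.mem_univ (0 : I)) (Set.mem_univ 1)
    rw [hI] at h
    rw [BoundedVariationOn, h]
    exact ENNReal.ofReal_ne_top
  have := hL.comp_boundedVariationOn (g := (Subtype.val : I → ℝ)) (s := Set.univ)
    (fun x _ => x.2) hbv
  rw [pathLength, hfun]
  exact this

/-! ### Lipschitz reparametrization -/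

/-- The variation of a continuous function from a base point depends continuously on the endpoint. -/
lemma continuous_variationOnFromTo {f : I → EuclideanSpace ℝ (Fin 2)} (hf : Continuous f)
    (hbv : BoundedVariationOn f Set.univ) :
    Continuous (variationOnFromTo f Set.univ 0) := by
  refine continuous_iff_continuousAt.2 fun x => ?_
  rw [continuousAt_iff_continuous_left'_right']
  have hx : Filter.Tendsto f (nhds x) (nhds (f x)) := hf.continuousAt
  constructor
  · have := variationOnFromTo.tendsto_left (a := 0) (Set.mem_univ _) (Set.mem_univ x)
      hbv.locallyBoundedVariationOn (hx.mono_left nhdsWithin_le_nhds)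
    simpa [ContinuousWithinAt] using this
  · have := variationOnFromTo.tendsto_right (a := 0) (Set.mem_univ _) (Set.mem_univ x)
      hbv.locallyBoundedVariationOn (hx.mono_left nhdsWithin_le_nhds)
    simpa [ContinuousWithinAt] using this

/-- A path of length at most `M` is, up to reparametrization, `(M + 1)`-Lipschitz: it is
reparametrized by the inverse of `t ↦ t + V t`, rescaled to the unit interval, where `V t` is its
length up to time `t`. The summand `t` makes this strictly increasing where the path is constant. -/
lemma exists_lipschitz_reparam {r : ℝ} {a b : puncturedPlane r} (q : Path a b) {M : NNReal}
    (hq : pathLength q ≤ M) :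
    ∃ q' : Path a b, Path.Homotopic q q' ∧ pathLength q' ≤ pathLength q ∧
      LipschitzWith (M + 1) (fun t => (q' t : EuclideanSpace ℝ (Fin 2))) := by
  set f : I → EuclideanSpace ℝ (Fin 2) := fun t => (q t : EuclideanSpace ℝ (Fin 2)) with hfdef
  have hf : Continuous f := by fun_prop
  have hbv : BoundedVariationOn f Set.univ := ne_top_of_le_ne_top ENNReal.coe_ne_top hq
  have hlbv := hbv.locallyBoundedVariationOn
  set V := variationOnFromTo f Set.univ 0 with hV
  have hVc : Continuous V := continuous_variationOnFromTo hf hbv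
  have hVm : Monotone V := fun x y h =>
    variationOnFromTo.monotoneOn hlbv (Set.mem_univ 0) (Set.mem_univ x) (Set.mem_univ y) h
  have hV0 : V 0 = 0 := variationOnFromTo.self _ _ _
  have hV1 : V 1 ≤ M := by
    rw [hV, variationOnFromTo.eq_of_le _ _ zero_le_one]
    refine ENNReal.toReal_le_coe_of_le_coe ((eVariationOn.mono f ?_).trans hq)
    exact Set.subset_univ _
  have hdist : ∀ x y, x ≤ y → dist (f x) (f y) ≤ V y - V x := by
    intro x y h
    have hxy : V y - V x = variationOnFromTo f Set.univ x y := by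
      have := variationOnFromTo.add hlbv (Set.mem_univ (0 : I)) (Set.mem_univ x) (Set.mem_univ y)
      simp only [hV]
      linarith
    rw [hxy, variationOnFromTo.eq_of_le _ _ h, dist_edist]
    refine ENNReal.toReal_mono (hlbv x y (Set.mem_univ _) (Set.mem_univ _)) ?_
    exact eVariationOn.edist_le f (by simp [h]) (by simp [h])
  have hC : 0 < 1 + V 1 := by
    have := hVm (zero_le_one (α := I))
    linarith
  let s : I → I := fun t => ⟨((t : ℝ) + V t) / (1 + V 1), by
    have h0 : 0 ≤ V t := hV0 ▸ hVm t.2.1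
    have h1 : V t ≤ V 1 := hVm t.2.2
    have := t.2.1
    have := t.2.2
    constructor
    · positivity
    · rw [div_le_one hC]
      linarith⟩
  have hs : ∀ t : I, ((t : ℝ) + V t) = (1 + V 1) * s t := by
    intro t
    simp only [s]
    field_simp
  have hsm : StrictMono s := by
    intro x y h
    refine Subtype.mk_lt_mk.2 ?_
    have h1 : (x : ℝ) < y := h
    have h2 := hVm h.le
    exact div_lt_div_of_pos_right (add_lt_add_of_lt_of_le h1 h2) hC
  have hs0 : s 0 = 0 := Subtype.ext (by simp [s, hV0])
  have hs1 : s 1 = 1 := Subtype.ext (by simp [s, hC.ne'])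
  have hsc : Continuous s := by
    refine Continuous.subtype_mk ?_ _
    fun_prop
  have hsurj : Function.Surjective s := by
    intro y
    have := intermediate_value_univ (0 : I) 1 hsc
    rw [hs0, hs1] at this
    exact this ⟨y.2.1, y.2.2⟩
  let e : I ≃o I := hsm.orderIsoOfSurjective s hsurj
  have he : ∀ t, s (e.symm t) = t := fun t => e.apply_symm_apply t
  have he0 : e.symm 0 = 0 := hsm.injective (by rw [he, hs0])
  have he1 : e.symm 1 = 1 := hsm.injective (by rw [he, hs1])
  refine ⟨q.reparam e.symm e.symm.continuous he0 he1, ⟨Path.Homotopy.reparam _ _ _ _ _⟩, ?_, ?_⟩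
  · exact eVariationOn.comp_le_of_monotoneOn f e.symm (e.symm.monotone.monotoneOn _)
      (fun _ _ => Set.mem_univ _)
  · have key : ∀ u v : I, u ≤ v → dist (f (e.symm u)) (f (e.symm v)) ≤ (M + 1) * dist u v := by
      intro u v h
      have h1 : e.symm u ≤ e.symm v := e.symm.monotone h
      have h2 := hs (e.symm u)
      have h3 := hs (e.symm v)
      rw [he] at h2 h3
      have h1' : ((e.symm u : I) : ℝ) ≤ (e.symm v : I) := h1
      have h' : (u : ℝ) ≤ v := h
      have h4 : dist u v = v - u := by
        rw [Subtype.dist_eq, dist_comm, Real.dist_eq, abs_of_nonneg (sub_nonneg.2 h')]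
      calc _ ≤ V (e.symm v) - V (e.symm u) := hdist _ _ h1
        _ ≤ (1 + V 1) * (v - u) := by linarith
        _ ≤ (M + 1) * dist u v := by
          rw [h4]
          refine mul_le_mul_of_nonneg_right ?_ (sub_nonneg.2 h')
          linarith
    refine LipschitzWith.of_dist_le_mul fun u v => ?_
    push_cast
    rcases le_total u v with h | h
    · exact key u v h
    · rw [dist_comm, dist_comm u]
      exact key v u h

/-! ### Existence of a minimizer -/

/-- The `C`-Lipschitz paths in the homotopy class of `p`, as a set of bounded continuous functions
into the plane. -/
def lipschitzClass {r : ℝ} {a b : puncturedPlane r} (p : Path a b) (C : NNReal) :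
    Set (BoundedContinuousFunction I (EuclideanSpace ℝ (Fin 2))) :=
  {f | LipschitzWith C f ∧ ∃ q : Path a b, Path.Homotopic p q ∧
    ∀ t, (q t : EuclideanSpace ℝ (Fin 2)) = f t}

lemma isClosed_puncturedPlane (r : ℝ) : IsClosed (puncturedPlane r) := by
  have : puncturedPlane r = ⋂ z, {x | r ≤ dist x (latticePoint z)} := by
    ext x
    simp [puncturedPlane]
  rw [this]
  exact isClosed_iInter fun z => isClosed_le continuous_const (by fun_prop)

/-- Being homotopic to `p` is a closed condition because uniformly close paths are homotopic. -/
lemma isClosed_lipschitzClass {r : ℝ} (hr0 : 0 < r) (hr : r < 1 / 2) {a b : puncturedPlane r}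
    (p : Path a b) (C : NNReal) : IsClosed (lipschitzClass p C) := by
  refine isClosed_of_closure_subset fun f hf => ?_
  have hev : ∀ t : I, Continuous
      fun g : BoundedContinuousFunction I (EuclideanSpace ℝ (Fin 2)) => g t :=
    fun t => continuous_eval_const t
  have hmem : ∀ (t : I) (S : Set (EuclideanSpace ℝ (Fin 2))), IsClosed S →
      (∀ g ∈ lipschitzClass p C, g t ∈ S) → f t ∈ S := fun t S hS h =>
    closure_minimal (s := lipschitzClass p C) h (hS.preimage (hev t)) hf
  have hfX : ∀ t, f t ∈ puncturedPlane r := fun t =>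
    hmem t _ (isClosed_puncturedPlane r) fun g ⟨_, q, _, hq⟩ => hq t ▸ (q t).2
  have hf0 : f 0 = a := hmem 0 {(a : EuclideanSpace ℝ (Fin 2))} isClosed_singleton
    fun g ⟨_, q, _, hq⟩ => by simp [← hq]
  have hf1 : f 1 = b := hmem 1 {(b : EuclideanSpace ℝ (Fin 2))} isClosed_singleton
    fun g ⟨_, q, _, hq⟩ => by simp [← hq]
  have hfL : LipschitzWith C f := by
    refine LipschitzWith.of_dist_le_mul fun x y => ?_
    exact closure_minimal (s := lipschitzClass p C) (fun g hg => hg.1.dist_le_mul x y)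
      (isClosed_le ((hev x).dist (hev y)) continuous_const) hf
  obtain ⟨g, ⟨-, q, hpq, hq⟩, hfg⟩ := Metric.mem_closure_iff.1 hf (r / 2) (by positivity)
  obtain ⟨q', hqq', hq'⟩ := exists_homotopic_retr hr0 hr q f.toContinuousMap hf0 hf1 fun t => by
    rw [hq t]
    exact (BoundedContinuousFunction.dist_coe_le_dist t).trans hfg.le
  refine ⟨hfL, q', hpq.trans hqq', fun t => ?_⟩
  rw [hq' t]
  exact retr_of_mem (hfX t)

lemma isCompact_lipschitzClass {r : ℝ} (hr0 : 0 < r) (hr : r < 1 / 2) {a b : puncturedPlane r}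
    (p : Path a b) (C : NNReal) : IsCompact (lipschitzClass p C) := by
  refine BoundedContinuousFunction.arzela_ascoli₂
    (Metric.closedBall (a : EuclideanSpace ℝ (Fin 2)) C) (isCompact_closedBall _ _) _
    (isClosed_lipschitzClass hr0 hr p C) ?_ ?_
  · rintro f t ⟨hf, q, -, hq⟩
    have h0 : f 0 = a := by simp [← hq]
    have h1 := hf.dist_le_mul t 0
    have h2 : dist t 0 ≤ 1 := by
      rw [Subtype.dist_eq, Real.dist_eq]
      simpa using abs_le.2 ⟨by linarith [t.2.1], t.2.2⟩
    rw [h0] at h1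
    rw [Metric.mem_closedBall]
    exact h1.trans (mul_le_of_le_one_right C.2 h2)
  · exact (LipschitzWith.uniformEquicontinuous _ C fun f => f.2.1).equicontinuous

/-- Fix `0 < r < 1/2` and let `X` be the plane with the open disc of
radius `r` removed around each lattice point.  Every homotopy class of paths in `X` between
given endpoints contains a path of finite length that has minimal length in the class. -/
theorem exists_minimal_length_path_in_class (r : ℝ) (hr0 : 0 < r) (hr : r < 1 / 2)
    (a b : puncturedPlane r) (p : Path a b) :
    ∃ q : Path a b, Path.Homotopic p q ∧ pathLength q ≠ ⊤ ∧
      ∀ q' : Path a b, Path.Homotopic p q' → pathLength q ≤ pathLength q' := by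
  obtain ⟨q₀, hpq₀, hq₀⟩ := exists_homotopic_pathLength_ne_top hr0 hr p
  obtain ⟨M, hM⟩ : ∃ M : NNReal, (M : ℝ≥0∞) = pathLength q₀ := WithTop.ne_top_iff_exists.1 hq₀
  -- every path of length at most `M` in the class is represented in the compact set
  have hrep : ∀ q : Path a b, Path.Homotopic p q → pathLength q ≤ M →
      ∃ f ∈ lipschitzClass p (M + 1), eVariationOn f Set.univ ≤ pathLength q := by
    intro q hpq hqM
    obtain ⟨q', hqq', hle, hL⟩ := exists_lipschitz_reparam q hqM
    exact ⟨BoundedContinuousFunction.mkOfCompact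
      ⟨fun t => (q' t : EuclideanSpace ℝ (Fin 2)), by fun_prop⟩,
      ⟨hL, q', hpq.trans hqq', fun t => rfl⟩, hle⟩
  have hlsc : LowerSemicontinuous
      fun f : BoundedContinuousFunction I (EuclideanSpace ℝ (Fin 2)) =>
        eVariationOn f Set.univ := fun f v hv =>
    eVariationOn.lowerSemicontinuous_aux (F := fun g : BoundedContinuousFunction I _ => ⇑g)
      (fun t _ => (continuous_eval_const t).tendsto f) hv
  obtain ⟨f₀, hf₀, hf₀q₀⟩ := hrep q₀ hpq₀ hM.ge
  obtain ⟨f, ⟨-, q, hpq, hq⟩, hmin⟩ := (hlsc.lowerSemicontinuousOn _).exists_isMinOn ⟨f₀, hf₀⟩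
    (isCompact_lipschitzClass hr0 hr p (M + 1))
  have hqf : pathLength q = eVariationOn f Set.univ := by
    rw [pathLength]
    congr 1
    exact funext hq
  have hqM : pathLength q ≤ M := by
    rw [hqf, hM]
    exact (hmin hf₀).trans hf₀q₀
  refine ⟨q, hpq, ne_top_of_le_ne_top ENNReal.coe_ne_top hqM, fun q' hpq' => ?_⟩
  rcases le_total (pathLength q') M with h | h
  · obtain ⟨f', hf', hle⟩ := hrep q' hpq' h
    rw [hqf]
    exact (hmin hf').trans hle
  · exact hqM.trans h
end
end

section
/- If V : ℝ → [0, ∞) is convex and η < a are real numbers with V(a) ≥ V(η) + 1, then ∫_η^∞ e^{−V(ζ)} dζ ≤ 2(a − η). -/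
/-!
Put `L = a - η`. On `(η, a]` the integrand is at most `1`, since `V ≥ 0`, which contributes at
most `L`. For `ζ > a`, the slope of the convex function `V` over `[η, ζ]` is at least its slope
over `[η, a]`, which is at least `1 / L`; hence `V ζ ≥ (ζ - η) / L`, and the integral of
`exp (-(ζ - η) / L)` over `(a, ∞)` is `L * exp (-1) ≤ L`.
-/

open MeasureTheory

/-- If `V : ℝ → ℝ` is convex and nonnegative, and `η < a` are real numbers
with `V a ≥ V η + 1`, then `∫_η^∞ e^{-V ζ} dζ ≤ 2 (a - η)`. -/
theorem lintegral_exp_neg_convex_tail_le (V : ℝ → ℝ) (hV : ConvexOn ℝ Set.univ V)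
    (hV0 : ∀ x, 0 ≤ V x) (η a : ℝ) (hηa : η < a) (h : V η + 1 ≤ V a) :
    ∫⁻ ζ in Set.Ioi η, ENNReal.ofReal (Real.exp (-V ζ)) ≤ ENNReal.ofReal (2 * (a - η)) := by
  have hL : 0 < a - η := sub_pos.2 hηa
  have hneg : -(a - η)⁻¹ < 0 := neg_lt_zero.2 (inv_pos.2 hL)
  have hnear : ∫⁻ ζ in Set.Ioc η a, ENNReal.ofReal (Real.exp (-V ζ)) ≤
      ENNReal.ofReal (a - η) := by
    calc ∫⁻ ζ in Set.Ioc η a, ENNReal.ofReal (Real.exp (-V ζ))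
        ≤ ∫⁻ _ in Set.Ioc η a, 1 := by
          refine lintegral_mono fun ζ => ?_
          rw [ENNReal.ofReal_le_one, Real.exp_le_one_iff]
          linarith [hV0 ζ]
      _ = ENNReal.ofReal (a - η) := by simp
  have hgrowth : ∀ ζ ∈ Set.Ioi a, (a - η)⁻¹ * (ζ - η) ≤ V ζ := by
    intro ζ hζ
    have hζ' : a < ζ := hζ
    have hs := hV.secant_mono (Set.mem_univ η) (Set.mem_univ a) (Set.mem_univ ζ)
      hηa.ne' (hηa.trans hζ').ne' hζ'.le
    have h1 : (a - η)⁻¹ ≤ (V a - V η) / (a - η) := by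
      rw [inv_eq_one_div]
      gcongr
      linarith
    have h2 := (le_div_iff₀ (by linarith : 0 < ζ - η)).1 (h1.trans hs)
    linarith [hV0 η]
  have hint : IntegrableOn (fun ζ => Real.exp ((a - η)⁻¹ * η) * Real.exp (-(a - η)⁻¹ * ζ))
      (Set.Ioi a) := (integrableOn_exp_mul_Ioi hneg a).const_mul _
  have hfar : ∫⁻ ζ in Set.Ioi a, ENNReal.ofReal (Real.exp (-V ζ)) ≤
      ENNReal.ofReal (a - η) := by
    calc ∫⁻ ζ in Set.Ioi a, ENNReal.ofReal (Real.exp (-V ζ))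
        ≤ ∫⁻ ζ in Set.Ioi a, ENNReal.ofReal
            (Real.exp ((a - η)⁻¹ * η) * Real.exp (-(a - η)⁻¹ * ζ)) := by
          refine setLIntegral_mono' measurableSet_Ioi fun ζ hζ => ?_
          rw [← Real.exp_add]
          gcongr
          linarith [hgrowth ζ hζ]
      _ = ENNReal.ofReal (∫ ζ in Set.Ioi a,
            Real.exp ((a - η)⁻¹ * η) * Real.exp (-(a - η)⁻¹ * ζ)) :=
          (ofReal_integral_eq_lintegral_ofReal hint (ae_of_all _ fun ζ => by positivity)).symm
      _ = ENNReal.ofReal (Real.exp (-1) * (a - η)) := by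
          rw [integral_const_mul, integral_exp_mul_Ioi hneg, neg_div_neg_eq, div_inv_eq_mul,
            ← mul_assoc, ← Real.exp_add]
          congr 3
          field_simp
          ring
      _ ≤ ENNReal.ofReal (a - η) := by
          refine ENNReal.ofReal_le_ofReal (mul_le_of_le_one_left hL.le ?_)
          rw [Real.exp_le_one_iff]
          norm_num
  rw [← Set.Ioc_union_Ioi_eq_Ioi hηa.le, two_mul, ENNReal.ofReal_add hL.le hL.le]
  exact (lintegral_union_le _ _ _).trans (add_le_add hnear hfar)
end
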